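/- arXiv:math/0407018 — 4 statements merged into one kernel-verified Lean document; each statement's English description precedes it below -/
import Mathlib

section
/- Fix an integer m ≥ 3 and a ∈ ℂ^{m−1}. Then the set of eigenvalues of H(m,a) is infinite, and it is a discrete subset of ℂ: it has no accumulation point in ℂ. -/
open Complex Real Filter Set MeasureTheory Asymptotics

/-- The polynomial `P(z) = a₁ z^{m-1} + a₂ z^{m-2} + ⋯ + a_{m-1} z`. -/
noncomputable def Ppoly (m : ℕ) (a : ℕ → ℂ) (z : ℂ) : ℂ :=
  ∑ j ∈ Finset.Icc 1 (m - 1), a j * z ^ (m - j)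

/-- `u` is an eigenfunction of `H(m,a)` associated with the eigenvalue `lam`:
`u` is a nonconstant entire solution of `-u'' - ((iz)^m + P(iz)) u = lam u` decaying
along the rays `arg z = -π/2 ± 2π/(m+2)`. -/
def IsEigenfunction (m : ℕ) (a : ℕ → ℂ) (lam : ℂ) (u : ℂ → ℂ) : Prop :=
  Differentiable ℂ u ∧
  (¬ ∃ c : ℂ, ∀ z : ℂ, u z = c) ∧
  (∀ z : ℂ, -(deriv (deriv u) z)
      - ((Complex.I * z) ^ m + Ppoly m a (Complex.I * z)) * u z = lam * u z) ∧
  Filter.Tendsto (fun r : ℝ =>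
      u ((r : ℂ) * Complex.exp (((-(Real.pi / 2) + 2 * Real.pi / ((m : ℝ) + 2) : ℝ) : ℂ)
        * Complex.I))) Filter.atTop (nhds 0) ∧
  Filter.Tendsto (fun r : ℝ =>
      u ((r : ℂ) * Complex.exp (((-(Real.pi / 2) - 2 * Real.pi / ((m : ℝ) + 2) : ℝ) : ℂ)
        * Complex.I))) Filter.atTop (nhds 0)

/-- `lam` is an eigenvalue of `H(m,a)`. -/
def IsEigenvalue (m : ℕ) (a : ℕ → ℂ) (lam : ℂ) : Prop :=
  ∃ u : ℂ → ℂ, IsEigenfunction m a lam u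



/-- Power series coefficients of the solution of `v'' = (∑ q_i w^i) v`. -/
noncomputable def psCoeff (q : ℕ → ℂ) (v0 v1 : ℂ) : ℕ → ℂ
  | 0 => v0
  | 1 => v1
  | (n+2) => (∑ i : Fin (n+1), q i * psCoeff q v0 v1 (n - i)) / (((n:ℂ)+1) * ((n:ℂ)+2))
decreasing_by omega

noncomputable def psMaj (q : ℕ → ℝ) (v0 v1 : ℝ) : ℕ → ℝ
  | 0 => v0
  | 1 => v1
  | (n+2) => (∑ i : Fin (n+1), q i * psMaj q v0 v1 (n - i)) / (((n:ℝ)+1) * ((n:ℝ)+2))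
decreasing_by omega

lemma psCoeff_le (q : ℕ → ℂ) (Q : ℕ → ℝ) (v0 v1 : ℂ) (hq : ∀ i, ‖q i‖ ≤ Q i) :
    ∀ n, ‖psCoeff q v0 v1 n‖ ≤ psMaj Q ‖v0‖ ‖v1‖ n := by
  intro n
  induction n using Nat.strong_induction_on with
  | _ n ih =>
    match n with
    | 0 => simp [psCoeff, psMaj]
    | 1 => simp [psCoeff, psMaj]
    | (n+2) =>
      rw [psCoeff, psMaj, norm_div, norm_mul]
      have e1 : ‖(n:ℂ)+1‖ = (n:ℝ)+1 := by
        have : ((n:ℂ)+1) = (((n:ℝ)+1 : ℝ) : ℂ) := by push_cast; rfl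
        rw [this, Complex.norm_real, Real.norm_of_nonneg (by positivity)]
      have e2 : ‖(n:ℂ)+2‖ = (n:ℝ)+2 := by
        have : ((n:ℂ)+2) = (((n:ℝ)+2 : ℝ) : ℂ) := by push_cast; rfl
        rw [this, Complex.norm_real, Real.norm_of_nonneg (by positivity)]
      rw [e1, e2]
      gcongr
      refine (norm_sum_le _ _).trans (Finset.sum_le_sum fun i _ => ?_)
      rw [norm_mul]
      exact mul_le_mul (hq _) (ih _ (by omega)) (norm_nonneg _) ((norm_nonneg _).trans (hq _))

lemma psMaj_nonneg (Q : ℕ → ℝ) (v0 v1 : ℝ) (hq : ∀ i, 0 ≤ Q i) (h0 : 0 ≤ v0) (h1 : 0 ≤ v1) (n : ℕ) :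
    0 ≤ psMaj Q v0 v1 n := by
  induction n using Nat.strong_induction_on with
  | _ n ih =>
    match n with
    | 0 => simpa [psMaj]
    | 1 => simpa [psMaj]
    | (n+2) =>
      rw [psMaj]
      refine div_nonneg (Finset.sum_nonneg fun i _ => mul_nonneg (hq _) (ih _ (by omega))) (by positivity)

lemma psMaj_bdd (Q : ℕ → ℝ) (v0 v1 : ℝ) (hq : ∀ i, 0 ≤ Q i) (h0 : 0 ≤ v0) (h1 : 0 ≤ v1)
    (d : ℕ) (hd : ∀ i, d ≤ i → Q i = 0) (ρ : ℝ) (hρ : 0 ≤ ρ) :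
    ∃ K, ∀ n, psMaj Q v0 v1 n * ρ ^ n ≤ K := by
  set A := ∑ i ∈ Finset.range d, Q i * ρ ^ i with hA
  have hAp : 0 ≤ A := Finset.sum_nonneg fun i _ => mul_nonneg (hq _) (pow_nonneg hρ _)
  obtain ⟨n0, hn0⟩ := exists_nat_ge (ρ^2 * A)
  set K := ∑ n ∈ Finset.range (n0+2), psMaj Q v0 v1 n * ρ ^ n with hK
  have hnn : ∀ n, 0 ≤ psMaj Q v0 v1 n * ρ ^ n := fun n =>
    mul_nonneg (psMaj_nonneg Q v0 v1 hq h0 h1 n) (pow_nonneg hρ _)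
  refine ⟨K, fun n => ?_⟩
  induction n using Nat.strong_induction_on with
  | _ n ih =>
    by_cases hn : n < n0 + 2
    · exact Finset.single_le_sum (f := fun n => psMaj Q v0 v1 n * ρ ^ n) (fun i _ => hnn i)
        (Finset.mem_range.2 hn)
    · obtain ⟨k, rfl⟩ : ∃ k, n = k + 2 := ⟨n - 2, by omega⟩
      have hk : n0 ≤ k := by omega
      have hK0 : 0 ≤ K := Finset.sum_nonneg fun i _ => hnn i
      rw [psMaj, div_mul_eq_mul_div, div_le_iff₀ (by positivity), Finset.sum_mul]
      have step : ∀ i : Fin (k+1), Q i * psMaj Q v0 v1 (k - i) * ρ ^ (k+2)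
          ≤ (Q i * ρ ^ (i:ℕ)) * (K * ρ^2) := by
        intro i
        have e : ρ ^ (k+2) = ρ ^ (i:ℕ) * ρ ^ (k - (i:ℕ)) * ρ ^ 2 := by
          rw [← pow_add, ← pow_add]; congr 1; omega
        have := ih (k - i) (by omega)
        calc _ = (Q i * ρ ^ (i:ℕ)) * ((psMaj Q v0 v1 (k - i) * ρ ^ (k - (i:ℕ))) * ρ^2) := by
              rw [e]; ring
          _ ≤ _ := by
              have : 0 ≤ Q i * ρ ^ (i:ℕ) := mul_nonneg (hq _) (pow_nonneg hρ _)
              gcongr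
      refine (Finset.sum_le_sum fun i _ => step i).trans ?_
      rw [← Finset.sum_mul, Fin.sum_univ_eq_sum_range (fun i => Q i * ρ ^ i)]
      have hsum : ∑ i ∈ Finset.range (k+1), Q i * ρ ^ i ≤ A := by
        rw [hA]
        calc ∑ i ∈ Finset.range (k+1), Q i * ρ ^ i
            ≤ ∑ i ∈ Finset.range (k+1) ∪ Finset.range d, Q i * ρ ^ i :=
              Finset.sum_le_sum_of_subset_of_nonneg Finset.subset_union_left
                (fun i _ _ => mul_nonneg (hq _) (pow_nonneg hρ _))
          _ = _ := by
              symm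
              apply Finset.sum_subset Finset.subset_union_right
              intro i _ hi
              rw [hd i (by simpa using hi), zero_mul]
      have hkk : (n0:ℝ) ≤ k := by exact_mod_cast hk
      calc _ ≤ A * (K * ρ^2) := by gcongr
        _ = K * (ρ^2 * A) := by ring
        _ ≤ K * (((k:ℝ)+1) * ((k:ℝ)+2)) := by
            refine mul_le_mul_of_nonneg_left ?_ hK0
            have : (0:ℝ) ≤ k := by positivity
            nlinarith

lemma psMaj_summable (Q : ℕ → ℝ) (v0 v1 : ℝ) (hq : ∀ i, 0 ≤ Q i) (h0 : 0 ≤ v0) (h1 : 0 ≤ v1)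
    (d : ℕ) (hd : ∀ i, d ≤ i → Q i = 0) (ρ : ℝ) (hρ : 0 ≤ ρ) :
    Summable fun n => psMaj Q v0 v1 n * ρ ^ n := by
  obtain ⟨K, hK⟩ := psMaj_bdd Q v0 v1 hq h0 h1 d hd (2 * ρ) (by positivity)
  refine Summable.of_nonneg_of_le (fun n =>
    mul_nonneg (psMaj_nonneg Q v0 v1 hq h0 h1 n) (pow_nonneg hρ _)) (f := fun n => K * (1/2)^n)
    (fun n => ?_) (summable_geometric_two.mul_left K)
  have := hK n
  rw [mul_pow] at this
  have h2 : (0:ℝ) < (1/2)^n := by positivity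
  calc psMaj Q v0 v1 n * ρ ^ n = (psMaj Q v0 v1 n * (2^n * ρ ^ n)) * (1/2)^n := by
        rw [one_div, inv_pow]; field_simp
    _ ≤ _ := by gcongr

lemma summable_shift (c : ℕ → ℝ) (h0 : ∀ n, 0 ≤ c n) (hc : ∀ ρ : ℝ, 0 ≤ ρ → Summable fun n => c n * ρ ^ n)
    (ρ : ℝ) (hρ : 0 ≤ ρ) : Summable fun n : ℕ => ((n:ℝ)+1) * c (n+1) * ρ ^ n := by
  have h := (summable_nat_add_iff 1).2 (hc (2 * (ρ+1)) (by positivity))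
  refine Summable.of_nonneg_of_le (fun n => ?_) (fun n => ?_) h
  · have := h0 (n+1); positivity
  · have h1 : ((n:ℝ)+1) ≤ 2^(n+1) := by
      have := (Nat.lt_two_pow_self (n := n+1)).le
      exact_mod_cast this
    have h2 : ρ ^ n ≤ (ρ+1)^(n+1) := by
      calc ρ ^ n ≤ (ρ+1)^n := by gcongr; linarith
        _ ≤ (ρ+1)^(n+1) := pow_le_pow_right₀ (by linarith) (by omega)
    rw [mul_pow]
    have := h0 (n+1)
    calc _ = c (n+1) * (((n:ℝ)+1) * ρ ^ n) := by ring
      _ ≤ _ := by gcongr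

lemma entire_ps (c : ℕ → ℂ) (hc : ∀ ρ : ℝ, 0 ≤ ρ → Summable fun n => ‖c n‖ * ρ ^ n) :
    Differentiable ℂ (fun w : ℂ => ∑' n, c n * w ^ n) ∧
    ∀ w : ℂ, deriv (fun w : ℂ => ∑' n, c n * w ^ n) w = ∑' n : ℕ, (((n:ℂ)+1) * c (n+1)) * w ^ n := by
  have key : ∀ R : ℝ, 0 ≤ R → ∀ (i : ℕ) (w : ℂ), w ∈ Metric.ball (0:ℂ) R → ‖c i * w ^ i‖ ≤ ‖c i‖ * R ^ i := by
    intro R hR i w hw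
    rw [norm_mul, norm_pow]
    have : ‖w‖ ≤ R := by simpa using (mem_ball_zero_iff.1 hw).le
    gcongr
  constructor
  · intro w
    have := differentiableOn_tsum_of_summable_norm (U := Metric.ball (0:ℂ) (‖w‖+1))
      (F := fun n w => c n * w ^ n) (hc (‖w‖+1) (by positivity)) (fun i => by fun_prop) Metric.isOpen_ball
      (key _ (by positivity))
    exact (this w (by simp)).differentiableAt (Metric.isOpen_ball.mem_nhds (by simp))
  · intro w
    have := hasSum_deriv_of_summable_norm (U := Metric.ball (0:ℂ) (‖w‖+1)) (z := w)
      (F := fun n w => c n * w ^ n) (hc (‖w‖+1) (by positivity)) (fun i => by fun_prop) Metric.isOpen_ball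
      (key _ (by positivity)) (by simp)
    rw [← this.tsum_eq]
    have e : ∀ i : ℕ, deriv (fun w : ℂ => c i * w ^ i) w = c i * (i * w ^ (i-1)) := by
      intro i; simp
    simp_rw [e]
    rw [Summable.tsum_eq_zero_add (by simpa only [e] using this.summable)]
    simp only [Nat.cast_zero, zero_mul, mul_zero, zero_add, Nat.cast_add, Nat.cast_one, Nat.add_sub_cancel]
    congr 1; ext n; ring

noncomputable def addMu (q : ℕ → ℂ) (μ : ℂ) : ℕ → ℂ := fun i => q i + if i = 0 then μ else 0

lemma psCoeff_diff (q : ℕ → ℂ) (v0 v1 : ℂ) (n : ℕ) :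
    Differentiable ℂ fun μ => psCoeff (addMu q μ) v0 v1 n := by
  induction n using Nat.strong_induction_on with
  | _ n ih =>
    match n with
    | 0 => simp [psCoeff]
    | 1 => simp [psCoeff]
    | (n+2) =>
      simp_rw [psCoeff]
      refine Differentiable.div_const (Differentiable.fun_sum fun i _ => ?_) _
      refine Differentiable.mul ?_ (ih _ (by omega))
      unfold addMu
      split_ifs <;> fun_prop

/-- Entire solutions of the ODE with given initial data, holomorphic in the parameter. -/
theorem exists_entire_sol (q : ℕ → ℂ) (d : ℕ) (hd0 : 0 < d) (hd : ∀ i, d ≤ i → q i = 0) (v0 v1 : ℂ) :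
    ∃ v : ℂ → ℂ → ℂ, (∀ μ, Differentiable ℂ (v μ)) ∧
      (∀ μ w, deriv (deriv (v μ)) w = ((∑ i ∈ Finset.range d, q i * w ^ i) + μ) * v μ w) ∧
      (∀ μ, v μ 0 = v0) ∧ (∀ μ, deriv (v μ) 0 = v1) ∧
      (∀ w, Differentiable ℂ fun μ => v μ w) ∧ (∀ w, Differentiable ℂ fun μ => deriv (v μ) w) := by
  -- majorants
  have maj : ∀ B : ℝ, 0 ≤ B → ∃ M : ℕ → ℝ, (∀ n, 0 ≤ M n) ∧
      (∀ ρ : ℝ, 0 ≤ ρ → Summable fun n => M n * ρ ^ n) ∧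
      ∀ μ : ℂ, ‖μ‖ ≤ B → ∀ n, ‖psCoeff (addMu q μ) v0 v1 n‖ ≤ M n := by
    intro B hB
    set Q : ℕ → ℝ := fun i => ‖q i‖ + if i = 0 then B else 0 with hQ
    have hQ0 : ∀ i, 0 ≤ Q i := by
      intro i; simp only [hQ]; split_ifs <;> positivity
    refine ⟨psMaj Q ‖v0‖ ‖v1‖, psMaj_nonneg Q _ _ hQ0 (norm_nonneg _) (norm_nonneg _),
      psMaj_summable Q _ _ hQ0 (norm_nonneg _) (norm_nonneg _) d ?_, fun μ hμ => psCoeff_le _ _ _ _ ?_⟩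
    · intro i hi
      have : i ≠ 0 := by omega
      simp [hQ, hd i hi, this]
    · intro i
      simp only [hQ, addMu]
      refine (norm_add_le _ _).trans ?_
      gcongr
      split_ifs <;> simp [hμ]
  have sumc : ∀ μ, ∀ ρ : ℝ, 0 ≤ ρ → Summable fun n => ‖psCoeff (addMu q μ) v0 v1 n‖ * ρ ^ n := by
    intro μ ρ hρ
    obtain ⟨M, hM0, hM1, hM2⟩ := maj ‖μ‖ (norm_nonneg _)
    exact Summable.of_nonneg_of_le (fun n => by positivity) (fun n => by have := hM2 μ le_rfl n; gcongr) (hM1 ρ hρ)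
  have hcast : ∀ n : ℕ, ‖(n:ℂ)+1‖ = (n:ℝ)+1 := by
    intro n
    have : ((n:ℂ)+1) = (((n:ℝ)+1 : ℝ) : ℂ) := by push_cast; rfl
    rw [this, Complex.norm_real, Real.norm_of_nonneg (by positivity)]
  have sumc' : ∀ μ, ∀ ρ : ℝ, 0 ≤ ρ →
      Summable fun n : ℕ => ‖((n:ℂ)+1) * psCoeff (addMu q μ) v0 v1 (n+1)‖ * ρ ^ n := by
    intro μ ρ hρ
    have := summable_shift (fun n => ‖psCoeff (addMu q μ) v0 v1 n‖) (fun _ => norm_nonneg _) (sumc μ) ρ hρ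
    simpa only [norm_mul, hcast] using this
  have hd1 : ∀ μ, deriv (fun w : ℂ => ∑' n, psCoeff (addMu q μ) v0 v1 n * w ^ n) =
      fun w => ∑' n : ℕ, (((n:ℂ)+1) * psCoeff (addMu q μ) v0 v1 (n+1)) * w ^ n := by
    intro μ; ext w; exact (entire_ps _ (sumc μ)).2 w
  refine ⟨fun μ w => ∑' n, psCoeff (addMu q μ) v0 v1 n * w ^ n, fun μ => (entire_ps _ (sumc μ)).1, ?_, ?_, ?_, ?_, ?_⟩
  · intro μ w
    rw [hd1, (entire_ps _ (sumc' μ)).2 w]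
    have e1 : (∑ i ∈ Finset.range d, q i * w ^ i) + μ = ∑' i, addMu q μ i * w ^ i := by
      rw [tsum_eq_sum (s := Finset.range d)]
      · simp only [addMu, add_mul, Finset.sum_add_distrib]
        congr 1
        rw [Finset.sum_eq_single_of_mem 0 (Finset.mem_range.2 hd0)]
        · simp
        · intro b _ hb; simp [hb]
      · intro b hb
        have hb' : d ≤ b := by simpa using hb
        have : b ≠ 0 := by omega
        simp [addMu, hd b hb', this]
    have s1 : Summable fun i => ‖addMu q μ i * w ^ i‖ := by
      apply summable_of_hasFiniteSupport
      refine (Set.finite_lt_nat d).subset ?_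
      intro i hi
      by_contra hcon
      have hb' : d ≤ i := by simpa using hcon
      have : i ≠ 0 := by omega
      apply hi
      simp [addMu, hd i hb', this]
    have s2 : Summable fun i => ‖psCoeff (addMu q μ) v0 v1 i * w ^ i‖ := by
      simpa only [norm_mul, norm_pow] using sumc μ ‖w‖ (norm_nonneg _)
    rw [e1, tsum_mul_tsum_eq_tsum_sum_antidiagonal_of_summable_norm s1 s2]
    congr 1; ext n
    rw [Finset.Nat.sum_antidiagonal_eq_sum_range_succ
      (fun i j => addMu q μ i * w ^ i * (psCoeff (addMu q μ) v0 v1 j * w ^ j)),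
      show n + 1 + 1 = n + 2 from rfl, psCoeff,
      Fin.sum_univ_eq_sum_range (fun i => addMu q μ i * psCoeff (addMu q μ) v0 v1 (n - i))]
    have h1 : ((n:ℂ)+1) ≠ 0 := by exact_mod_cast Nat.succ_ne_zero n
    have h2 : ((n:ℂ)+2) ≠ 0 := by exact_mod_cast Nat.succ_ne_zero (n+1)
    have e3 : ((n:ℂ)+1) * (((n+1:ℕ):ℂ)+1) = ((n:ℂ)+1) * ((n:ℂ)+2) := by push_cast; ring
    rw [← mul_assoc, e3, mul_div_cancel₀ _ (mul_ne_zero h1 h2), Finset.sum_mul]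
    refine Finset.sum_congr rfl fun i hi => ?_
    have : w ^ n = w ^ i * w ^ (n - i) := by
      rw [← pow_add]; congr 1
      have := Finset.mem_range.1 hi
      omega
    rw [this]; ring
  · intro μ
    beta_reduce
    rw [tsum_eq_single 0]
    · simp [psCoeff]
    · intro b hb; simp [hb]
  · intro μ
    rw [hd1]
    beta_reduce
    rw [tsum_eq_single 0]
    · simp [psCoeff]
    · intro b hb; simp [hb]
  · intro w μ
    obtain ⟨M, hM0, hM1, hM2⟩ := maj (‖μ‖+1) (by positivity)
    have := differentiableOn_tsum_of_summable_norm (U := Metric.ball (0:ℂ) (‖μ‖+1))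
      (F := fun n μ => psCoeff (addMu q μ) v0 v1 n * w ^ n) (hM1 ‖w‖ (norm_nonneg _))
      (fun i => ((psCoeff_diff q v0 v1 i).mul_const _).differentiableOn) Metric.isOpen_ball ?_
    · exact (this μ (by simp)).differentiableAt (Metric.isOpen_ball.mem_nhds (by simp))
    · intro i z hz
      rw [norm_mul, norm_pow]
      have := hM2 z (mem_ball_zero_iff.1 hz).le i
      gcongr
  · intro w μ
    obtain ⟨M, hM0, hM1, hM2⟩ := maj (‖μ‖+1) (by positivity)
    simp_rw [hd1]
    have := differentiableOn_tsum_of_summable_norm (U := Metric.ball (0:ℂ) (‖μ‖+1))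
      (F := fun (n:ℕ) μ => (((n:ℂ)+1) * psCoeff (addMu q μ) v0 v1 (n+1)) * w ^ n)
      (summable_shift M hM0 hM1 ‖w‖ (norm_nonneg _))
      (fun i => (((psCoeff_diff q v0 v1 (i+1)).const_mul _).mul_const _).differentiableOn) Metric.isOpen_ball ?_
    · exact (this μ (by simp)).differentiableAt (Metric.isOpen_ball.mem_nhds (by simp))
    · intro i z hz
      rw [norm_mul, norm_pow, norm_mul, hcast]
      have := hM2 z (mem_ball_zero_iff.1 hz).le (i+1)
      gcongr


/-- `v` is an entire solution of `v'' = Q v`. -/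
def IsSol (Q v : ℂ → ℂ) : Prop := Differentiable ℂ v ∧ ∀ w, deriv (deriv v) w = Q w * v w

lemma diff_deriv {v : ℂ → ℂ} (h : Differentiable ℂ v) : Differentiable ℂ (deriv v) :=
  h.contDiff.differentiable_deriv_two

lemma IsSol.wronsk {Q u v : ℂ → ℂ} (hu : IsSol Q u) (hv : IsSol Q v) (w : ℂ) :
    u w * deriv v w - deriv u w * v w = u 0 * deriv v 0 - deriv u 0 * v 0 := by
  have hu' := diff_deriv hu.1
  have hv' := diff_deriv hv.1
  refine is_const_of_deriv_eq_zero (𝕜 := ℂ) (f := fun w => u w * deriv v w - deriv u w * v w) ?_ ?_ w 0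
  · exact (hu.1.mul hv').sub (hu'.mul hv.1)
  · intro w
    have h1 := ((hu.1 w).hasDerivAt.mul (hv' w).hasDerivAt).sub ((hu' w).hasDerivAt.mul (hv.1 w).hasDerivAt)
    have h2 := h1.deriv
    rw [hv.2, hu.2] at h2
    refine Eq.trans h2 (by ring)

lemma IsSol.lin {Q u v : ℂ → ℂ} (hu : IsSol Q u) (hv : IsSol Q v) (a b : ℂ) :
    IsSol Q (fun w => a * u w + b * v w) ∧
    ∀ w, deriv (fun w => a * u w + b * v w) w = a * deriv u w + b * deriv v w := by
  have hu' := diff_deriv hu.1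
  have hv' := diff_deriv hv.1
  have h1 : ∀ w, deriv (fun w => a * u w + b * v w) w = a * deriv u w + b * deriv v w := fun w =>
    (((hu.1 w).hasDerivAt.const_mul a).add ((hv.1 w).hasDerivAt.const_mul b)).deriv
  refine ⟨⟨(hu.1.const_mul a).add (hv.1.const_mul b), fun w => ?_⟩, h1⟩
  rw [funext h1]
  have := (((hu' w).hasDerivAt.const_mul a).add ((hv' w).hasDerivAt.const_mul b)).deriv
  rw [hu.2, hv.2] at this
  refine Eq.trans this (by ring)

/-- Uniqueness: vanishing Wronskian with both members of a fundamental pair. -/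
lemma IsSol.expand {Q C S u : ℂ → ℂ} (hC : IsSol Q C) (hS : IsSol Q S) (hu : IsSol Q u)
    (c0 : C 0 = 1) (c1 : deriv C 0 = 0) (s0 : S 0 = 0) (s1 : deriv S 0 = 1) (w : ℂ) :
    u w = u 0 * C w + deriv u 0 * S w ∧ deriv u w = u 0 * deriv C w + deriv u 0 * deriv S w := by
  have h1 := hC.wronsk hS w
  have h2 := hu.wronsk hC w
  have h3 := hu.wronsk hS w
  rw [c0, c1, s0, s1] at h1
  rw [c0, c1] at h2
  rw [s0, s1] at h3
  constructor
  · linear_combination (-u w) * h1 + C w * h3 - S w * h2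
  · linear_combination (-deriv u w) * h1 + deriv C w * h3 - deriv S w * h2

lemma IsSol.eq_zero_of {Q C S u : ℂ → ℂ} (hC : IsSol Q C) (hS : IsSol Q S) (hu : IsSol Q u)
    (c0 : C 0 = 1) (c1 : deriv C 0 = 0) (s0 : S 0 = 0) (s1 : deriv S 0 = 1) (w : ℂ)
    (h0 : u w = 0) (h1 : deriv u w = 0) (z : ℂ) : u z = 0 := by
  have h2 := hu.wronsk hC w
  have h3 := hu.wronsk hS w
  rw [c0, c1, h0, h1] at h2
  rw [s0, s1, h0, h1] at h3
  have := (IsSol.expand hC hS hu c0 c1 s0 s1 z).1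
  rw [this]
  have e1 : u 0 = 0 := by linear_combination -h3
  have e2 : deriv u 0 = 0 := by linear_combination h2
  rw [e1, e2]; ring

lemma IsSol.real1 {Q v : ℂ → ℂ} (hv : IsSol Q v) (r : ℝ) :
    HasDerivAt (fun r : ℝ => v r) (deriv v r) r :=
  (hv.1 (r:ℂ)).hasDerivAt.comp_ofReal

lemma IsSol.real2 {Q v : ℂ → ℂ} (hv : IsSol Q v) (r : ℝ) :
    HasDerivAt (fun r : ℝ => deriv v r) (Q r * v r) r := by
  have := (diff_deriv hv.1 (r:ℂ)).hasDerivAt.comp_ofReal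
  rwa [hv.2] at this

lemma hasDerivAt_normSq {a : ℝ → ℂ} {a' : ℂ} {r : ℝ} (h : HasDerivAt a a' r) :
    HasDerivAt (fun r => ‖a r‖^2) (2 * (starRingEnd ℂ (a r) * a').re) r := by
  have := h.norm_sq
  rwa [Complex.inner, mul_comm a' ] at this

lemma re_conj_mul_le (a b : ℂ) : (starRingEnd ℂ a * b).re ≤ ‖a‖ * ‖b‖ := by
  calc _ ≤ ‖starRingEnd ℂ a * b‖ := Complex.re_le_norm _
    _ = _ := by rw [norm_mul, RCLike.norm_conj]

lemma neg_le_re_conj_mul (a b : ℂ) : -(‖a‖ * ‖b‖) ≤ (starRingEnd ℂ a * b).re := by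
  have h := Complex.abs_re_le_norm (starRingEnd ℂ a * b)
  rw [norm_mul, RCLike.norm_conj] at h
  exact (abs_le.1 h).1

/-- crude Gronwall on a bounded interval -/
lemma crude_gronwall {Q v : ℂ → ℂ} (hv : IsSol Q v) (M R : ℝ) (hM : 0 < M)
    (hQ : ∀ r : ℝ, 0 ≤ r → r ≤ R → ‖Q r‖ ≤ M^2) (r : ℝ) (hr : 0 ≤ r) (hrR : r ≤ R) :
    ‖deriv v r‖^2 + M^2 * ‖v r‖^2 ≤ (‖deriv v R‖^2 + M^2 * ‖v R‖^2) * Real.exp (2 * M * (R - r)) := by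
  set V : ℝ → ℝ := fun r => ‖deriv v r‖^2 + M^2 * ‖v r‖^2 with hV
  have hVd : ∀ t : ℝ, HasDerivAt V (2 * (starRingEnd ℂ (deriv v t) * (Q t * v t)).re
      + M^2 * (2 * (starRingEnd ℂ (v t) * deriv v t).re)) t := fun t =>
    (hasDerivAt_normSq (hv.real2 t)).add ((hasDerivAt_normSq (hv.real1 t)).const_mul _)
  have hE : ∀ t : ℝ, HasDerivAt (fun t => V t * Real.exp (2 * M * t))
      ((2 * (starRingEnd ℂ (deriv v t) * (Q t * v t)).re
      + M^2 * (2 * (starRingEnd ℂ (v t) * deriv v t).re)) * Real.exp (2 * M * t)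
      + V t * (Real.exp (2 * M * t) * (2 * M))) t := fun t => by
    have : HasDerivAt (fun t : ℝ => Real.exp (2 * M * t)) (Real.exp (2 * M * t) * (2 * M)) t := by
      have := ((hasDerivAt_id t).const_mul (2*M)).exp
      simpa using this
    exact (hVd t).mul this
  have mono : MonotoneOn (fun t => V t * Real.exp (2 * M * t)) (Icc 0 R) := by
    refine monotoneOn_of_deriv_nonneg (convex_Icc 0 R) (fun t _ => (hE t).continuousAt.continuousWithinAt)
      (fun t _ => (hE t).differentiableAt.differentiableWithinAt) fun t ht => ?_
    rw [interior_Icc] at ht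
    rw [(hE t).deriv]
    have hq := hQ t ht.1.le ht.2.le
    have b1 := neg_le_re_conj_mul (deriv v t) (Q t * v t)
    have b2 := neg_le_re_conj_mul (v t) (deriv v t)
    rw [norm_mul] at b1
    have b3 : ‖deriv v t‖ * (‖Q t‖ * ‖v t‖) ≤ ‖deriv v t‖ * (M^2 * ‖v t‖) := by gcongr
    have key : 0 ≤ (2 * (starRingEnd ℂ (deriv v t) * (Q t * v t)).re
      + M^2 * (2 * (starRingEnd ℂ (v t) * deriv v t).re)) + V t * (2 * M) := by
      have b4 : M^2 * (2 * (-(‖v t‖ * ‖deriv v t‖))) ≤ M^2 * (2 * (starRingEnd ℂ (v t) * deriv v t).re) := by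
        gcongr
      have b5 : 0 ≤ (2 * M) * (‖deriv v t‖ - M * ‖v t‖)^2 := by positivity
      simp only [hV]
      nlinarith
    have := mul_nonneg key (Real.exp_pos (2 * M * t)).le
    linarith
  have := mono (a := r) ⟨hr, hrR⟩ (b := R) ⟨hr.trans hrR, le_rfl⟩ hrR
  simp only at this
  have e : Real.exp (2 * M * (R - r)) = Real.exp (2*M*R) / Real.exp (2*M*r) := by
    rw [← Real.exp_sub]; congr 1; ring
  rw [e, ← mul_div_assoc, le_div_iff₀ (Real.exp_pos _)]
  exact this


lemma hasDerivAt_pair {u u' : ℝ → ℂ} {u'' η : ℂ} {r : ℝ} (h1 : HasDerivAt u (u' r) r)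
    (h2 : HasDerivAt u' u'' r) :
    HasDerivAt (fun r => (starRingEnd ℂ (u r) * (η * u' r)).re)
      ((starRingEnd ℂ (u r) * (η * u'')).re + η.re * ‖u' r‖^2) r := by
  have := h1.inner ℝ (h2.const_mul η)
  simp only [Complex.inner] at this
  convert! this using 1
  · ext r; rw [mul_comm]
  · rw [mul_comm (starRingEnd ℂ (u r))]
    congr 1
    rw [mul_assoc, Complex.mul_conj, Complex.normSq_eq_norm_sq, Complex.re_mul_ofReal]

/-- Decaying solutions have derivatives that are small along a sequence. -/
lemma exists_small_deriv {Q u v : ℂ → ℂ} (hu : IsSol Q u) (hv : IsSol Q v) (R : ℝ)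
    (hQ : ∀ r : ℝ, R ≤ r → 0 ≤ (Q r).re)
    (tu : Tendsto (fun r : ℝ => u r) atTop (nhds 0)) (tv : Tendsto (fun r : ℝ => v r) atTop (nhds 0))
    (ε : ℝ) (hε : 0 < ε) (T : ℝ) :
    ∃ r : ℝ, T ≤ r ∧ ‖deriv u r‖^2 + ‖deriv v r‖^2 < ε := by
  by_contra hcon
  push Not at hcon
  set T1 := max T R with hT1
  set ψ : ℝ → ℝ := fun r => (starRingEnd ℂ (u r) * (1 * deriv u r)).re
    + (starRingEnd ℂ (v r) * (1 * deriv v r)).re with hψ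
  have dψ : ∀ r : ℝ, HasDerivAt ψ (((starRingEnd ℂ (u r) * (1 * (Q r * u r))).re + (1:ℂ).re * ‖deriv u r‖^2)
      + ((starRingEnd ℂ (v r) * (1 * (Q r * v r))).re + (1:ℂ).re * ‖deriv v r‖^2)) r := fun r =>
    (hasDerivAt_pair (hu.real1 r) (hu.real2 r)).add (hasDerivAt_pair (hv.real1 r) (hv.real2 r))
  have cc : ∀ z q : ℂ, (starRingEnd ℂ z * (1 * (q * z))).re = q.re * ‖z‖^2 := by
    intro z q
    have : starRingEnd ℂ z * (1 * (q * z)) = q * (z * starRingEnd ℂ z) := by ring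
    rw [this, Complex.mul_conj, Complex.normSq_eq_norm_sq]; simp [← Complex.ofReal_pow]
  have m1 : MonotoneOn (fun r => ψ r - ε * r) (Ici T1) := by
    have hd : ∀ r : ℝ, HasDerivAt (fun r => ψ r - ε * r) _ r := fun r =>
      (dψ r).sub ((hasDerivAt_id r).const_mul ε)
    refine monotoneOn_of_deriv_nonneg (convex_Ici T1) (fun t _ => (hd t).continuousAt.continuousWithinAt)
      (fun t _ => (hd t).differentiableAt.differentiableWithinAt) fun t ht => ?_
    rw [interior_Ici] at ht
    rw [(hd t).deriv, cc, cc]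
    have h1 : T ≤ t := (le_max_left _ _).trans (le_of_lt ht)
    have h2 : R ≤ t := (le_max_right _ _).trans (le_of_lt ht)
    have h3 := hcon t h1
    have h4 := hQ t h2
    have h5 : 0 ≤ (Q t).re * ‖u t‖^2 := by positivity
    have h6 : 0 ≤ (Q t).re * ‖v t‖^2 := by positivity
    simp only [Complex.one_re]
    linarith
  obtain ⟨T2, hT2, hψ2⟩ : ∃ T2, T1 ≤ T2 ∧ ∀ r, T2 ≤ r → 1 ≤ ψ r := by
    refine ⟨T1 + |1 - ψ T1| / ε, by have : 0 ≤ |1 - ψ T1| / ε := by positivity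
                                    linarith, fun r hr => ?_⟩
    have h0 : 0 ≤ |1 - ψ T1| / ε := by positivity
    have hr1 : T1 ≤ r := by linarith
    have := m1 (a := T1) (by simp) (b := r) hr1 hr1
    simp only at this
    have h2 : |1 - ψ T1| ≤ ε * (r - T1) := by
      rw [mul_comm, ← div_le_iff₀ hε]; linarith
    have := le_abs_self (1 - ψ T1)
    linarith
  set Φ : ℝ → ℝ := fun r => ‖u r‖^2 + ‖v r‖^2 with hΦ
  have dΦ : ∀ r : ℝ, HasDerivAt Φ (2 * ψ r) r := fun r => by
    have := (hasDerivAt_normSq (hu.real1 r)).add (hasDerivAt_normSq (hv.real1 r))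
    convert! this using 1
    simp only [hψ, one_mul]; ring
  have m2 : MonotoneOn (fun r => Φ r - r) (Ici T2) := by
    have hd : ∀ r : ℝ, HasDerivAt (fun r => Φ r - r) _ r := fun r =>
      (dΦ r).sub (hasDerivAt_id r)
    refine monotoneOn_of_deriv_nonneg (convex_Ici T2) (fun t _ => (hd t).continuousAt.continuousWithinAt)
      (fun t _ => (hd t).differentiableAt.differentiableWithinAt) fun t ht => ?_
    rw [interior_Ici] at ht
    rw [(hd t).deriv]
    have := hψ2 t (le_of_lt ht)
    linarith
  have tΦ : Tendsto Φ atTop (nhds 0) := by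
    have := (tu.norm.pow 2).add (tv.norm.pow 2)
    simpa using this
  obtain ⟨r, hr1, hr2⟩ := ((tΦ.eventually (gt_mem_nhds one_pos)).and (eventually_ge_atTop (T2+1))).exists
  have := m2 (a := T2) (by simp) (b := r) (by simp; linarith) (by linarith)
  have hpos : 0 ≤ Φ T2 := by positivity
  simp only at this
  linarith

lemma wronsk_zero_of_decay {Q u v : ℂ → ℂ} (hu : IsSol Q u) (hv : IsSol Q v) (R : ℝ)
    (hQ : ∀ r : ℝ, R ≤ r → 0 ≤ (Q r).re)
    (tu : Tendsto (fun r : ℝ => u r) atTop (nhds 0)) (tv : Tendsto (fun r : ℝ => v r) atTop (nhds 0)) :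
    u 0 * deriv v 0 - deriv u 0 * v 0 = 0 := by
  set W := u 0 * deriv v 0 - deriv u 0 * v 0 with hW
  rw [← norm_eq_zero]
  refine le_antisymm (le_of_forall_pos_le_add fun ε hε => ?_) (norm_nonneg _)
  have e1 := tu.norm.eventually (gt_mem_nhds (show ‖(0:ℂ)‖ < ε/2 by simpa using by positivity))
  have e2 := tv.norm.eventually (gt_mem_nhds (show ‖(0:ℂ)‖ < ε/2 by simpa using by positivity))
  obtain ⟨T, hT⟩ := eventually_atTop.1 (e1.and e2)
  obtain ⟨r, hr, hd⟩ := exists_small_deriv hu hv R hQ tu tv 1 one_pos T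
  have h := hT r hr
  have hu1 : ‖deriv u r‖ ≤ 1 := by nlinarith [norm_nonneg (deriv u r), sq_nonneg ‖deriv v r‖]
  have hv1 : ‖deriv v r‖ ≤ 1 := by nlinarith [norm_nonneg (deriv v r), sq_nonneg ‖deriv u r‖]
  rw [hW, ← hu.wronsk hv r, zero_add]
  calc _ ≤ ‖u r * deriv v r‖ + ‖deriv u r * v r‖ := norm_sub_le _ _
    _ ≤ ε/2 * 1 + 1 * (ε/2) := by
      rw [norm_mul, norm_mul]
      gcongr
      · exact h.1.le
      · exact h.2.le
    _ = ε := by ring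

/-- Energy functional. -/
noncomputable def enJ (η : ℂ) (g : ℂ → ℂ) (r : ℝ) : ℝ := -(starRingEnd ℂ (g r) * (η * deriv g r)).re

lemma energy {Q g : ℂ → ℂ} (hg : IsSol Q g) (R : ℝ) (hQ : ∀ r : ℝ, R ≤ r → 0 ≤ (Q r).re)
    (tg : Tendsto (fun r : ℝ => g r) atTop (nhds 0)) (η : ℂ) (hη : ‖η‖ = 1) (c s : ℝ) (hc : 0 < c) (hs : 0 < s)
    (hη2 : c ≤ η.re) (hηQ : ∀ r : ℝ, 0 ≤ r → c * s^2 ≤ (η * Q r).re) :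
    (∀ r : ℝ, 0 ≤ r → 0 ≤ enJ η g r) ∧ (∀ r : ℝ, 0 ≤ r → ‖g r‖^2 ≤ (1/(c*s)) * enJ η g r) ∧
    AntitoneOn (enJ η g) (Ici 0) ∧
    ‖g 1‖^2 ≤ (1/(c*s)) * Real.exp (-(2*c*s)) * enJ η g 0 := by
  have dJ : ∀ r : ℝ, HasDerivAt (enJ η g) (-((starRingEnd ℂ (g r) * (η * (Q r * g r))).re + η.re * ‖deriv g r‖^2)) r :=
    fun r => (hasDerivAt_pair (hg.real1 r) (hg.real2 r)).neg
  have cc : ∀ z q : ℂ, (starRingEnd ℂ z * (η * (q * z))).re = (η * q).re * ‖z‖^2 := by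
    intro z q
    have : starRingEnd ℂ z * (η * (q * z)) = (η * q) * (z * starRingEnd ℂ z) := by ring
    rw [this, Complex.mul_conj, Complex.normSq_eq_norm_sq, Complex.re_mul_ofReal]
  have bJ : ∀ r : ℝ, |enJ η g r| ≤ ‖g r‖ * ‖deriv g r‖ := by
    intro r
    rw [enJ, abs_neg]
    refine (Complex.abs_re_le_norm _).trans ?_
    rw [norm_mul, norm_mul, hη, RCLike.norm_conj, one_mul]
  have dle : ∀ r : ℝ, 0 ≤ r →
      (-((starRingEnd ℂ (g r) * (η * (Q r * g r))).re + η.re * ‖deriv g r‖^2))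
      ≤ -(2*c*s) * (‖g r‖ * ‖deriv g r‖) := by
    intro r hr
    rw [cc]
    have h1 : c * s^2 * ‖g r‖^2 ≤ (η * Q r).re * ‖g r‖^2 := by gcongr; exact hηQ r hr
    have h2 : c * ‖deriv g r‖^2 ≤ η.re * ‖deriv g r‖^2 := by gcongr
    nlinarith [mul_nonneg hc.le (sq_nonneg (s * ‖g r‖ - ‖deriv g r‖))]
  have anti : AntitoneOn (enJ η g) (Ici 0) := by
    refine antitoneOn_of_deriv_nonpos (convex_Ici 0) (fun t _ => (dJ t).continuousAt.continuousWithinAt)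
      (fun t _ => (dJ t).differentiableAt.differentiableWithinAt) fun t ht => ?_
    rw [interior_Ici] at ht
    rw [(dJ t).deriv]
    refine (dle t (le_of_lt ht)).trans ?_
    have : 0 ≤ (2*c*s) * (‖g t‖ * ‖deriv g t‖) := by positivity
    linarith
  -- along a sequence everything is small
  have small : ∀ ε : ℝ, 0 < ε → ∀ T : ℝ, ∃ r : ℝ, T ≤ r ∧ |enJ η g r| ≤ ε ∧ ‖g r‖^2 ≤ ε := by
    intro ε hε T
    have e1 := tg.norm.eventually (gt_mem_nhds (show ‖(0:ℂ)‖ < ε by simpa using by positivity))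
    have e2 := (tg.norm.pow 2).eventually (gt_mem_nhds (show ‖(0:ℂ)‖^2 < ε by simpa using by positivity))
    obtain ⟨T1, hT⟩ := eventually_atTop.1 (e1.and e2)
    obtain ⟨r, hr, hd⟩ := exists_small_deriv hg hg R hQ tg tg 1 one_pos (max T T1)
    have h := hT r ((le_max_right _ _).trans hr)
    have hu1 : ‖deriv g r‖ ≤ 1 := by nlinarith [norm_nonneg (deriv g r)]
    refine ⟨r, (le_max_left _ _).trans hr, (bJ r).trans ?_, h.2.le⟩
    calc _ ≤ ε * 1 := by gcongr; exact h.1.le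
      _ = ε := mul_one _
  have nonneg : ∀ r : ℝ, 0 ≤ r → 0 ≤ enJ η g r := by
    intro r hr
    refine le_of_forall_pos_le_add fun ε hε => ?_
    obtain ⟨t, ht, hJ, _⟩ := small ε hε r
    have := anti (a := r) hr (b := t) (hr.trans ht) ht
    have := (abs_le.1 hJ).1
    linarith
  have hcs : 0 < c * s := by positivity
  have bound : ∀ r : ℝ, 0 ≤ r → ‖g r‖^2 ≤ (1/(c*s)) * enJ η g r := by
    intro r hr
    have hd : ∀ r : ℝ, HasDerivAt (fun r : ℝ => ‖g r‖^2 - (1/(c*s)) * enJ η g r) _ r := fun r =>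
      (hasDerivAt_normSq (hg.real1 r)).sub ((dJ r).const_mul (1/(c*s)))
    have m : MonotoneOn (fun r : ℝ => ‖g r‖^2 - (1/(c*s)) * enJ η g r) (Ici 0) := by
      refine monotoneOn_of_deriv_nonneg (convex_Ici 0) (fun t _ => (hd t).continuousAt.continuousWithinAt)
        (fun t _ => (hd t).differentiableAt.differentiableWithinAt) fun t ht => ?_
      rw [interior_Ici] at ht
      rw [(hd t).deriv]
      have h1 := dle t (le_of_lt ht)
      have h2 := neg_le_re_conj_mul (g t) (deriv g t)
      have h3 := mul_le_mul_of_nonneg_left h1 (show 0 ≤ 1/(c*s) by positivity)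
      have h4 : 1/(c*s) * (-(2*c*s) * (‖g t‖ * ‖deriv g t‖)) = -2 * (‖g t‖ * ‖deriv g t‖) := by
        field_simp
      linarith
    refine le_of_forall_pos_le_add fun ε hε => ?_
    obtain ⟨t, ht, hJ, hgt⟩ := small ε hε r
    have := m (a := r) hr (b := t) (hr.trans ht) ht
    simp only at this
    have h5 : 0 ≤ (1/(c*s)) * enJ η g t := mul_nonneg (by positivity) (nonneg t (hr.trans ht))
    linarith
  refine ⟨nonneg, bound, anti, ?_⟩
  have hd : ∀ r : ℝ, HasDerivAt (fun r : ℝ => enJ η g r * Real.exp (2*c*s*r)) (_ * Real.exp (2*c*s*r)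
      + enJ η g r * (Real.exp (2*c*s*r) * (2*c*s))) r := fun r => by
    have : HasDerivAt (fun t : ℝ => Real.exp (2*c*s * t)) (Real.exp (2*c*s * r) * (2*c*s)) r := by
      have := ((hasDerivAt_id r).const_mul (2*c*s)).exp
      simpa using this
    exact (dJ r).mul this
  have m : AntitoneOn (fun r : ℝ => enJ η g r * Real.exp (2*c*s*r)) (Ici 0) := by
    refine antitoneOn_of_deriv_nonpos (convex_Ici 0) (fun t _ => (hd t).continuousAt.continuousWithinAt)
      (fun t _ => (hd t).differentiableAt.differentiableWithinAt) fun t ht => ?_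
    rw [interior_Ici] at ht
    rw [(hd t).deriv]
    have h1 := dle t (le_of_lt ht)
    have h2 := (le_abs_self _).trans (bJ t)
    have h3 : (2*c*s) * enJ η g t ≤ (2*c*s) * (‖g t‖ * ‖deriv g t‖) := by gcongr
    have h4 : (-((starRingEnd ℂ (g t) * (η * (Q t * g t))).re + η.re * ‖deriv g t‖^2)) + enJ η g t * (2*c*s) ≤ 0 := by
      linarith
    have := mul_nonpos_of_nonpos_of_nonneg h4 (Real.exp_pos (2*c*s*t)).le
    linarith
  have h1 := m (a := 0) (by simp) (b := 1) (by simp) zero_le_one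
  simp only [mul_one, mul_zero, Real.exp_zero] at h1
  have h2 := bound 1 zero_le_one
  rw [Complex.ofReal_one] at h2
  refine h2.trans ?_
  rw [mul_assoc]
  refine mul_le_mul_of_nonneg_left ?_ (by positivity)
  rw [Real.exp_neg, mul_comm, ← div_eq_mul_inv, le_div_iff₀ (Real.exp_pos _)]
  exact h1

lemma energy_ne {Q g : ℂ → ℂ} (hg : IsSol Q g) (R : ℝ) (hQ : ∀ r : ℝ, R ≤ r → 0 ≤ (Q r).re)
    (tg : Tendsto (fun r : ℝ => g r) atTop (nhds 0)) (η : ℂ) (hη : ‖η‖ = 1) (c s : ℝ) (hc : 0 < c) (hs : 0 < s)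
    (hη2 : c ≤ η.re) (hηQ : ∀ r : ℝ, 0 ≤ r → c * s^2 ≤ (η * Q r).re) (hne : ∃ w, g w ≠ 0) (r : ℝ) (hr : 0 ≤ r) :
    g r ≠ 0 := by
  obtain ⟨h1, h2, h3, -⟩ := energy hg R hQ tg η hη c s hc hs hη2 hηQ
  intro h0
  have hJ : enJ η g r = 0 := by simp [enJ, h0]
  have hz : ∀ t : ℝ, r ≤ t → g t = 0 := by
    intro t ht
    have a1 := h3 (a := r) hr (b := t) (hr.trans ht) ht
    have a2 := h1 t (hr.trans ht)
    have a3 := h2 t (hr.trans ht)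
    have a4 : enJ η g t = 0 := by linarith
    rw [a4, mul_zero] at a3
    have a5 : ‖g t‖ = 0 := by nlinarith [norm_nonneg (g t)]
    simpa using a5
  have hA : AnalyticOnNhd ℂ g univ := fun z _ => hg.1.analyticAt z
  have hf : ∃ᶠ z in nhdsWithin ((r:ℝ):ℂ) {((r:ℝ):ℂ)}ᶜ, g z = 0 := by
    have t1 : Tendsto (fun t : ℝ => (t:ℂ)) (nhdsWithin r (Ioi r)) (nhdsWithin ((r:ℝ):ℂ) {((r:ℝ):ℂ)}ᶜ) := by
      refine tendsto_nhdsWithin_iff.2 ⟨(Complex.continuous_ofReal.tendsto r).mono_left nhdsWithin_le_nhds, ?_⟩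
      filter_upwards [self_mem_nhdsWithin] with t ht
      simp only [mem_compl_iff, mem_singleton_iff, Complex.ofReal_inj]
      exact (ne_of_gt ht)
    refine t1.frequently (Eventually.frequently ?_)
    filter_upwards [self_mem_nhdsWithin] with t ht
    exact hz t (le_of_lt ht)
  obtain ⟨w, hw⟩ := hne
  exact hw (hA.eqOn_zero_of_preconnected_of_frequently_eq_zero isPreconnected_univ (mem_univ _) hf (mem_univ w))


lemma poly_bound (P : Polynomial ℂ) (n : ℕ) (h : P.natDegree ≤ n) :
    ∃ K : ℝ, 0 ≤ K ∧ ∀ r : ℝ, 1 ≤ r → ‖P.eval (r:ℂ)‖ ≤ K * r^n := by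
  refine ⟨∑ i ∈ Finset.range (n+1), ‖P.coeff i‖, by positivity, fun r hr => ?_⟩
  rw [Polynomial.eval_eq_sum_range' (Nat.lt_succ_of_le h), Finset.sum_mul]
  refine (norm_sum_le _ _).trans (Finset.sum_le_sum fun i hi => ?_)
  rw [norm_mul, norm_pow, Complex.norm_real, Real.norm_of_nonneg (by linarith)]
  gcongr
  · exact Nat.lt_succ_iff.1 (Finset.mem_range.1 hi)

/-- The polynomial `X^m + P`. -/
noncomputable def qpoly (m : ℕ) (b : ℕ → ℂ) : Polynomial ℂ :=
  Polynomial.X ^ m + ∑ j ∈ Finset.Icc 1 (m-1), Polynomial.C (b j) * Polynomial.X ^ (m-j)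

lemma qpoly_eval (m : ℕ) (b : ℕ → ℂ) (w : ℂ) : (qpoly m b).eval w = w^m + Ppoly m b w := by
  simp [qpoly, Ppoly, Polynomial.eval_finsetSum]

lemma qpoly_low (m : ℕ) (b : ℕ → ℂ) :
    (∑ j ∈ Finset.Icc 1 (m-1), Polynomial.C (b j) * Polynomial.X ^ (m-j) : Polynomial ℂ).natDegree ≤ m-1 := by
  refine Polynomial.natDegree_sum_le_of_forall_le _ _ fun j hj => ?_
  refine (Polynomial.natDegree_C_mul_X_pow_le _ _).trans ?_
  have := (Finset.mem_Icc.1 hj).1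
  omega

lemma qpoly_deg (m : ℕ) (b : ℕ → ℂ) : (qpoly m b).natDegree ≤ m := by
  refine (Polynomial.natDegree_add_le _ _).trans (max_le (by simp) ((qpoly_low m b).trans (by omega)))

lemma sqrt_re_pos {z : ℂ} (hz : z ≠ 0) : 0 ≤ (z ^ (1/2 : ℂ)).re := by
  rw [Complex.cpow_def_of_ne_zero hz, Complex.exp_re]
  refine mul_nonneg (Real.exp_pos _).le (Real.cos_nonneg_of_mem_Icc ?_)
  have e : (Complex.log z * (1/2)).im = Complex.arg z / 2 := by
    have : (1/2 : ℂ) = ((1/2 : ℝ) : ℂ) := by push_cast; rfl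
    rw [this, Complex.im_mul_ofReal, Complex.log_im]; ring
  rw [e]
  have h1 := Complex.neg_pi_lt_arg z
  have h2 := Complex.arg_le_pi z
  constructor <;> linarith

lemma sqrt_sq (z : ℂ) : (z ^ (1/2 : ℂ))^2 = z := by
  rw [← Complex.cpow_nat_mul]; norm_num

/-- WKB data -/
structure WKB (q : ℂ → ℂ) (h : ℝ → ℝ) (R K : ℝ) (p p' φ : ℝ → ℂ) : Prop where
  hR : 1 ≤ R
  hK : 1 ≤ K
  dp : ∀ r, R ≤ r → HasDerivAt p (p' r) r
  eps : ∀ r, R ≤ r → ‖p r ^2 - p' r - q r‖ ≤ K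
  re1 : ∀ r, R ≤ r → 1 ≤ (p r).re
  reh : ∀ r, R ≤ r → h r ≤ 4 * (p r).re
  le : ∀ r, R ≤ r → ‖p r‖ ≤ 3 * h r
  dle : ∀ r, R ≤ r → ‖p' r‖ ≤ ‖p r‖
  dφ : ∀ r, R ≤ r → HasDerivAt φ (-(p r) * φ r) r
  φne : ∀ r, φ r ≠ 0
  φle : ∀ r, R ≤ r → ‖φ r‖ ≤ 1
  φlim : Tendsto φ atTop (nhds 0)
  qre : ∀ r : ℝ, R ≤ r → r^2 / 2 ≤ (q r).re
  hq : ∀ r : ℝ, 0 ≤ r → ‖q r‖ ≤ K * (1 + (h r)^2)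
  h1 : ∀ r : ℝ, R ≤ r → 1 ≤ h r

lemma exists_phi (R : ℝ) (p p' : ℝ → ℂ) (dp : ∀ r, R ≤ r → HasDerivAt p (p' r) r)
    (re1 : ∀ r, R ≤ r → 1 ≤ (p r).re) : ∃ φ : ℝ → ℂ,
    (∀ r, R ≤ r → HasDerivAt φ (-(p r) * φ r) r) ∧ (∀ r, φ r ≠ 0) ∧
    (∀ r, R ≤ r → ‖φ r‖ ≤ 1) ∧ Tendsto φ atTop (nhds 0) := by
  have cont : Continuous (fun r => p (max r R)) := by
    rw [continuous_iff_continuousAt]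
    intro r
    exact ContinuousAt.comp (f := fun r => max r R) (g := p) (dp _ (le_max_right _ _)).continuousAt
      (by fun_prop)
  set φ : ℝ → ℂ := fun r => Complex.exp (-∫ s in R..r, p (max s R)) with hφ
  have dφ : ∀ r, R ≤ r → HasDerivAt φ (-(p r) * φ r) r := by
    intro r hr
    have := (intervalIntegral.integral_hasDerivAt_right (cont.intervalIntegrable R r)
      (cont.stronglyMeasurableAtFilter _ _) cont.continuousAt)
    rw [max_eq_left hr] at this
    have := this.neg.cexp
    rw [mul_comm] at this
    exact this
  have hR0 : ‖φ R‖ = 1 := by simp [hφ]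
  have bd : ∀ r, R ≤ r → ‖φ r‖^2 ≤ Real.exp (2*(R-r)) := by
    intro r hr
    have hd : ∀ t, R ≤ t → HasDerivAt (fun t => ‖φ t‖^2 * Real.exp (2*(t-R)))
        (2 * (starRingEnd ℂ (φ t) * (-(p t) * φ t)).re * Real.exp (2*(t-R))
          + ‖φ t‖^2 * (Real.exp (2*(t-R)) * 2)) t := by
      intro t ht
      have e : HasDerivAt (fun t : ℝ => Real.exp (2*(t-R))) (Real.exp (2*(t-R)) * 2) t := by
        have := (((hasDerivAt_id t).sub_const R).const_mul 2).exp
        simpa using this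
      exact (hasDerivAt_normSq (dφ t ht)).mul e
    have anti : AntitoneOn (fun t => ‖φ t‖^2 * Real.exp (2*(t-R))) (Ici R) := by
      refine antitoneOn_of_deriv_nonpos (convex_Ici R) (fun t ht => (hd t ht).continuousAt.continuousWithinAt)
        (fun t ht => (hd t (interior_subset ht)).differentiableAt.differentiableWithinAt) fun t ht => ?_
      have ht' := interior_subset ht
      rw [(hd t ht').deriv]
      have cc : (starRingEnd ℂ (φ t) * (-(p t) * φ t)).re = -(p t).re * ‖φ t‖^2 := by
        have : starRingEnd ℂ (φ t) * (-(p t) * φ t) = (-(p t)) * (φ t * starRingEnd ℂ (φ t)) := by ring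
        rw [this, Complex.mul_conj, Complex.normSq_eq_norm_sq, Complex.re_mul_ofReal, Complex.neg_re]
      rw [cc]
      have h1 := re1 t ht'
      have h2 : 0 ≤ ‖φ t‖^2 * Real.exp (2*(t-R)) := by positivity
      nlinarith [mul_nonneg h2 (sub_nonneg.2 h1)]
    have := anti (a := R) (by simp) (b := r) hr hr
    simp only [hR0, sub_self, mul_zero, Real.exp_zero, mul_one, one_pow] at this
    have e : Real.exp (2*(R-r)) = (Real.exp (2*(r-R)))⁻¹ := by rw [← Real.exp_neg]; congr 1; ring
    rw [e, ← one_div, le_div_iff₀ (Real.exp_pos _)]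
    exact this
  refine ⟨φ, dφ, fun r => Complex.exp_ne_zero _, fun r hr => ?_, ?_⟩
  · have h1 := bd r hr
    have h2 : Real.exp (2*(R-r)) ≤ 1 := Real.exp_le_one_iff.2 (by linarith)
    nlinarith [norm_nonneg (φ r)]
  · rw [tendsto_zero_iff_norm_tendsto_zero]
    have t1 : Tendsto (fun r : ℝ => Real.exp (R-r)) atTop (nhds 0) := by
      refine Real.tendsto_exp_atBot.comp ?_
      exact tendsto_atBot_add_const_left atTop R tendsto_neg_atTop_atBot
    refine squeeze_zero' (Eventually.of_forall fun r => norm_nonneg _) ?_ t1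
    filter_upwards [eventually_ge_atTop R] with r hr
    have := bd r hr
    have e : Real.exp (2*(R-r)) = Real.exp (R-r) ^2 := by rw [← Real.exp_nat_mul]; norm_num
    rw [e] at this
    exact (pow_le_pow_iff_left₀ (norm_nonneg _) (Real.exp_pos _).le two_ne_zero).1 this


lemma exists_wkb (m : ℕ) (hm : 3 ≤ m) (b : ℕ → ℂ) : ∃ (R K : ℝ) (p p' φ : ℝ → ℂ),
    WKB (fun w => w^m + Ppoly m b w) (fun r => r^((m:ℝ)/2)) R K p p' φ := by
  obtain ⟨K0, hK0, bK0⟩ := poly_bound _ _ (qpoly_low m b)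
  obtain ⟨K1, hK1, bK1⟩ := poly_bound _ _ ((Polynomial.natDegree_derivative_le (qpoly m b)).trans
    (Nat.sub_le_sub_right (qpoly_deg m b) 1))
  obtain ⟨K2, hK2, bK2⟩ := poly_bound _ _ ((Polynomial.natDegree_derivative_le (qpoly m b).derivative).trans
    (Nat.sub_le_sub_right ((Polynomial.natDegree_derivative_le (qpoly m b)).trans
    (Nat.sub_le_sub_right (qpoly_deg m b) 1)) 1))
  set Q := qpoly m b with hQ
  set q : ℝ → ℂ := fun r => Q.eval (r:ℂ) with hq
  set q1 : ℝ → ℂ := fun r => Q.derivative.eval (r:ℂ) with hq1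
  set q2 : ℝ → ℂ := fun r => Q.derivative.derivative.eval (r:ℂ) with hq2
  have dq : ∀ r, HasDerivAt q (q1 r) r := fun r => (Q.hasDerivAt (r:ℂ)).comp_ofReal
  have dq1 : ∀ r, HasDerivAt q1 (q2 r) r := fun r => (Q.derivative.hasDerivAt (r:ℂ)).comp_ofReal
  set h : ℝ → ℝ := fun r => r^((m:ℝ)/2) with hh
  have hsq : ∀ r : ℝ, 0 ≤ r → h r ^ 2 = r^m := fun r hr => by
    rw [hh]; simp only
    rw [← Real.rpow_natCast, ← Real.rpow_mul hr, ← Real.rpow_natCast]; congr 1; push_cast; ring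
  have hge : ∀ r : ℝ, 1 ≤ r → r ≤ h r := fun r hr => by
    rw [hh]; simp only
    conv_lhs => rw [← Real.rpow_one r]
    refine Real.rpow_le_rpow_of_exponent_le hr ?_
    have : (3:ℝ) ≤ m := by exact_mod_cast hm
    linarith
  obtain ⟨R, hR1, hR2, hR3, hR4⟩ : ∃ R : ℝ, 4 ≤ R ∧ 2*K0 ≤ R ∧ 2*K1 ≤ R ∧ 16*(K1 + K2 + K1^2) ≤ R :=
    ⟨4 + 2*K0 + 2*K1 + 16*(K1 + K2 + K1^2), by nlinarith [sq_nonneg K1], by nlinarith [sq_nonneg K1],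
      by nlinarith [sq_nonneg K1], by nlinarith [sq_nonneg K1]⟩
  have qeval : ∀ r : ℝ, q r = (r:ℂ)^m +
      (∑ j ∈ Finset.Icc 1 (m-1), Polynomial.C (b j) * Polynomial.X ^ (m-j) : Polynomial ℂ).eval (r:ℂ) := by
    intro r; simp [hq, hQ, qpoly]
  have qm : ∀ r : ℝ, R ≤ r → ‖q r - (r:ℂ)^m‖ ≤ r^m / 2 := by
    intro r hr
    rw [qeval, add_sub_cancel_left]
    refine (bK0 r (by linarith)).trans ?_
    have : r^m = r^(m-1) * r := by rw [← pow_succ]; congr 1; omega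
    rw [this]
    have : 0 ≤ r^(m-1) := pow_nonneg (by linarith) _
    nlinarith [mul_nonneg this (show 0 ≤ r - 2*K0 by linarith)]
  have rmpos : ∀ r : ℝ, R ≤ r → 0 < r^m := fun r hr => pow_pos (by linarith) _
  have qre : ∀ r : ℝ, R ≤ r → r^m / 2 ≤ (q r).re := by
    intro r hr
    have h1 := (Complex.abs_re_le_norm _).trans (qm r hr)
    rw [Complex.sub_re, ← Complex.ofReal_pow, Complex.ofReal_re] at h1
    have := (abs_le.1 h1).1
    linarith
  have qle : ∀ r : ℝ, R ≤ r → ‖q r‖ ≤ 2 * r^m := by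
    intro r hr
    have h1 := qm r hr
    have h2 : ‖q r‖ ≤ ‖q r - (r:ℂ)^m‖ + ‖(r:ℂ)^m‖ := by
      simpa using norm_add_le (q r - (r:ℂ)^m) ((r:ℂ)^m)
    rw [norm_pow, Complex.norm_real, Real.norm_of_nonneg (show 0 ≤ r by linarith)] at h2
    have := rmpos r hr
    linarith
  have qge : ∀ r : ℝ, R ≤ r → r^m / 2 ≤ ‖q r‖ := fun r hr => (qre r hr).trans (Complex.re_le_norm _)
  have qne : ∀ r : ℝ, R ≤ r → q r ≠ 0 := fun r hr h0 => by
    have h1 := qge r hr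
    rw [h0, norm_zero] at h1
    have := rmpos r hr
    linarith
  set σ : ℝ → ℂ := fun r => (q r)^(1/2 : ℂ) with hσ
  have σsq : ∀ r, σ r ^ 2 = q r := fun r => sqrt_sq _
  have σre0 : ∀ r : ℝ, R ≤ r → 0 ≤ (σ r).re := fun r hr => sqrt_re_pos (qne r hr)
  have σn : ∀ r, ‖σ r‖^2 = ‖q r‖ := fun r => by rw [← norm_pow, σsq]
  have hpos : ∀ r : ℝ, R ≤ r → 4 ≤ h r := fun r hr => by
    have := hge r (by linarith); linarith
  have σre : ∀ r : ℝ, R ≤ r → h r / 2 ≤ (σ r).re := by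
    intro r hr
    have e1 : (σ r).re * (σ r).re - (σ r).im * (σ r).im = (q r).re := by
      rw [← σsq, sq, Complex.mul_re]
    have h1 := qre r hr
    have h2 := hsq r (by linarith)
    have h3 : (h r / 2)^2 ≤ (σ r).re^2 := by nlinarith [mul_self_nonneg (σ r).im, rmpos r hr]
    exact (pow_le_pow_iff_left₀ (by have := hpos r hr; positivity) (σre0 r hr) two_ne_zero).1 h3
  have σle : ∀ r : ℝ, R ≤ r → ‖σ r‖ ≤ 2 * h r := by
    intro r hr
    have h2 := hsq r (by linarith)
    have h3 : ‖σ r‖^2 ≤ (2 * h r)^2 := by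
      rw [σn]; nlinarith [qle r hr, rmpos r hr]
    exact (pow_le_pow_iff_left₀ (norm_nonneg _) (by have := hpos r hr; positivity) two_ne_zero).1 h3
  have σge : ∀ r : ℝ, R ≤ r → h r / 2 ≤ ‖σ r‖ := fun r hr => (σre r hr).trans (Complex.re_le_norm _)
  have σne : ∀ r : ℝ, R ≤ r → σ r ≠ 0 := fun r hr h0 => by
    have h1 := σge r hr
    rw [h0, norm_zero] at h1
    have := hpos r hr
    linarith
  have dσ : ∀ r : ℝ, R ≤ r → HasDerivAt σ (q1 r / (2 * σ r)) r := by
    intro r hr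
    have hs : q r ∈ Complex.slitPlane := Or.inl (by have := qre r hr; have := rmpos r hr; linarith)
    have h1 : HasDerivAt (fun z : ℂ => z ^ (1/2:ℂ)) ((1/2:ℂ) * (q r)^((1/2:ℂ) - 1) * 1) (q r) :=
      (hasDerivAt_id (q r)).cpow_const hs
    have := HasDerivAt.comp (𝕜 := ℝ) (𝕜' := ℂ) r h1 (dq r)
    convert! this using 1
    rw [Complex.cpow_sub _ _ (qne r hr), Complex.cpow_one]
    change _ = 1/2 * (σ r / q r) * 1 * q1 r
    have := σne r hr
    have := qne r hr
    rw [← σsq r]; field_simp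
  -- logarithmic derivative
  have lq : ∀ r : ℝ, R ≤ r → ‖q1 r / q r‖ ≤ 2 * K1 / r := by
    intro r hr
    have hr0 : 0 < r := by linarith
    rw [norm_div, div_le_div_iff₀ (norm_pos_iff.2 (qne r hr)) hr0]
    have h1 := bK1 r (by linarith)
    have h2 := qge r hr
    have e : r^m = r^(m-1) * r := by rw [← pow_succ]; congr 1; omega
    calc ‖q1 r‖ * r ≤ K1 * r^(m-1) * r := by gcongr
      _ = 2 * K1 * (r^m/2) := by rw [e]; ring
      _ ≤ 2 * K1 * ‖q r‖ := by gcongr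
  have lq2 : ∀ r : ℝ, R ≤ r → ‖q2 r / q r‖ ≤ 2 * K2 := by
    intro r hr
    have hr0 : 0 < r := by linarith
    rw [norm_div, div_le_iff₀ (norm_pos_iff.2 (qne r hr))]
    have h1 := bK2 r (by linarith)
    have h2 := qge r hr
    calc ‖q2 r‖ ≤ K2 * r^(m-1-1) := h1
      _ ≤ K2 * r^m := by refine mul_le_mul_of_nonneg_left (pow_le_pow_right₀ (by linarith) (by omega)) hK2
      _ = 2 * K2 * (r^m/2) := by ring
      _ ≤ 2 * K2 * ‖q r‖ := by gcongr
  have lq1' : ∀ r : ℝ, R ≤ r → ‖q1 r / q r‖ ≤ 1 := by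
    intro r hr
    refine (lq r hr).trans ?_
    rw [div_le_one (by linarith)]; linarith
  have lqK : ∀ r : ℝ, R ≤ r → ‖q1 r / q r‖ ≤ 1/8 := by
    intro r hr
    refine (lq r hr).trans ?_
    rw [div_le_iff₀ (by linarith)]; nlinarith [sq_nonneg K1]
  set p : ℝ → ℂ := fun r => σ r + q1 r / q r / 4 with hp
  set p' : ℝ → ℂ := fun r => q1 r / (2 * σ r) + ((q2 r * q r - q1 r * q1 r) / q r ^ 2) / 4 with hp'
  have dp : ∀ r, R ≤ r → HasDerivAt p (p' r) r := fun r hr =>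
    (dσ r hr).add (((dq1 r).div (dq r) (qne r hr)).div_const 4)
  have pre : ∀ r, R ≤ r → h r / 4 ≤ (p r).re := by
    intro r hr
    have h1 : (p r).re = (σ r).re + (q1 r / q r / 4).re := by rw [hp]; simp
    have h2 := (Complex.abs_re_le_norm (q1 r / q r / 4))
    have h3 : ‖q1 r / q r / 4‖ ≤ 1 := by
      rw [norm_div]; norm_num; have := lq1' r hr; rw [norm_div] at this; linarith
    have h4 := (abs_le.1 (h2.trans h3)).1
    have := σre r hr
    have := hpos r hr
    linarith
  have ple : ∀ r, R ≤ r → ‖p r‖ ≤ 3 * h r := by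
    intro r hr
    have h3 : ‖q1 r / q r / 4‖ ≤ 1 := by
      rw [norm_div]; norm_num; have := lq1' r hr; rw [norm_div] at this; linarith
    have h4 : ‖p r‖ ≤ ‖σ r‖ + ‖q1 r / q r / 4‖ := norm_add_le _ _
    have := σle r hr
    have := hpos r hr
    linarith
  have pdle : ∀ r, R ≤ r → ‖p' r‖ ≤ ‖p r‖ := by
    intro r hr
    refine le_trans ?_ ((pre r hr).trans (Complex.re_le_norm _))
    have e : p' r = (q1 r / q r) * σ r / 2 + (q2 r / q r - (q1 r / q r)^2)/4 := by
      rw [hp']; simp only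
      have := σne r hr
      have := qne r hr
      rw [← σsq r]
      field_simp
    have x1 := lqK r hr
    have x2 := lq2 r hr
    have x3 := σle r hr
    have x4 := hpos r hr
    have x5 : R ≤ h r := hr.trans (hge r (by linarith))
    have y1 : ‖(q1 r / q r) * σ r / 2‖ ≤ h r / 8 := by
      rw [norm_div, norm_mul]; norm_num
      rw [norm_div] at x1
      have : ‖q1 r‖ / ‖q r‖ * ‖σ r‖ ≤ 1/8 * (2 * h r) := by gcongr
      linarith
    have y2 : ‖(q2 r / q r - (q1 r / q r)^2)/4‖ ≤ h r / 8 := by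
      have : ‖q2 r / q r - (q1 r / q r)^2‖ ≤ 2 * K2 + (1/8)^2 := by
        refine (norm_sub_le _ _).trans ?_
        rw [norm_pow]
        gcongr
      rw [norm_div]
      have e4 : ‖(4:ℂ)‖ = 4 := by simp
      rw [e4]
      nlinarith [sq_nonneg K1]
    rw [e]
    refine (norm_add_le _ _).trans ?_
    linarith
  have peps : ∀ r, R ≤ r → ‖p r ^2 - p' r - q r‖ ≤ 1 + K2 := by
    intro r hr
    have e : p r ^2 - p' r - q r = 5/16 * (q1 r / q r)^2 - q2 r / q r / 4 := by
      rw [hp', hp]; simp only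
      have := σne r hr
      have := qne r hr
      rw [← σsq r]
      field_simp
      ring
    have x1 := lqK r hr
    have x2 := lq2 r hr
    rw [e]
    refine (norm_sub_le _ _).trans ?_
    rw [norm_mul, norm_pow, norm_div _ (4:ℂ)]
    have e4 : ‖(4:ℂ)‖ = 4 := by simp
    have e5 : ‖(5/16:ℂ)‖ = 5/16 := by simp
    rw [e4, e5]
    have : ‖q1 r / q r‖^2 ≤ (1/8)^2 := by gcongr
    linarith
  obtain ⟨φ, hφ1, hφ2, hφ3, hφ4⟩ := exists_phi R p p' dp (fun r hr => by
    have := pre r hr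
    have := hpos r hr
    linarith)
  obtain ⟨K3, hK3, bK3⟩ := poly_bound _ _ (qpoly_deg m b)
  obtain ⟨K4, bK4⟩ := (isCompact_Icc (a := (0:ℝ)) (b := 1)).exists_bound_of_continuousOn (f := q)
    (fun r _ => (dq r).continuousAt.continuousWithinAt)
  refine ⟨R, 1 + K2 + K3 + |K4|, p, p', φ, ⟨by linarith, by linarith [abs_nonneg K4], dp, fun r hr => ?_, fun r hr => ?_,
    fun r hr => ?_, ple, pdle, hφ1, hφ2, hφ3, hφ4, fun r hr => ?_, fun r hr => ?_, fun r hr => ?_⟩⟩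
  · have := peps r hr
    simp only [hq, hQ, qpoly_eval] at this
    refine this.trans ?_
    linarith [abs_nonneg K4]
  · have := pre r hr
    have := hpos r hr
    linarith
  · have := pre r hr
    linarith
  · have h1 := qre r hr
    simp only [hq, hQ, qpoly_eval] at h1
    refine le_trans ?_ h1
    have : r^2 ≤ r^m := pow_le_pow_right₀ (by linarith) (by omega)
    linarith
  · change ‖_‖ ≤ _ * (1 + (h r)^2)
    rw [hsq r hr]
    have e : (r:ℂ)^m + Ppoly m b r = q r := by simp only [hq, hQ, qpoly_eval]
    change ‖(r:ℂ)^m + Ppoly m b r‖ ≤ _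
    rw [e]
    have hrm : 0 ≤ r^m := by positivity
    rcases le_total r 1 with h1 | h1
    · refine (bK4 r ⟨hr, h1⟩).trans ((le_abs_self _).trans ?_)
      nlinarith [abs_nonneg K4]
    · refine (bK3 r h1).trans ?_
      nlinarith [abs_nonneg K4]
  · have := hpos r hr
    change 1 ≤ h r
    linarith


noncomputable def wB (p φ : ℝ → ℂ) (G : ℂ → ℂ) (r : ℝ) : ℂ := (deriv G r + p r * G r) / (2 * p r * φ r)
noncomputable def wA (p φ : ℝ → ℂ) (G : ℂ → ℂ) (r : ℝ) : ℂ := G r / φ r - wB p φ G r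
noncomputable def wU (p φ : ℝ → ℂ) (G : ℂ → ℂ) (t r : ℝ) : ℝ :=
  ‖wA p φ G r - t‖^2 + ‖wB p φ G r‖^2 + t^2

lemma WKB.pne {q : ℂ → ℂ} {h : ℝ → ℝ} {R K : ℝ} {p p' φ : ℝ → ℂ} (H : WKB q h R K p p' φ)
    {r : ℝ} (hr : R ≤ r) : p r ≠ 0 := fun h0 => by
  have := H.re1 r hr
  rw [h0, Complex.zero_re] at this
  linarith

lemma WKB.G_eq {q : ℂ → ℂ} {h : ℝ → ℝ} {R K : ℝ} {p p' φ : ℝ → ℂ} (H : WKB q h R K p p' φ)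
    (G : ℂ → ℂ) {r : ℝ} (hr : R ≤ r) : G r = φ r * (wA p φ G r + wB p φ G r) ∧
      deriv G r = φ r * p r * (wB p φ G r - wA p φ G r) := by
  have h1 := H.pne hr
  have h2 := H.φne r
  constructor
  · rw [wA]; field_simp; ring
  · rw [wA, wB]; field_simp; ring

lemma WKB.dB {q : ℂ → ℂ} {h : ℝ → ℝ} {R K : ℝ} {p p' φ : ℝ → ℂ} (H : WKB q h R K p p' φ)
    {μ : ℂ} {G : ℂ → ℂ} (hG : IsSol (fun w => q w + μ) G) {r : ℝ} (hr : R ≤ r) :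
    HasDerivAt (wB p φ G) (2 * p r * wB p φ G r - (p r ^2 - p' r - q r - μ) * (wA p φ G r + wB p φ G r)/(2 * p r)
      - wB p φ G r * (p' r / p r)) r := by
  have h1 := H.pne hr
  have h2 := H.φne r
  have hN : HasDerivAt (fun r : ℝ => deriv G r + p r * G r) ((q r + μ) * G r + (p' r * G r + p r * deriv G r)) r :=
    (hG.real2 r).add ((H.dp r hr).mul (hG.real1 r))
  have hD : HasDerivAt (fun r : ℝ => 2 * p r * φ r) (2 * p' r * φ r + 2 * p r * (-(p r) * φ r)) r :=
    ((H.dp r hr).const_mul 2).mul (H.dφ r hr)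
  have := hN.div hD (mul_ne_zero (mul_ne_zero two_ne_zero h1) h2)
  convert! this using 1
  rw [wA, wB]; field_simp; ring

lemma WKB.dA {q : ℂ → ℂ} {h : ℝ → ℝ} {R K : ℝ} {p p' φ : ℝ → ℂ} (H : WKB q h R K p p' φ)
    {μ : ℂ} {G : ℂ → ℂ} (hG : IsSol (fun w => q w + μ) G) {r : ℝ} (hr : R ≤ r) :
    HasDerivAt (wA p φ G) ((p r ^2 - p' r - q r - μ) * (wA p φ G r + wB p φ G r)/(2 * p r)
      + wB p φ G r * (p' r / p r)) r := by
  have h1 := H.pne hr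
  have h2 := H.φne r
  have := ((hG.real1 r).div (H.dφ r hr) h2).sub (H.dB hG hr)
  convert! this using 1
  rw [wA, wB]; field_simp; ring

lemma wU_alg (x y t P k e n : ℝ) (hx : 0 ≤ x) (hy : 0 ≤ y) (hP : 1 ≤ P) (he : e ≤ 1) (he0 : 0 ≤ e)
    (hn : 0 ≤ n) (hk : 1/P + 3*n ≤ k) (ht : 0 ≤ t) :
    -k * (x^2+y^2+t^2) ≤ 4*P*y^2 - 2*e*y^2 - 2*x*y*e - (x+y)*(x+y+t)*n := by
  have h1 : 2*x*y ≤ P*y^2 + x^2*(1/P) := by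
    have : 0 ≤ P*(y - x/P)^2 := by positivity
    have e : P*(y - x/P)^2 = P*y^2 + x^2*(1/P) - 2*x*y := by
      have : P ≠ 0 := by linarith
      field_simp; ring
    linarith
  have h2 : 2*x*y*e ≤ 2*x*y := by nlinarith [mul_nonneg hx hy]
  have h3 : 2*e*y^2 ≤ 2*P*y^2 := by nlinarith [sq_nonneg y]
  have h4 : (x+y)*(x+y+t) ≤ 3*(x^2+y^2+t^2) := by nlinarith [sq_nonneg (x-y), sq_nonneg (x+y-t), sq_nonneg t]
  have h5 : (x+y)*(x+y+t)*n ≤ 3*(x^2+y^2+t^2)*n := by gcongr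
  have h6 : (1/P + 3*n)*(x^2+y^2+t^2) ≤ k*(x^2+y^2+t^2) := by gcongr
  have h7 : x^2*(1/P) ≤ (x^2+y^2+t^2)*(1/P) := by
    have : 0 ≤ 1/P := by positivity
    gcongr; nlinarith [sq_nonneg y, sq_nonneg t]
  nlinarith [mul_nonneg (show 0 ≤ P by linarith) (sq_nonneg y)]

lemma WKB.U_mono {q : ℂ → ℂ} {h : ℝ → ℝ} {R K : ℝ} {p p' φ : ℝ → ℂ} (H : WKB q h R K p p' φ)
    {μ : ℂ} {G : ℂ → ℂ} (hG : IsSol (fun w => q w + μ) G) {κ : ℝ → ℝ}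
    (dκ : ∀ r, R ≤ r → HasDerivAt κ (-(1/h r)) r) {t : ℝ} (ht : 0 ≤ t) {r N : ℝ} (hr : R ≤ r) (hrN : r ≤ N) :
    wU p φ G t r ≤ wU p φ G t N * Real.exp (16*K*(1+‖μ‖) * (κ r - κ N)) := by
  set k := 16*K*(1+‖μ‖) with hk
  have dU : ∀ r, R ≤ r → HasDerivAt (wU p φ G t) (2 * (starRingEnd ℂ (wA p φ G r - t) *
      ((p r ^2 - p' r - q r - μ) * (wA p φ G r + wB p φ G r)/(2 * p r) + wB p φ G r * (p' r / p r))).re +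
      2 * (starRingEnd ℂ (wB p φ G r) * (2 * p r * wB p φ G r - (p r ^2 - p' r - q r - μ) * (wA p φ G r + wB p φ G r)/(2 * p r)
      - wB p φ G r * (p' r / p r))).re) r := fun r hr =>
    ((hasDerivAt_normSq ((H.dA hG hr).sub_const _)).add (hasDerivAt_normSq (H.dB hG hr))).add_const _
  have dE : ∀ r, R ≤ r → HasDerivAt (fun r => wU p φ G t r * Real.exp (-(k * κ r)))
    (_ * Real.exp (-(k * κ r)) + wU p φ G t r * (Real.exp (-(k * κ r)) * (-(k * (-(1/h r)))))) r := fun r hr =>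
    (dU r hr).mul ((((dκ r hr).const_mul k).neg).exp)
  have mono : MonotoneOn (fun r => wU p φ G t r * Real.exp (-(k * κ r))) (Ici R) := by
    refine monotoneOn_of_deriv_nonneg (convex_Ici R) (fun t ht => (dE t ht).continuousAt.continuousWithinAt)
      (fun t ht => (dE t (interior_subset ht)).differentiableAt.differentiableWithinAt) fun r hr' => ?_
    have hr : R ≤ r := interior_subset hr'
    rw [(dE r hr).deriv]
    set A := wA p φ G r with hA
    set B := wB p φ G r with hB
    set ε := p r ^2 - p' r - q r - μ with hε
    have hP := H.re1 r hr
    have hh := H.h1 r hr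
    have hp0 := H.pne hr
    have hPh := H.reh r hr
    have hpn : (p r).re ≤ ‖p r‖ := Complex.re_le_norm _
    have hεn : ‖ε‖ ≤ K + ‖μ‖ := (norm_sub_le _ _).trans (by gcongr; exact H.eps r hr)
    have he : ‖p' r / p r‖ ≤ 1 := by
      rw [norm_div, div_le_one (by linarith)]; exact H.dle r hr
    have alg := wU_alg ‖A - t‖ ‖B‖ t (p r).re (k / h r) ‖p' r / p r‖ (‖ε‖/‖p r‖) (norm_nonneg _) (norm_nonneg _)
      hP he (norm_nonneg _) (by positivity) (by
        have a1 : 1/(p r).re ≤ 4 / h r := by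
          rw [div_le_div_iff₀ (by linarith) (by linarith)]; linarith
        have a2 : ‖ε‖/‖p r‖ ≤ 4*(K+‖μ‖)/h r := by
          rw [div_le_div_iff₀ (by linarith) (by linarith)]
          calc ‖ε‖ * h r ≤ (K+‖μ‖) * (4 * ‖p r‖) := by
                have hKm : 0 ≤ K + ‖μ‖ := (norm_nonneg _).trans hεn
                exact mul_le_mul hεn (by linarith) (by linarith) hKm
            _ = _ := by ring
        have a3 : 4 / h r + 3*(4*(K+‖μ‖)/h r) = (4 + 12*(K+‖μ‖))/h r := by ring
        have a4 : (4 + 12*(K+‖μ‖))/h r ≤ k / h r := by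
          gcongr
          have := H.hK
          rw [hk]; nlinarith [norm_nonneg μ]
        linarith) ht
    have nA : ‖A + B‖ ≤ ‖A - t‖ + ‖B‖ + t := by
      have : A + B = (A - t) + B + t := by ring
      rw [this]
      refine (norm_add_le _ _).trans (add_le_add (norm_add_le _ _) ?_)
      rw [Complex.norm_real, Real.norm_of_nonneg ht]
    have f1 : ‖ε * (A + B)/(2 * p r)‖ ≤ (‖A - t‖ + ‖B‖ + t) * (‖ε‖/‖p r‖) / 2 := by
      rw [norm_div, norm_mul, norm_mul]
      have : ‖(2:ℂ)‖ = 2 := by simp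
      rw [this]
      have hpp : 0 < ‖p r‖ := by linarith
      have e : ‖ε‖ * ‖A+B‖ / (2 * ‖p r‖) = ‖A+B‖ * (‖ε‖/‖p r‖) / 2 := by field_simp
      rw [e]; gcongr
    have g1 := neg_le_re_conj_mul (A - t) (ε * (A + B)/(2 * p r))
    have g2 := neg_le_re_conj_mul (A - t) (B * (p' r / p r))
    have g3 := re_conj_mul_le B (ε * (A + B)/(2 * p r))
    have g4 := re_conj_mul_le B (B * (p' r / p r))
    have g5 : (starRingEnd ℂ B * (2 * p r * B)).re = 2 * (p r).re * ‖B‖^2 := by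
      have : starRingEnd ℂ B * (2 * p r * B) = (2 * p r) * (B * starRingEnd ℂ B) := by ring
      rw [this, Complex.mul_conj, Complex.normSq_eq_norm_sq, Complex.re_mul_ofReal]; simp
    have e1 : (starRingEnd ℂ (A - t) * (ε * (A + B)/(2 * p r) + B * (p' r / p r))).re =
      (starRingEnd ℂ (A - t) * (ε * (A + B)/(2 * p r))).re + (starRingEnd ℂ (A - t) * (B * (p' r / p r))).re := by
      rw [mul_add, Complex.add_re]
    have e2 : (starRingEnd ℂ B * (2 * p r * B - ε * (A + B)/(2 * p r) - B * (p' r / p r))).re =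
      (starRingEnd ℂ B * (2 * p r * B)).re - (starRingEnd ℂ B * (ε * (A + B)/(2 * p r))).re
       - (starRingEnd ℂ B * (B * (p' r / p r))).re := by
      rw [mul_sub, mul_sub, Complex.sub_re, Complex.sub_re]
    rw [e1, e2, g5]
    have k1 : ‖A - t‖ * ‖ε * (A + B)/(2 * p r)‖ ≤ ‖A - t‖ * ((‖A - t‖ + ‖B‖ + t) * (‖ε‖/‖p r‖) / 2) := by gcongr
    have k2 : ‖B‖ * ‖ε * (A + B)/(2 * p r)‖ ≤ ‖B‖ * ((‖A - t‖ + ‖B‖ + t) * (‖ε‖/‖p r‖) / 2) := by gcongr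
    rw [norm_mul B] at g2 g4
    have hUe : wU p φ G t r = ‖A - t‖^2 + ‖B‖^2 + t^2 := rfl
    have key : 0 ≤ (2 * ((starRingEnd ℂ (A - t) * (ε * (A + B)/(2 * p r))).re + (starRingEnd ℂ (A - t) * (B * (p' r / p r))).re)
      + 2 * (2 * (p r).re * ‖B‖^2 - (starRingEnd ℂ B * (ε * (A + B)/(2 * p r))).re
       - (starRingEnd ℂ B * (B * (p' r / p r))).re)) + wU p φ G t r * (k / h r) := by
      rw [hUe]
      nlinarith
    have := mul_nonneg key (Real.exp_pos (-(k * κ r))).le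
    have e3 : -(k * (-(1/h r))) = k / h r := by ring
    rw [e3]
    linarith
  have := mono (a := r) hr (b := N) (hr.trans hrN) hrN
  simp only at this
  have e : Real.exp (k * (κ r - κ N)) = Real.exp (-(k * κ N)) / Real.exp (-(k * κ r)) := by
    rw [← Real.exp_sub]; congr 1; ring
  rw [e, ← mul_div_assoc, le_div_iff₀ (Real.exp_pos _)]
  exact this


lemma exists_fund (m : ℕ) (b : ℕ → ℂ) (v0 v1 : ℂ) : ∃ v : ℂ → ℂ → ℂ,
    (∀ μ, IsSol (fun w => w^m + Ppoly m b w + μ) (v μ)) ∧ (∀ μ, v μ 0 = v0) ∧ (∀ μ, deriv (v μ) 0 = v1) ∧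
    (∀ w, Differentiable ℂ fun μ => v μ w) ∧ (∀ w, Differentiable ℂ fun μ => deriv (v μ) w) := by
  obtain ⟨v, h1, h2, h3, h4, h5, h6⟩ := exists_entire_sol (fun i => (qpoly m b).coeff i) (m+1) (Nat.succ_pos _)
    (fun i hi => Polynomial.coeff_eq_zero_of_natDegree_lt (lt_of_le_of_lt (qpoly_deg m b) hi)) v0 v1
  refine ⟨v, fun μ => ⟨h1 μ, fun w => ?_⟩, h3, h4, h5, h6⟩
  rw [h2, ← Polynomial.eval_eq_sum_range' (Nat.lt_succ_of_le (qpoly_deg m b)), qpoly_eval]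

/-- bounds on `[0, r1]` from the WKB energy at `r1` -/
lemma WKB.bound0 {q : ℂ → ℂ} {h : ℝ → ℝ} {R K : ℝ} {p p' φ : ℝ → ℂ} (H : WKB q h R K p p' φ)
    {μ : ℂ} {G : ℂ → ℂ} (hG : IsSol (fun w => q w + μ) G) {r1 M : ℝ} (hr1 : R ≤ r1) (hM : 1 ≤ M)
    (hq : ∀ r : ℝ, 0 ≤ r → r ≤ r1 → ‖q r + μ‖ ≤ M^2) {r : ℝ} (hr : 0 ≤ r) (hrr : r ≤ r1) :
    ‖deriv G r‖^2 + ‖G r‖^2 ≤ 2 * (‖p r1‖^2 + M^2) * wU p φ G 0 r1 * Real.exp (2 * M * r1) := by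
  have h1 := crude_gronwall hG M r1 (by linarith) hq r hr hrr
  obtain ⟨e1, e2⟩ := H.G_eq G hr1
  set A := wA p φ G r1
  set B := wB p φ G r1
  have hU : wU p φ G 0 r1 = ‖A‖^2 + ‖B‖^2 := by simp [wU, A, B]
  have hφ := H.φle r1 hr1
  have hsum : (‖A‖+‖B‖)^2 ≤ 2 * (‖A‖^2+‖B‖^2) := by nlinarith [sq_nonneg (‖A‖-‖B‖)]
  have n1 : ‖G r1‖^2 ≤ 2 * (‖A‖^2+‖B‖^2) := by
    refine le_trans ?_ hsum
    gcongr
    rw [e1, norm_mul]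
    calc _ ≤ 1 * (‖A‖ + ‖B‖) := by gcongr; exact norm_add_le _ _
      _ = _ := one_mul _
  have n2 : ‖deriv G r1‖^2 ≤ ‖p r1‖^2 * (2 * (‖A‖^2+‖B‖^2)) := by
    have : ‖deriv G r1‖ ≤ ‖p r1‖ * (‖A‖ + ‖B‖) := by
      rw [e2, norm_mul, norm_mul]
      calc _ ≤ 1 * ‖p r1‖ * (‖B‖ + ‖A‖) := by gcongr; exact norm_sub_le _ _
        _ = _ := by ring
    calc _ ≤ (‖p r1‖ * (‖A‖ + ‖B‖))^2 := by gcongr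
      _ = ‖p r1‖^2 * (‖A‖ + ‖B‖)^2 := by ring
      _ ≤ _ := by gcongr
  have hM2 : 1 ≤ M^2 := by nlinarith
  rw [hU]
  calc ‖deriv G r‖^2 + ‖G r‖^2 ≤ ‖deriv G r‖^2 + M^2 * ‖G r‖^2 := by nlinarith [sq_nonneg ‖G r‖]
    _ ≤ _ := h1
    _ ≤ (‖p r1‖^2 * (2 * (‖A‖^2+‖B‖^2)) + M^2 * (2 * (‖A‖^2+‖B‖^2))) * Real.exp (2 * M * r1) := by
      gcongr
      linarith
    _ = _ := by ring

lemma wB_sub (p φ : ℝ → ℂ) {G1 G2 G : ℂ → ℂ} {r : ℝ} (h1 : G r = G1 r - G2 r)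
    (h2 : deriv G r = deriv G1 r - deriv G2 r) : wB p φ G r = wB p φ G1 r - wB p φ G2 r := by
  rw [wB, wB, wB, h1, h2]; ring

lemma wA_sub (p φ : ℝ → ℂ) {G1 G2 G : ℂ → ℂ} {r : ℝ} (h1 : G r = G1 r - G2 r)
    (h2 : deriv G r = deriv G1 r - deriv G2 r) : wA p φ G r = wA p φ G1 r - wA p φ G2 r := by
  rw [wA, wA, wA, wB_sub p φ h1 h2, h1]; ring

lemma kappa_props (m : ℕ) (hm : 3 ≤ m) : ∃ α : ℝ, 0 < α ∧ α = (m:ℝ)/2 - 1 ∧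
    (∀ r : ℝ, 0 < r → HasDerivAt (fun r : ℝ => r^(-α)/α) (-(1/r^((m:ℝ)/2))) r) ∧
    (∀ r : ℝ, 0 < r → 0 ≤ r^(-α)/α) ∧ Tendsto (fun r : ℝ => r^(-α)/α) atTop (nhds 0) := by
  have hm' : (3:ℝ) ≤ m := by exact_mod_cast hm
  have hα : 0 < (m:ℝ)/2 - 1 := by linarith
  refine ⟨(m:ℝ)/2 - 1, hα, rfl, fun r hr => ?_, fun r hr => by positivity, ?_⟩
  · have := (Real.hasDerivAt_rpow_const (x := r) (p := -((m:ℝ)/2 - 1)) (Or.inl hr.ne')).div_const ((m:ℝ)/2 - 1)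
    convert! this using 1
    have e : -((m:ℝ)/2 - 1) - 1 = -((m:ℝ)/2) := by ring
    rw [e, Real.rpow_neg hr.le, neg_mul, neg_div, mul_div_right_comm, div_self hα.ne', one_mul, one_div]
  · have := (tendsto_rpow_neg_atTop hα).div_const ((m:ℝ)/2 - 1)
    simpa using this

/-- the approximating solutions and their energies -/
lemma WKB.approx {q : ℂ → ℂ} {h : ℝ → ℝ} {R K : ℝ} {p p' φ : ℝ → ℂ} (H : WKB q h R K p p' φ)
    {C S : ℂ → ℂ → ℂ} (hC : ∀ μ, IsSol (fun w => q w + μ) (C μ)) (hS : ∀ μ, IsSol (fun w => q w + μ) (S μ))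
    (c0 : ∀ μ, C μ 0 = 1) (c1 : ∀ μ, deriv (C μ) 0 = 0) (s0 : ∀ μ, S μ 0 = 0) (s1 : ∀ μ, deriv (S μ) 0 = 1)
    (cd : ∀ w, Differentiable ℂ fun μ => C μ w) (cd' : ∀ w, Differentiable ℂ fun μ => deriv (C μ) w)
    (sd : ∀ w, Differentiable ℂ fun μ => S μ w) (sd' : ∀ w, Differentiable ℂ fun μ => deriv (S μ) w)
    {κ : ℝ → ℝ} (dκ : ∀ r, R ≤ r → HasDerivAt κ (-(1/h r)) r) (κ0 : ∀ r, R ≤ r → 0 ≤ κ r)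
    (N : ℝ) (hN : R ≤ N) : ∃ X Y : ℂ → ℂ, Differentiable ℂ X ∧ Differentiable ℂ Y ∧
    (∀ μ, wA p φ (fun w => X μ * C μ w + Y μ * S μ w) N = 1) ∧
    (∀ μ, wB p φ (fun w => X μ * C μ w + Y μ * S μ w) N = 0) ∧
    (∀ μ r, R ≤ r → r ≤ N → wU p φ (fun w => X μ * C μ w + Y μ * S μ w) 1 r
      ≤ Real.exp (16*K*(1+‖μ‖) * κ r)) := by
  have hp0 := H.pne hN
  have hφ0 := H.φne N
  set X : ℂ → ℂ := fun μ => φ N * deriv (S μ) N + p N * φ N * S μ N with hX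
  set Y : ℂ → ℂ := fun μ => -(p N * φ N) * C μ N - φ N * deriv (C μ) N with hY
  have hW : ∀ μ, C μ N * deriv (S μ) N - deriv (C μ) N * S μ N = 1 := fun μ => by
    rw [(hC μ).wronsk (hS μ), c0, c1, s0, s1]; ring
  have v0 : ∀ μ, X μ * C μ N + Y μ * S μ N = φ N := fun μ => by
    simp only [hX, hY]; linear_combination φ N * hW μ
  have v1 : ∀ μ, X μ * deriv (C μ) N + Y μ * deriv (S μ) N = -(p N * φ N) := fun μ => by
    simp only [hX, hY]; linear_combination -(p N * φ N) * hW μ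
  have hB : ∀ μ, wB p φ (fun w => X μ * C μ w + Y μ * S μ w) N = 0 := by
    intro μ
    rw [wB, ((hC μ).lin (hS μ) (X μ) (Y μ)).2, v0, v1]; simp
  have hA : ∀ μ, wA p φ (fun w => X μ * C μ w + Y μ * S μ w) N = 1 := by
    intro μ
    rw [wA, hB, v0]; simp [hφ0]
  refine ⟨X, Y, ?_, ?_, hA, hB, ?_⟩
  · exact ((sd' N).const_mul _).add ((sd N).const_mul _)
  · exact ((cd N).const_mul _).sub ((cd' N).const_mul _)
  · intro μ r hr hrN
    have h1 := H.U_mono ((hC μ).lin (hS μ) (X μ) (Y μ)).1 dκ zero_le_one hr hrN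
    have h2 : wU p φ (fun w => X μ * C μ w + Y μ * S μ w) 1 N = 1 := by
      rw [wU, hA, hB]; simp
    rw [h2, one_mul] at h1
    refine h1.trans (Real.exp_le_exp.2 ?_)
    have := κ0 N hN
    have := H.hK
    have : 0 ≤ 16*K*(1+‖μ‖) := by positivity
    nlinarith


lemma entire_limit (X : ℕ → ℂ → ℂ) (hX : ∀ n, Differentiable ℂ (X n))
    (hc : ∀ ρ : ℝ, 0 < ρ → ∃ e : ℕ → ℝ, Tendsto e atTop (nhds 0) ∧ ∀ μ : ℂ, ‖μ‖ ≤ ρ → ∀ n k, n ≤ k →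
      ‖X k μ - X n μ‖ ≤ e n) :
    ∃ Y : ℂ → ℂ, Differentiable ℂ Y ∧ ∀ μ, Tendsto (fun n => X n μ) atTop (nhds (Y μ)) := by
  have hcs : ∀ μ, ∃ y, Tendsto (fun n => X n μ) atTop (nhds y) := by
    intro μ
    obtain ⟨e, he, hb⟩ := hc (‖μ‖+1) (by positivity)
    refine cauchySeq_tendsto_of_complete (cauchySeq_of_le_tendsto_0' e (fun n k hnk => ?_) he)
    rw [dist_comm, dist_eq_norm]
    exact hb μ (by linarith) n k hnk
  choose Y hY using hcs
  refine ⟨Y, ?_, hY⟩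
  rw [← differentiableOn_univ]
  refine TendstoLocallyUniformlyOn.differentiableOn (F := X) (φ := atTop) ?_
    (Eventually.of_forall fun n => (hX n).differentiableOn) isOpen_univ
  rw [tendstoLocallyUniformlyOn_univ, Metric.tendstoLocallyUniformly_iff]
  intro ε hε x
  obtain ⟨e, he, hb⟩ := hc (‖x‖+1) (by positivity)
  refine ⟨Metric.ball x 1, Metric.ball_mem_nhds _ one_pos, ?_⟩
  filter_upwards [he.eventually (gt_mem_nhds hε)] with n hn μ hμ
  have hμ' : ‖μ‖ ≤ ‖x‖+1 := by
    have h1 : ‖μ - x‖ < 1 := by rwa [← dist_eq_norm]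
    have : ‖μ‖ ≤ ‖μ - x‖ + ‖x‖ := by simpa using norm_add_le (μ - x) x
    linarith
  rw [dist_eq_norm]
  refine lt_of_le_of_lt ?_ hn
  refine le_of_tendsto (((hY μ).sub_const (X n μ)).norm) ?_
  filter_upwards [eventually_ge_atTop n] with k hk
  exact hb μ hμ' n k hk

lemma WKB.limit {q : ℂ → ℂ} {h : ℝ → ℝ} {R K : ℝ} {p p' φ : ℝ → ℂ} (H : WKB q h R K p p' φ)
    {C S : ℂ → ℂ → ℂ} (hC : ∀ μ, IsSol (fun w => q w + μ) (C μ)) (hS : ∀ μ, IsSol (fun w => q w + μ) (S μ))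
    (c0 : ∀ μ, C μ 0 = 1) (c1 : ∀ μ, deriv (C μ) 0 = 0) (s0 : ∀ μ, S μ 0 = 0) (s1 : ∀ μ, deriv (S μ) 0 = 1)
    (cd : ∀ w, Differentiable ℂ fun μ => C μ w) (cd' : ∀ w, Differentiable ℂ fun μ => deriv (C μ) w)
    (sd : ∀ w, Differentiable ℂ fun μ => S μ w) (sd' : ∀ w, Differentiable ℂ fun μ => deriv (S μ) w)
    {κ : ℝ → ℝ} (dκ : ∀ r, R ≤ r → HasDerivAt κ (-(1/h r)) r) (κ0 : ∀ r, R ≤ r → 0 ≤ κ r)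
    (κlim : Tendsto κ atTop (nhds 0)) (hcont : ContinuousOn h (Icc 0 R)) :
    ∃ X Y : ℂ → ℂ, Differentiable ℂ X ∧ Differentiable ℂ Y ∧
    (∀ μ r, R ≤ r → wU p φ (fun w => X μ * C μ w + Y μ * S μ w) 1 r
      ≤ Real.exp (16*K*(1+‖μ‖) * κ r)) := by
  have hR := H.hR
  have hK := H.hK
  have hNn : ∀ n : ℕ, R ≤ R + n := fun n => by have : (0:ℝ) ≤ n := n.cast_nonneg; linarith
  have := fun n : ℕ => H.approx hC hS c0 c1 s0 s1 cd cd' sd sd' dκ κ0 (R + n) (hNn n)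
  choose X Y dX dY hA hB hU using this
  have hqb : ∃ Kq : ℝ, ∀ r : ℝ, 0 ≤ r → r ≤ R → ‖q r‖ ≤ Kq := by
    obtain ⟨Kh, hKh⟩ := isCompact_Icc.exists_bound_of_continuousOn hcont
    refine ⟨K * (1 + Kh^2), fun r hr hrR => (H.hq r hr).trans ?_⟩
    have := hKh r ⟨hr, hrR⟩
    rw [Real.norm_eq_abs] at this
    have h2 : (h r)^2 ≤ Kh^2 := by rw [← sq_abs]; gcongr
    gcongr
  obtain ⟨Kq, hKq⟩ := hqb
  have hKq0 : 0 ≤ Kq := (norm_nonneg _).trans (hKq 0 le_rfl (by linarith))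
  have cau : ∀ ρ : ℝ, 0 < ρ → ∃ e : ℕ → ℝ, Tendsto e atTop (nhds 0) ∧ ∀ μ : ℂ, ‖μ‖ ≤ ρ → ∀ n k, n ≤ k →
      ‖X k μ - X n μ‖ ≤ e n ∧ ‖Y k μ - Y n μ‖ ≤ e n := by
    intro ρ hρ
    set M := 1 + Kq + ρ with hM
    set c0' := 2 * (‖p R‖^2 + M^2) * Real.exp (2*M*R) * Real.exp (16*K*(1+ρ) * κ R) with hc0'
    refine ⟨fun n => Real.sqrt (c0' * (Real.exp (16*K*(1+ρ) * κ (R+n)) - 1)), ?_, ?_⟩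
    · have t1 : Tendsto (fun n : ℕ => κ (R + n)) atTop (nhds 0) :=
        κlim.comp (tendsto_atTop_add_const_left _ R tendsto_natCast_atTop_atTop)
      have t2 : Tendsto (fun n : ℕ => c0' * (Real.exp (16*K*(1+ρ) * κ (R+n)) - 1)) atTop
          (nhds (c0' * (Real.exp (16*K*(1+ρ) * 0) - 1))) :=
        ((((Real.continuous_exp.tendsto _).comp (t1.const_mul _))).sub_const 1).const_mul c0'
      have t3 := (Real.continuous_sqrt.tendsto _).comp t2
      simpa [Function.comp_def] using t3
    · intro μ hμ n k hnk
      set D : ℂ → ℂ := fun w => (X k μ - X n μ) * C μ w + (Y k μ - Y n μ) * S μ w with hD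
      have hDs := (hC μ).lin (hS μ) (X k μ - X n μ) (Y k μ - Y n μ)
      have lk := (hC μ).lin (hS μ) (X k μ) (Y k μ)
      have ln := (hC μ).lin (hS μ) (X n μ) (Y n μ)
      have hnk' : R + (n:ℝ) ≤ R + (k:ℝ) := by gcongr
      have d1 : D (R + n : ℝ) = (fun w => X k μ * C μ w + Y k μ * S μ w) (R + n : ℝ)
        - (fun w => X n μ * C μ w + Y n μ * S μ w) (R + n : ℝ) := by simp only [hD]; ring
      have d2 : deriv D (R + n : ℝ) = deriv (fun w => X k μ * C μ w + Y k μ * S μ w) (R + n : ℝ)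
        - deriv (fun w => X n μ * C μ w + Y n μ * S μ w) (R + n : ℝ) := by
        rw [hDs.2, lk.2, ln.2]; ring
      have u1 : wU p φ D 0 (R+n) ≤ Real.exp (16*K*(1+‖μ‖) * κ (R+n)) - 1 := by
        have := hU k μ (R+n) (hNn n) hnk'
        rw [wU] at this
        rw [wU, wA_sub p φ d1 d2, wB_sub p φ d1 d2, hA, hB]
        simp only [Complex.ofReal_zero, Complex.ofReal_one, sub_zero] at this ⊢
        linarith
      have u2 := H.U_mono hDs.1 dκ le_rfl le_rfl (hNn n)
      have mono1 : ∀ x, 0 ≤ x → Real.exp (16*K*(1+‖μ‖) * x) ≤ Real.exp (16*K*(1+ρ) * x) := fun x hx => by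
        gcongr
      have u3 : wU p φ D 0 R ≤ (Real.exp (16*K*(1+ρ) * κ (R+n)) - 1) * Real.exp (16*K*(1+ρ) * κ R) := by
        refine u2.trans ?_
        have a1 := mono1 (κ (R+n)) (κ0 _ (hNn n))
        have a2 := mono1 (κ R) (κ0 _ le_rfl)
        have a3 : Real.exp (16*K*(1+‖μ‖) * (κ R - κ (R+n))) ≤ Real.exp (16*K*(1+‖μ‖) * κ R) := by
          have := κ0 _ (hNn n)
          gcongr; linarith
        refine mul_le_mul (by linarith) (a3.trans a2) (Real.exp_pos _).le ?_
        have : 0 ≤ 16*K*(1+ρ) * κ (R+n) := mul_nonneg (by positivity) (κ0 _ (hNn n))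
        linarith [Real.one_le_exp this]
      have u4 := H.bound0 hDs.1 (r1 := R) (M := M) le_rfl (by linarith) (fun r hr hrR => by
        refine (norm_add_le _ _).trans ?_
        have := hKq r hr hrR
        nlinarith) (r := 0) le_rfl (by linarith)
      simp only [Complex.ofReal_zero] at u4
      rw [hDs.2, c0, c1, s0, s1] at u4
      simp only [mul_zero, mul_one, add_zero, zero_add] at u4
      have u5 : ‖Y k μ - Y n μ‖^2 + ‖X k μ - X n μ‖^2 ≤ c0' * (Real.exp (16*K*(1+ρ) * κ (R+n)) - 1) := by
        refine u4.trans ?_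
        calc _ ≤ 2 * (‖p R‖^2 + M^2) * ((Real.exp (16*K*(1+ρ) * κ (R+n)) - 1) * Real.exp (16*K*(1+ρ) * κ R))
              * Real.exp (2*M*R) := by gcongr
          _ = _ := by rw [hc0']; ring
      constructor <;> refine Real.le_sqrt_of_sq_le ?_ <;>
        nlinarith [sq_nonneg ‖Y k μ - Y n μ‖, sq_nonneg ‖X k μ - X n μ‖]
  obtain ⟨X0, dX0, tX⟩ := entire_limit X dX (fun ρ hρ => by
    obtain ⟨e, he, hb⟩ := cau ρ hρ
    exact ⟨e, he, fun μ hμ n k hnk => (hb μ hμ n k hnk).1⟩)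
  obtain ⟨Y0, dY0, tY⟩ := entire_limit Y dY (fun ρ hρ => by
    obtain ⟨e, he, hb⟩ := cau ρ hρ
    exact ⟨e, he, fun μ hμ n k hnk => (hb μ hμ n k hnk).2⟩)
  refine ⟨X0, Y0, dX0, dY0, fun μ r hr => ?_⟩
  have t0 : Tendsto (fun n => X n μ * C μ r + Y n μ * S μ r) atTop (nhds (X0 μ * C μ r + Y0 μ * S μ r)) :=
    ((tX μ).mul_const _).add ((tY μ).mul_const _)
  have t1 : Tendsto (fun n => deriv (fun w => X n μ * C μ w + Y n μ * S μ w) r) atTop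
      (nhds (deriv (fun w => X0 μ * C μ w + Y0 μ * S μ w) r)) := by
    simp only [((hC μ).lin (hS μ) _ _).2]
    exact ((tX μ).mul_const _).add ((tY μ).mul_const _)
  have tB : Tendsto (fun n => wB p φ (fun w => X n μ * C μ w + Y n μ * S μ w) r) atTop
      (nhds (wB p φ (fun w => X0 μ * C μ w + Y0 μ * S μ w) r)) := by
    unfold wB
    exact (t1.add (t0.const_mul _)).div_const _
  have tA : Tendsto (fun n => wA p φ (fun w => X n μ * C μ w + Y n μ * S μ w) r) atTop
      (nhds (wA p φ (fun w => X0 μ * C μ w + Y0 μ * S μ w) r)) := by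
    unfold wA
    exact (t0.div_const _).sub tB
  have tU : Tendsto (fun n => wU p φ (fun w => X n μ * C μ w + Y n μ * S μ w) 1 r) atTop
      (nhds (wU p φ (fun w => X0 μ * C μ w + Y0 μ * S μ w) 1 r)) := by
    unfold wU
    exact (((tA.sub_const _).norm.pow 2).add (tB.norm.pow 2)).add_const _
  refine le_of_tendsto tU ?_
  have : ∀ᶠ n : ℕ in atTop, r ≤ R + n := by
    have := (tendsto_atTop_add_const_left atTop R (tendsto_natCast_atTop_atTop (R := ℝ)))
    exact this.eventually_ge_atTop r
  filter_upwards [this] with n hn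
  exact hU n μ r hr hn


set_option maxHeartbeats 2000000 in
theorem half_line (m : ℕ) (hm : 3 ≤ m) (b : ℕ → ℂ) : ∃ (g : ℂ → ℂ → ℂ) (B : ℝ), 0 ≤ B ∧
    (∀ μ, IsSol (fun w => w^m + Ppoly m b w + μ) (g μ)) ∧
    (∀ w, Differentiable ℂ fun μ => g μ w) ∧ (∀ w, Differentiable ℂ fun μ => deriv (g μ) w) ∧
    (∀ μ, ∀ r : ℝ, 0 ≤ r → r ≤ 1 → ‖g μ r‖ ≤ Real.exp (B * (1+‖μ‖)^(1/2 + 1/(m:ℝ))) ∧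
      ‖deriv (g μ) r‖ ≤ Real.exp (B * (1+‖μ‖)^(1/2 + 1/(m:ℝ)))) ∧
    (∀ μ, Tendsto (fun r : ℝ => g μ r) atTop (nhds 0)) ∧ (∀ μ, ∃ w, g μ w ≠ 0) ∧
    (∀ μ : ℂ, ∃ R : ℝ, ∀ r : ℝ, R ≤ r → 0 ≤ ((r:ℂ)^m + Ppoly m b r + μ).re) := by
  obtain ⟨R, K, p, p', φ, H⟩ := exists_wkb m hm b
  obtain ⟨C, hC, c0, c1, cd, cd'⟩ := exists_fund m b 1 0
  obtain ⟨S, hS, s0, s1, sd, sd'⟩ := exists_fund m b 0 1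
  obtain ⟨α, hα, hαe, dκ, κ0, κlim⟩ := kappa_props m hm
  have hR := H.hR
  have hK := H.hK
  have hm' : (3:ℝ) ≤ m := by exact_mod_cast hm
  obtain ⟨X, Y, dX, dY, hU⟩ := H.limit hC hS c0 c1 s0 s1 cd cd' sd sd' (fun r hr => dκ r (by linarith))
    (fun r hr => κ0 r (by linarith)) κlim
    (fun r _ => (Real.continuousAt_rpow_const r _ (Or.inr (by positivity))).continuousWithinAt)
  set g : ℂ → ℂ → ℂ := fun μ w => X μ * C μ w + Y μ * S μ w with hg
  have hgs : ∀ μ, IsSol (fun w => w^m + Ppoly m b w + μ) (g μ) := fun μ => ((hC μ).lin (hS μ) _ _).1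
  have hgd : ∀ μ w, deriv (g μ) w = X μ * deriv (C μ) w + Y μ * deriv (S μ) w := fun μ =>
    ((hC μ).lin (hS μ) _ _).2
  set k : ℂ → ℝ := fun μ => 16*K*(1+‖μ‖) with hk
  have kpos : ∀ μ, 0 ≤ k μ := fun μ => by simp only [hk]; positivity
  have dec : ∀ μ, Tendsto (fun r : ℝ => g μ r) atTop (nhds 0) := by
    intro μ
    have t1 : Tendsto (fun r : ℝ => Real.exp (k μ * (r^(-α)/α))) atTop (nhds 1) := by
      have := (Real.continuous_exp.tendsto _).comp (κlim.const_mul (k μ))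
      simpa [Function.comp_def] using this
    have e1 := t1.eventually (gt_mem_nhds one_lt_two)
    rw [tendsto_zero_iff_norm_tendsto_zero]
    have t2 : Tendsto (fun r => ‖φ r‖ * 5) atTop (nhds 0) := by
      simpa using H.φlim.norm.mul_const 5
    refine squeeze_zero' (Eventually.of_forall fun r => norm_nonneg _) ?_ t2
    filter_upwards [e1, eventually_ge_atTop R] with r hr1 hr2
    have hu := hU μ r hr2
    rw [(H.G_eq (g μ) hr2).1, norm_mul]
    rw [wU] at hu
    change _ ≤ Real.exp (k μ * _) at hu
    have n1 : ‖wA p φ (g μ) r‖ ≤ ‖wA p φ (g μ) r - (1:ℝ)‖ + 1 := by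
      have := norm_add_le (wA p φ (g μ) r - (1:ℝ)) 1
      simpa using this
    change ‖wA p φ (g μ) r - (1:ℝ)‖^2 + ‖wB p φ (g μ) r‖^2 + 1^2 ≤ _ at hu
    gcongr
    refine (norm_add_le _ _).trans ?_
    have n2 : ‖wA p φ (g μ) r - (1:ℝ)‖ ≤ 2 := by
      nlinarith [sq_nonneg ‖wB p φ (g μ) r‖, norm_nonneg (wA p φ (g μ) r - (1:ℝ))]
    have n3 : ‖wB p φ (g μ) r‖ ≤ 2 := by
      nlinarith [sq_nonneg ‖wA p φ (g μ) r - (1:ℝ)‖, norm_nonneg (wB p φ (g μ) r)]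
    linarith
  have nontriv : ∀ μ, ∃ w, g μ w ≠ 0 := by
    intro μ
    have t1 : Tendsto (fun r : ℝ => Real.exp (k μ * (r^(-α)/α))) atTop (nhds 1) := by
      have := (Real.continuous_exp.tendsto _).comp (κlim.const_mul (k μ))
      simpa [Function.comp_def] using this
    have e1 := t1.eventually (gt_mem_nhds (show (1:ℝ) < 1 + 1/8 by norm_num))
    obtain ⟨r, hr1, hr2⟩ := (e1.and (eventually_ge_atTop R)).exists
    refine ⟨r, ?_⟩
    have hu := hU μ r hr2
    rw [wU] at hu
    change ‖wA p φ (g μ) r - (1:ℝ)‖^2 + ‖wB p φ (g μ) r‖^2 + 1^2 ≤ Real.exp (k μ * _) at hu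
    rw [(H.G_eq (g μ) hr2).1]
    refine mul_ne_zero (H.φne r) fun h0 => ?_
    have n2 : ‖wA p φ (g μ) r - (1:ℝ)‖ < 1/2 := by
      nlinarith [sq_nonneg ‖wB p φ (g μ) r‖, norm_nonneg (wA p φ (g μ) r - (1:ℝ))]
    have n3 : ‖wB p φ (g μ) r‖ < 1/2 := by
      nlinarith [sq_nonneg ‖wA p φ (g μ) r - (1:ℝ)‖, norm_nonneg (wB p φ (g μ) r)]
    have n4 : (-1:ℂ) = (wA p φ (g μ) r - (1:ℝ)) + wB p φ (g μ) r := by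
      push_cast; linear_combination -h0
    have n5 := norm_add_le (wA p φ (g μ) r - (1:ℝ)) (wB p φ (g μ) r)
    rw [← n4, norm_neg, norm_one] at n5
    linarith
  -- growth
  set ρ : ℝ := 1/2 + 1/(m:ℝ) with hρ
  set L := K * (1 + R^m) + 1 with hL
  have hRm : 1 ≤ R^m := one_le_pow₀ hR
  have hL1 : 1 ≤ L := by nlinarith
  set B1 := 4 * (9 * R^m + L) with hB1
  have hB1pos : 0 < B1 := by positivity
  set B2 := B1 + 2 + 16*K/α + 2 * (Real.sqrt L * R) with hB2
  have growth : ∀ μ, ∀ r : ℝ, 0 ≤ r → r ≤ 1 → ‖deriv (g μ) r‖^2 + ‖g μ r‖^2 ≤ Real.exp (B2 * (1+‖μ‖)^ρ) := by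
    intro μ r hr0 hr1
    set Λ := 1 + ‖μ‖ with hΛ
    have hΛ1 : 1 ≤ Λ := by linarith [norm_nonneg μ]
    have hΛ0 : 0 ≤ Λ := by linarith
    set r1 := R * Λ^(1/(m:ℝ)) with hr1d
    have hΛm : 1 ≤ Λ^(1/(m:ℝ)) := Real.one_le_rpow hΛ1 (by positivity)
    have hr1R : R ≤ r1 := by nlinarith
    have hr1Λ : Λ^(1/(m:ℝ)) ≤ r1 := by nlinarith
    have hpow : r1^m = R^m * Λ := by
      rw [hr1d, mul_pow, ← Real.rpow_natCast (Λ^(1/(m:ℝ))), ← Real.rpow_mul hΛ0]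
      have : 1/(m:ℝ) * m = 1 := by field_simp
      rw [this, Real.rpow_one]
    have hsq : ∀ r : ℝ, 0 ≤ r → (r^((m:ℝ)/2))^2 = r^m := fun r hr => by
      rw [← Real.rpow_natCast, ← Real.rpow_mul hr, ← Real.rpow_natCast]; congr 1; push_cast; ring
    set M := Real.sqrt (L * Λ) with hM
    have hM2 : M^2 = L * Λ := Real.sq_sqrt (by positivity)
    have hM1 : 1 ≤ M := Real.one_le_sqrt.2 (by nlinarith)
    have hb := H.bound0 (hgs μ) (r1 := r1) (M := M) hr1R hM1 (fun t ht0 ht1 => by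
      refine (norm_add_le _ _).trans ?_
      have h1 := H.hq t ht0
      rw [hsq t ht0] at h1
      have h2 : t^m ≤ R^m * Λ := by rw [← hpow]; gcongr
      have h3 : K * (1 + t^m) ≤ K * (Λ + R^m * Λ) := by gcongr
      rw [hM2, hL]
      have h4 : ‖μ‖ ≤ Λ := by linarith
      refine (add_le_add (h1.trans h3) h4).trans (le_of_eq ?_)
      ring) hr0 (by linarith)
    refine hb.trans ?_
    have hp : ‖p r1‖^2 ≤ 9 * R^m * Λ := by
      have h1 := H.le r1 hr1R
      have h2 := hsq r1 (by linarith)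
      calc ‖p r1‖^2 ≤ (3 * r1^((m:ℝ)/2))^2 := by gcongr
        _ = 9 * (r1^((m:ℝ)/2))^2 := by ring
        _ = _ := by rw [h2, hpow]; ring
    have hu := hU μ r1 hr1R
    have hu0 : wU p φ (g μ) 0 r1 ≤ 2 * Real.exp (16*K/α * Λ^ρ) := by
      have e1 : wU p φ (g μ) 0 r1 ≤ 2 * wU p φ (g μ) 1 r1 := by
        rw [wU, wU]
        have n1 : ‖wA p φ (g μ) r1‖ ≤ ‖wA p φ (g μ) r1 - (1:ℝ)‖ + 1 := by
          have := norm_add_le (wA p φ (g μ) r1 - (1:ℝ)) 1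
          simpa using this
        have n2 : ‖wA p φ (g μ) r1‖^2 ≤ (‖wA p φ (g μ) r1 - (1:ℝ)‖ + 1)^2 := by gcongr
        simp only [Complex.ofReal_zero, sub_zero]
        nlinarith [sq_nonneg (‖wA p φ (g μ) r1 - (1:ℝ)‖ - 1), sq_nonneg ‖wB p φ (g μ) r1‖]
      refine e1.trans ?_
      gcongr
      refine hu.trans (Real.exp_le_exp.2 ?_)
      have e2 : r1^(-α) ≤ Λ^(-(α/m)) := by
        calc r1^(-α) ≤ (Λ^(1/(m:ℝ)))^(-α) :=
              Real.rpow_le_rpow_of_nonpos (by linarith) hr1Λ (by linarith)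
          _ = Λ^(-(α/m)) := by rw [← Real.rpow_mul hΛ0]; congr 1; ring
      have e3 : Λ * Λ^(-(α/m)) = Λ^ρ := by
        have : Λ * Λ^(-(α/m)) = Λ^(1:ℝ) * Λ^(-(α/m)) := by rw [Real.rpow_one]
        rw [this, ← Real.rpow_add (by linarith)]
        congr 1
        rw [hρ, hαe]; field_simp; ring
      calc 16*K*Λ * (r1^(-α)/α) ≤ 16*K*Λ * (Λ^(-(α/m))/α) := by gcongr
        _ = 16*K/α * (Λ * Λ^(-(α/m))) := by ring
        _ = _ := by rw [e3]
    have hMr : M * r1 = Real.sqrt L * R * Λ^ρ := by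
      rw [hM, Real.sqrt_mul (by linarith), Real.sqrt_eq_rpow Λ, hr1d]
      have : Λ^ρ = Λ^(1/2:ℝ) * Λ^(1/(m:ℝ)) := by rw [hρ, Real.rpow_add (by linarith)]
      rw [this]; ring
    have hΛρ : 1 ≤ Λ^ρ := Real.one_le_rpow hΛ1 (by positivity)
    have hΛe : Λ ≤ Real.exp (2 * Λ^ρ) := by
      have h1 : Λ^(1/2:ℝ) ≤ Λ^ρ := Real.rpow_le_rpow_of_exponent_le hΛ1 (by
        rw [hρ]; have : 0 ≤ 1/(m:ℝ) := by positivity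
        linarith)
      have h2 : Λ^(1/2:ℝ) ≤ Real.exp (Λ^ρ) := by
        have := Real.add_one_le_exp (Λ^ρ); linarith
      have h3 : Λ = (Λ^(1/2:ℝ))^2 := by
        rw [← Real.rpow_natCast, ← Real.rpow_mul hΛ0]; norm_num
      have h4 : Real.exp (2 * Λ^ρ) = (Real.exp (Λ^ρ))^2 := by rw [← Real.exp_nat_mul]; norm_num
      rw [h4]
      conv_lhs => rw [h3]
      gcongr
    have hB1e : B1 ≤ Real.exp (B1 * Λ^ρ) := by
      have h5 := Real.add_one_le_exp (B1 * Λ^ρ)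
      have h6 : B1 * 1 ≤ B1 * Λ^ρ := mul_le_mul_of_nonneg_left hΛρ hB1pos.le
      linarith
    have hU0nn : 0 ≤ wU p φ (g μ) 0 r1 := by rw [wU]; positivity
    calc 2 * (‖p r1‖^2 + M^2) * wU p φ (g μ) 0 r1 * Real.exp (2 * M * r1)
        ≤ 2 * (9 * R^m * Λ + L * Λ) * (2 * Real.exp (16*K/α * Λ^ρ)) * Real.exp (2 * M * r1) := by
          rw [hM2]; gcongr
      _ = B1 * Λ * Real.exp (16*K/α * Λ^ρ) * Real.exp (2 * (M * r1)) := by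
          rw [hB1, mul_assoc 2 M r1]; ring
      _ ≤ Real.exp (B1 * Λ^ρ) * Real.exp (2 * Λ^ρ) * Real.exp (16*K/α * Λ^ρ) * Real.exp (2 * (M * r1)) := by
          gcongr
      _ = Real.exp (B2 * Λ^ρ) := by
          rw [← Real.exp_add, ← Real.exp_add, ← Real.exp_add, hMr, hB2]; congr 1; ring
  have hB2nn : 0 ≤ B2 := by
    have : 0 ≤ 16*K/α := by positivity
    have : 0 ≤ Real.sqrt L * R := by positivity
    linarith
  refine ⟨g, B2, hB2nn, hgs, fun w => (dX.mul (cd w)).add (dY.mul (sd w)), fun w => ?_, fun μ r hr0 hr1 => ?_,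
    dec, nontriv, fun μ => ?_⟩
  · simp only [hgd]
    exact (dX.mul (cd' w)).add (dY.mul (sd' w))
  · have h1 := growth μ r hr0 hr1
    have h2 : 1 ≤ Real.exp (B2 * (1+‖μ‖)^ρ) := Real.one_le_exp (by positivity)
    constructor
    · nlinarith [norm_nonneg (g μ r), sq_nonneg ‖deriv (g μ) r‖]
    · nlinarith [norm_nonneg (deriv (g μ) r), sq_nonneg ‖g μ r‖]
  · refine ⟨max R (2 * (1 + ‖μ‖)), fun r hr => ?_⟩
    have h1 := H.qre r ((le_max_left _ _).trans hr)
    have h2 := (le_max_right _ _).trans hr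
    rw [Complex.add_re]
    have h3 := (abs_le.1 (Complex.abs_re_le_norm μ)).1
    nlinarith [norm_nonneg μ]


/-- rotated coefficients -/
noncomputable def rotC (m : ℕ) (a : ℕ → ℂ) (ω : ℂ) (j : ℕ) : ℂ := a j * ω^(m-j+2)

lemma rot_pot (m : ℕ) (a : ℕ → ℂ) (ω : ℂ) (hω : ω^(m+2) = 1) (w lam : ℂ) :
    w^m + Ppoly m (rotC m a ω) w + ω^2 * lam = ω^2 * ((ω * w)^m + Ppoly m a (ω * w) + lam) := by
  have h1 : ω^2 * (ω * w)^m = w^m := by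
    rw [mul_pow, ← mul_assoc, ← pow_add, add_comm 2 m, hω, one_mul]
  have h2 : Ppoly m (rotC m a ω) w = ω^2 * Ppoly m a (ω * w) := by
    rw [Ppoly, Ppoly, Finset.mul_sum]
    refine Finset.sum_congr rfl fun j _ => ?_
    rw [rotC, pow_add, mul_pow]; ring
  rw [mul_add, mul_add, h1, h2]

lemma IsSol.scale {Q Q2 v : ℂ → ℂ} (hv : IsSol Q v) (ω : ℂ) (hQ : ∀ w, Q2 w = ω^2 * Q (ω * w)) :
    IsSol Q2 (fun w => v (ω * w)) ∧ ∀ w, deriv (fun w => v (ω * w)) w = ω * deriv v (ω * w) := by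
  have hm : ∀ w, HasDerivAt (fun w : ℂ => ω * w) ω w := fun w => by
    simpa using (hasDerivAt_id w).const_mul ω
  have h1 : ∀ w, HasDerivAt (fun w => v (ω * w)) (ω * deriv v (ω * w)) w := fun w => by
    have := (hv.1 (ω * w)).hasDerivAt.comp w (hm w)
    rw [mul_comm] at this
    exact this
  have h1' : ∀ w, deriv (fun w => v (ω * w)) w = ω * deriv v (ω * w) := fun w => (h1 w).deriv
  refine ⟨⟨fun w => (h1 w).differentiableAt, fun w => ?_⟩, h1'⟩
  rw [funext h1']
  have h2 : HasDerivAt (fun w => ω * deriv v (ω * w)) (ω * (deriv (deriv v) (ω * w) * ω)) w :=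
    ((diff_deriv hv.1 (ω * w)).hasDerivAt.comp w (hm w)).const_mul ω
  rw [h2.deriv, hv.2, hQ]; ring

lemma theta_pow (m : ℕ) : (Complex.exp ((2 * Real.pi / ((m:ℝ)+2) : ℝ) * Complex.I))^(m+2) = 1 := by
  rw [← Complex.exp_nat_mul]
  have : ((m+2 : ℕ) : ℂ) * ((2 * Real.pi / ((m:ℝ)+2) : ℝ) * Complex.I) = 2 * Real.pi * Complex.I := by
    have : ((m:ℂ)+2) ≠ 0 := by exact_mod_cast (by omega : m + 2 ≠ 0)
    push_cast; field_simp
  rw [this, Complex.exp_two_pi_mul_I]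

lemma ray_eq (x : ℝ) (r : ℝ) :
    (r:ℂ) * Complex.exp (((-(Real.pi/2) + x : ℝ) : ℂ) * Complex.I) = -Complex.I * (Complex.exp ((x:ℝ) * Complex.I) * r) := by
  have : (((-(Real.pi/2) + x : ℝ) : ℂ) * Complex.I) = -(Real.pi/2 * Complex.I) + x * Complex.I := by
    push_cast; ring
  rw [this, Complex.exp_add, Complex.exp_neg, Complex.exp_pi_div_two_mul_I, Complex.inv_I]; ring

/-- the spectral determinant -/
noncomputable def sdet (ω : ℂ) (g1 g2 : ℂ → ℂ → ℂ) (lam : ℂ) : ℂ :=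
  g1 (ω^2 * lam) 0 * (ω * deriv (g2 (ω⁻¹^2 * lam)) 0) - (ω⁻¹ * deriv (g1 (ω^2 * lam)) 0) * g2 (ω⁻¹^2 * lam) 0

theorem eig_iff (m : ℕ) (a : ℕ → ℂ) (ω : ℂ)
    (hωd : ω = Complex.exp ((2 * Real.pi / ((m:ℝ)+2) : ℝ) * Complex.I))
    (g1 g2 : ℂ → ℂ → ℂ)
    (s1 : ∀ μ, IsSol (fun w => w^m + Ppoly m (rotC m a ω) w + μ) (g1 μ))
    (s2 : ∀ μ, IsSol (fun w => w^m + Ppoly m (rotC m a ω⁻¹) w + μ) (g2 μ))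
    (t1 : ∀ μ, Tendsto (fun r : ℝ => g1 μ r) atTop (nhds 0))
    (t2 : ∀ μ, Tendsto (fun r : ℝ => g2 μ r) atTop (nhds 0))
    (n1 : ∀ μ, ∃ w, g1 μ w ≠ 0) (n2 : ∀ μ, ∃ w, g2 μ w ≠ 0)
    (p1 : ∀ μ : ℂ, ∃ R : ℝ, ∀ r : ℝ, R ≤ r → 0 ≤ ((r:ℂ)^m + Ppoly m (rotC m a ω) r + μ).re)
    (p2 : ∀ μ : ℂ, ∃ R : ℝ, ∀ r : ℝ, R ≤ r → 0 ≤ ((r:ℂ)^m + Ppoly m (rotC m a ω⁻¹) r + μ).re)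
    (lam : ℂ) : IsEigenvalue m a lam ↔ sdet ω g1 g2 lam = 0 := by
  have hω : ω^(m+2) = 1 := by rw [hωd]; exact theta_pow m
  have hω0 : ω ≠ 0 := by rw [hωd]; exact Complex.exp_ne_zero _
  have hω' : ω⁻¹^(m+2) = 1 := by rw [inv_pow, hω, inv_one]
  have hωi : ω⁻¹ = Complex.exp ((-(2 * Real.pi / ((m:ℝ)+2)) : ℝ) * Complex.I) := by
    rw [hωd, ← Complex.exp_neg]; congr 1; push_cast; ring
  set Q : ℂ → ℂ := fun w => w^m + Ppoly m a w + lam with hQ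
  obtain ⟨C, hC, c0, c1, -, -⟩ := exists_fund m a 1 0
  obtain ⟨S, hS, s0, s1', -, -⟩ := exists_fund m a 0 1
  have ex := fun (u : ℂ → ℂ) (hu : IsSol Q u) =>
    IsSol.expand (hC lam) (hS lam) hu (c0 lam) (c1 lam) (s0 lam) (s1' lam)
  set G1 := g1 (ω^2 * lam) with hG1
  set G2 := g2 (ω⁻¹^2 * lam) with hG2
  have f1 := (s1 (ω^2 * lam)).scale (Q2 := Q) ω⁻¹ (fun w => by
    have := rot_pot m a ω hω (ω⁻¹ * w) lam
    rw [← mul_assoc, mul_inv_cancel₀ hω0, one_mul] at this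
    simp only [hQ]
    rw [this, ← mul_assoc, ← mul_pow, inv_mul_cancel₀ hω0]; ring)
  have f2 := (s2 (ω⁻¹^2 * lam)).scale (Q2 := Q) ω (fun w => by
    have := rot_pot m a ω⁻¹ hω' (ω * w) lam
    rw [← mul_assoc, inv_mul_cancel₀ hω0, one_mul] at this
    simp only [hQ]
    rw [this, ← mul_assoc, ← mul_pow, mul_inv_cancel₀ hω0]; ring)
  have hD : sdet ω g1 g2 lam = G1 0 * (ω * deriv G2 0) - (ω⁻¹ * deriv G1 0) * G2 0 := rfl
  constructor
  · rintro ⟨u, hu1, hu2, hu3, hu4, hu5⟩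
    -- transport
    set v : ℂ → ℂ := fun w => u (-Complex.I * w) with hv
    have hus : IsSol (fun z => -(((Complex.I * z)^m + Ppoly m a (Complex.I * z)) + lam)) u :=
      ⟨hu1, fun w => by linear_combination -(hu3 w)⟩
    have hvs := hus.scale (Q2 := Q) (-Complex.I) (fun w => by
      have e : Complex.I * (-Complex.I * w) = w := by
        rw [← mul_assoc, mul_neg, Complex.I_mul_I]; ring
      simp only [hQ]
      rw [e, neg_sq, Complex.I_sq]; ring)
    have V1 := hvs.1.scale ω (fun w => rot_pot m a ω hω w lam)
    have V2 := hvs.1.scale ω⁻¹ (fun w => rot_pot m a ω⁻¹ hω' w lam)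
    obtain ⟨R1, hR1⟩ := p1 (ω^2 * lam)
    obtain ⟨R2, hR2⟩ := p2 (ω⁻¹^2 * lam)
    have w1 := wronsk_zero_of_decay V1.1 (s1 (ω^2 * lam)) R1 hR1 (by
      refine hu4.congr fun r => ?_
      rw [ray_eq, ← hωd]) (t1 _)
    have w2 := wronsk_zero_of_decay V2.1 (s2 (ω⁻¹^2 * lam)) R2 hR2 (by
      refine hu5.congr fun r => ?_
      rw [sub_eq_add_neg, ray_eq, ← hωi]) (t2 _)
    rw [V1.2] at w1
    rw [V2.2] at w2
    change v (ω * 0) * deriv G1 0 - ω * deriv v (ω * 0) * G1 0 = 0 at w1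
    change v (ω⁻¹ * 0) * deriv G2 0 - ω⁻¹ * deriv v (ω⁻¹ * 0) * G2 0 = 0 at w2
    rw [mul_zero] at w1 w2
    have w1' : v 0 * (ω⁻¹ * deriv G1 0) = deriv v 0 * G1 0 := by
      have : ω⁻¹ * ω = 1 := inv_mul_cancel₀ hω0
      linear_combination ω⁻¹ * w1 + deriv v 0 * G1 0 * this
    have w2' : v 0 * (ω * deriv G2 0) = deriv v 0 * G2 0 := by
      have : ω * ω⁻¹ = 1 := mul_inv_cancel₀ hω0
      linear_combination ω * w2 + deriv v 0 * G2 0 * this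
    rw [hD]
    by_contra hne
    have z0 : v 0 = 0 := by
      have : v 0 * (G1 0 * (ω * deriv G2 0) - (ω⁻¹ * deriv G1 0) * G2 0) = 0 := by
        linear_combination G1 0 * w2' - G2 0 * w1'
      exact (mul_eq_zero.1 this).resolve_right hne
    have z1 : deriv v 0 = 0 := by
      have : deriv v 0 * (G1 0 * (ω * deriv G2 0) - (ω⁻¹ * deriv G1 0) * G2 0) = 0 := by
        linear_combination (ω⁻¹ * deriv G1 0) * w2' - (ω * deriv G2 0) * w1'
      exact (mul_eq_zero.1 this).resolve_right hne
    refine hu2 ⟨0, fun z => ?_⟩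
    have := (ex v hvs.1 (Complex.I * z)).1
    rw [z0, z1] at this
    simp only [hv] at this
    rw [← mul_assoc, neg_mul, Complex.I_mul_I] at this
    simpa using this
  · intro hD0
    rw [hD] at hD0
    set F1 : ℂ → ℂ := fun w => G1 (ω⁻¹ * w) with hF1
    set F2 : ℂ → ℂ := fun w => G2 (ω * w) with hF2
    have a0 : F1 0 = G1 0 := by simp [hF1]
    have b0 : F2 0 = G2 0 := by simp [hF2]
    have a1 : deriv F1 0 = ω⁻¹ * deriv G1 0 := by rw [f1.2]; simp [hG1]
    have b1 : deriv F2 0 = ω * deriv G2 0 := by rw [f2.2]; simp [hG2]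
    rw [← a0, ← b0, ← a1, ← b1] at hD0
    obtain ⟨c, hc⟩ : ∃ c : ℂ, ∀ w, F1 w = c * F2 w := by
      have hne : F2 0 ≠ 0 ∨ deriv F2 0 ≠ 0 := by
        by_contra hcon
        push Not at hcon
        obtain ⟨w, hw⟩ := n2 (ω⁻¹^2 * lam)
        apply hw
        have := (ex F2 f2.1 (ω⁻¹ * w)).1
        rw [hcon.1, hcon.2] at this
        simp only [hF2] at this
        rw [← mul_assoc, mul_inv_cancel₀ hω0, one_mul, zero_mul, zero_mul, add_zero] at this
        exact this
      have main : ∀ c, F1 0 = c * F2 0 → deriv F1 0 = c * deriv F2 0 → ∀ w, F1 w = c * F2 w := by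
        intro c e1 e2 w
        rw [(ex F1 f1.1 w).1, (ex F2 f2.1 w).1, e1, e2]; ring
      rcases hne with h | h
      · refine ⟨F1 0 / F2 0, main _ (by field_simp) ?_⟩
        field_simp
        linear_combination -hD0
      · refine ⟨deriv F1 0 / deriv F2 0, main _ ?_ (by field_simp)⟩
        field_simp
        linear_combination hD0
    have hu := f1.1.scale Complex.I (Q2 := fun w => -Q (Complex.I * w)) (fun w => by
      rw [Complex.I_sq]; ring)
    have tend1 : Tendsto (fun r : ℝ => F1 (ω * r)) atTop (nhds 0) := by
      refine (t1 (ω^2 * lam)).congr fun r => ?_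
      simp only [hF1]
      rw [← mul_assoc, inv_mul_cancel₀ hω0, one_mul]
    have tend2 : Tendsto (fun r : ℝ => F1 (ω⁻¹ * r)) atTop (nhds 0) := by
      have := (t2 (ω⁻¹^2 * lam)).const_mul c
      rw [mul_zero] at this
      refine this.congr fun r => ?_
      rw [hc]
      simp only [hF2]
      rw [← mul_assoc ω, mul_inv_cancel₀ hω0, one_mul]
    have Ie : ∀ z : ℂ, Complex.I * (-Complex.I * z) = z := fun z => by
      rw [← mul_assoc, mul_neg, Complex.I_mul_I]; ring
    refine ⟨fun z => F1 (Complex.I * z), hu.1.1, ?_, ?_, ?_, ?_⟩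
    · rintro ⟨c', hc'⟩
      have hz : ∀ w, F1 w = c' := fun w => by
        have : F1 (Complex.I * (-Complex.I * w)) = c' := hc' (-Complex.I * w)
        rwa [Ie] at this
      have : c' = 0 := by
        simp only [hz] at tend1
        exact tendsto_nhds_unique tendsto_const_nhds tend1
      obtain ⟨w, hw⟩ := n1 (ω^2 * lam)
      apply hw
      have h2 := hz (ω * w)
      simp only [hF1] at h2
      rw [← mul_assoc, inv_mul_cancel₀ hω0, one_mul] at h2
      rw [← this, ← h2]
    · intro z
      have := hu.1.2 z
      simp only at this ⊢
      rw [this]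
      simp only [hQ]; ring
    · refine tend1.congr fun r => ?_
      simp only
      rw [ray_eq, Ie, ← hωd]
    · refine tend2.congr fun r => ?_
      simp only
      rw [sub_eq_add_neg, ray_eq, Ie, ← hωi]


lemma ppoly_small (m : ℕ) (hm : 3 ≤ m) (b : ℕ → ℂ) (c : ℝ) (hc : 0 < c) :
    ∃ T : ℝ, 0 ≤ T ∧ ∀ r : ℝ, 0 ≤ r → ‖Ppoly m b r‖ ≤ c * r^m + T := by
  have hcont : Continuous fun r : ℝ => Ppoly m b (r:ℂ) := by
    unfold Ppoly; fun_prop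
  obtain ⟨K, hK0, hK⟩ := poly_bound _ (m-1) (qpoly_low m b)
  have hK' : ∀ r : ℝ, 1 ≤ r → ‖Ppoly m b r‖ ≤ K * r^(m-1) := by
    intro r hr
    have := hK r hr
    simpa [Polynomial.eval_finset_sum, Ppoly] using this
  set T0 : ℝ := max 1 (K / c) with hT0
  obtain ⟨M, hM⟩ := (isCompact_Icc (a := (0:ℝ)) (b := T0)).exists_bound_of_continuousOn hcont.continuousOn
  refine ⟨max M 0, le_max_right _ _, fun r hr => ?_⟩
  rcases le_total r T0 with h | h
  · have := hM r ⟨hr, h⟩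
    have h2 : 0 ≤ c * r^m := by positivity
    linarith [le_max_left M 0]
  · have h1 : 1 ≤ r := (le_max_left _ _).trans h
    have h2 : K ≤ c * r := by
      have := (le_max_right 1 (K/c)).trans h
      rw [div_le_iff₀ hc] at this; linarith
    have h3 : r^m = r * r^(m-1) := by rw [← pow_succ']; congr 1; omega
    have h4 := hK' r h1
    have h5 : K * r^(m-1) ≤ c * r * r^(m-1) := by gcongr
    rw [h3]
    linarith [le_max_right M 0]

lemma side_bound (m : ℕ) (hm : 3 ≤ m) (b : ℕ → ℂ) (c : ℝ) (hc : 0 < c) :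
    ∃ s0 : ℝ, 0 < s0 ∧ ∀ s, s0 ≤ s → ∀ α : ℝ, 2 * c ≤ Real.cos α → ∀ r : ℝ, 0 ≤ r →
      c * s^2 ≤ (Complex.exp ((-α : ℝ) * Complex.I) *
        ((r:ℂ)^m + Ppoly m b r + (s:ℂ)^2 * Complex.exp ((2 * α : ℝ) * Complex.I))).re := by
  obtain ⟨T, hT0, hT⟩ := ppoly_small m hm b c hc
  refine ⟨1 + T / c, by positivity, fun s hs α hα r hr => ?_⟩
  have hs1 : 1 ≤ s := le_trans (by linarith [div_nonneg hT0 hc.le]) hs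
  have hTs : T ≤ c * s^2 := by
    have : T / c ≤ s := by linarith
    rw [div_le_iff₀ hc] at this
    nlinarith
  have e1 : Complex.exp ((-α : ℝ) * Complex.I) * ((s:ℂ)^2 * Complex.exp ((2 * α : ℝ) * Complex.I))
      = ((s^2 : ℝ) : ℂ) * Complex.exp ((α:ℝ) * Complex.I) := by
    rw [mul_left_comm, ← Complex.exp_add]
    push_cast; congr 2; ring
  have e2 : Complex.exp ((-α : ℝ) * Complex.I) * (r:ℂ)^m = ((r^m : ℝ):ℂ) * Complex.exp ((-α : ℝ) * Complex.I) := by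
    push_cast; ring
  rw [mul_add, mul_add, e1, e2, Complex.add_re, Complex.add_re, Complex.re_ofReal_mul,
    Complex.re_ofReal_mul, Complex.exp_ofReal_mul_I_re, Complex.exp_ofReal_mul_I_re, Real.cos_neg]
  have h3 : -(‖Ppoly m b r‖) ≤ (Complex.exp ((-α : ℝ) * Complex.I) * Ppoly m b r).re := by
    have := (abs_le.1 (Complex.abs_re_le_norm (Complex.exp ((-α : ℝ) * Complex.I) * Ppoly m b r))).1
    rwa [norm_mul, Complex.norm_exp_ofReal_mul_I, one_mul] at this
  have h4 := hT r hr
  have h5 : 0 ≤ r^m := by positivity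
  have h6 : r^m * (2*c) ≤ r^m * Real.cos α := by gcongr
  have h7 : s^2 * (2*c) ≤ s^2 * Real.cos α := by gcongr
  nlinarith [mul_nonneg hc.le h5]

/-- the algebraic heart: a determinant is bounded below by the energies. -/
lemma det_lower (τ x x' y y' : ℂ) (J1 J2 : ℝ) (hτ : ‖τ‖ = 1) (hx : x ≠ 0) (hy : y ≠ 0)
    (h1 : J1 = -(τ * (starRingEnd ℂ x * x')).re) (h2 : J2 = (τ * (starRingEnd ℂ y * y')).re)
    (hJ1 : 0 ≤ J1) (hJ2 : 0 ≤ J2) :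
    4 * J1 * J2 ≤ ‖x * y' - x' * y‖^2 := by
  have e : (τ * starRingEnd ℂ x * starRingEnd ℂ y * (x * y' - x' * y)).re = ‖x‖^2 * J2 + ‖y‖^2 * J1 := by
    have : τ * starRingEnd ℂ x * starRingEnd ℂ y * (x * y' - x' * y) =
        ((‖x‖^2 : ℝ):ℂ) * (τ * (starRingEnd ℂ y * y')) - ((‖y‖^2 : ℝ):ℂ) * (τ * (starRingEnd ℂ x * x')) := by
      have a1 := Complex.mul_conj' x
      have a2 := Complex.mul_conj' y
      push_cast
      rw [← a1, ← a2]; ring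
    rw [this, Complex.sub_re, Complex.re_ofReal_mul, Complex.re_ofReal_mul, h1, h2]; ring
  have l : ‖x‖^2 * J2 + ‖y‖^2 * J1 ≤ ‖x‖ * ‖y‖ * ‖x * y' - x' * y‖ := by
    rw [← e]
    refine (Complex.re_le_norm _).trans ?_
    simp only [norm_mul, RCLike.norm_conj, hτ, one_mul]; rfl
  have px : 0 < ‖x‖ := norm_pos_iff.2 hx
  have py : 0 < ‖y‖ := norm_pos_iff.2 hy
  set D := ‖x * y' - x' * y‖
  have hsq : (‖x‖^2 * J2 + ‖y‖^2 * J1)^2 ≤ (‖x‖ * ‖y‖ * D)^2 := by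
    gcongr
  have h4 : (‖x‖*‖y‖)^2 * (4 * J1 * J2) ≤ (‖x‖*‖y‖)^2 * D^2 := by
    nlinarith [sq_nonneg (‖x‖^2 * J2 - ‖y‖^2 * J1)]
  exact le_of_mul_le_mul_left h4 (by positivity)


lemma sin_lower (m : ℕ) (hm : 3 ≤ m) : ∃ c : ℝ, 0 < c ∧ ∀ x : ℝ,
    (2 * Real.pi / ((m:ℝ)+2)) / 4 ≤ x → x ≤ 7 * (2 * Real.pi / ((m:ℝ)+2)) / 4 → 2 * c ≤ Real.sin x := by
  set θ : ℝ := 2 * Real.pi / ((m:ℝ)+2) with hθ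
  have hm' : (3:ℝ) ≤ m := by exact_mod_cast hm
  have hθ0 : 0 < θ := by positivity
  have hθ1 : θ ≤ 2 * Real.pi / 5 := by
    rw [hθ]; gcongr; linarith
  obtain ⟨x0, hx0, hmin⟩ := (isCompact_Icc (a := θ/4) (b := 7*θ/4)).exists_isMinOn
    (nonempty_Icc.2 (by linarith)) Real.continuous_sin.continuousOn
  have hp : 0 < Real.sin x0 := Real.sin_pos_of_pos_of_lt_pi (by linarith [hx0.1])
    (by linarith [hx0.2, Real.pi_pos])
  refine ⟨Real.sin x0 / 2, by linarith, fun x h1 h2 => ?_⟩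
  have := hmin (show x ∈ Icc (θ/4) (7*θ/4) from ⟨h1, h2⟩)
  simp only [mem_setOf_eq] at this
  linarith

set_option maxHeartbeats 1000000 in
theorem good_sector (m : ℕ) (hm : 3 ≤ m) (a : ℕ → ℂ) (ω : ℂ)
    (hωd : ω = Complex.exp ((2 * Real.pi / ((m:ℝ)+2) : ℝ) * Complex.I))
    (g1 g2 : ℂ → ℂ → ℂ)
    (s1 : ∀ μ, IsSol (fun w => w^m + Ppoly m (rotC m a ω) w + μ) (g1 μ))
    (s2 : ∀ μ, IsSol (fun w => w^m + Ppoly m (rotC m a ω⁻¹) w + μ) (g2 μ))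
    (t1 : ∀ μ, Tendsto (fun r : ℝ => g1 μ r) atTop (nhds 0))
    (t2 : ∀ μ, Tendsto (fun r : ℝ => g2 μ r) atTop (nhds 0))
    (n1 : ∀ μ, ∃ w, g1 μ w ≠ 0) (n2 : ∀ μ, ∃ w, g2 μ w ≠ 0)
    (p1 : ∀ μ : ℂ, ∃ R : ℝ, ∀ r : ℝ, R ≤ r → 0 ≤ ((r:ℂ)^m + Ppoly m (rotC m a ω) r + μ).re)
    (p2 : ∀ μ : ℂ, ∃ R : ℝ, ∀ r : ℝ, R ≤ r → 0 ≤ ((r:ℂ)^m + Ppoly m (rotC m a ω⁻¹) r + μ).re) :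
    ∃ c s0 : ℝ, 0 < c ∧ 0 < s0 ∧ ∀ s : ℝ, s0 ≤ s → ∀ γ : ℝ,
      |γ| ≤ 3 * (2 * Real.pi / ((m:ℝ)+2)) / 2 → ∀ lam : ℂ,
      lam = -((s:ℂ)^2 * Complex.exp ((γ:ℝ) * Complex.I)) →
      g1 (ω^2 * lam) 1 * g2 (ω⁻¹^2 * lam) 1 ≠ 0 ∧
      ‖g1 (ω^2 * lam) 1 * g2 (ω⁻¹^2 * lam) 1‖ ≤ Real.exp (-(2*c*s)) * ‖sdet ω g1 g2 lam‖ := by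
  obtain ⟨c, hc, hsin⟩ := sin_lower m hm
  set θ : ℝ := 2 * Real.pi / ((m:ℝ)+2) with hθ
  obtain ⟨s01, hs01, hb1⟩ := side_bound m hm (rotC m a ω) c hc
  obtain ⟨s02, hs02, hb2⟩ := side_bound m hm (rotC m a ω⁻¹) c hc
  refine ⟨c, max (max s01 s02) (1/c), hc, by positivity, fun s hs γ hγ lam hlam => ?_⟩
  have hs1 : s01 ≤ s := (le_max_left _ _).trans ((le_max_left _ _).trans hs)
  have hs2 : s02 ≤ s := (le_max_right _ _).trans ((le_max_left _ _).trans hs)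
  have hcs : 1 ≤ c * s := by
    have := (le_max_right _ _).trans hs
    rw [div_le_iff₀ hc] at this; linarith
  have hspos : 0 < s := hs01.trans_le hs1
  obtain ⟨hγ1, hγ2⟩ := abs_le.1 hγ
  set α : ℝ := θ - Real.pi/2 + γ/2 with hα
  set β : ℝ := -θ + Real.pi/2 + γ/2 with hβ
  have hcα : 2 * c ≤ Real.cos α := by
    have : Real.cos α = Real.sin (θ + γ/2) := by
      rw [hα, ← Real.cos_sub_pi_div_two]; congr 1; ring
    rw [this]; exact hsin _ (by linarith) (by linarith)
  have hcβ : 2 * c ≤ Real.cos β := by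
    have : Real.cos β = Real.sin (θ - γ/2) := by
      rw [hβ, ← Real.cos_pi_div_two_sub]; congr 1; ring
    rw [this]; exact hsin _ (by linarith) (by linarith)
  have hωi : ω⁻¹ = Complex.exp ((-θ : ℝ) * Complex.I) := by
    rw [hωd, ← Complex.exp_neg]; congr 1; push_cast; ring
  have hneg : (-1:ℂ) = Complex.exp (-(Real.pi * Complex.I)) := by
    rw [Complex.exp_neg, Complex.exp_pi_mul_I]; norm_num
  have hneg' : (-1:ℂ) = Complex.exp (Real.pi * Complex.I) := by
    rw [Complex.exp_pi_mul_I]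
  have e1 : ω^2 * lam = (s:ℂ)^2 * Complex.exp ((2 * α : ℝ) * Complex.I) := by
    have : ω^2 * lam = (s:ℂ)^2 * (ω^2 * (-1) * Complex.exp ((γ:ℝ) * Complex.I)) := by rw [hlam]; ring
    rw [this, hneg, hωd, ← Complex.exp_nat_mul, ← Complex.exp_add, ← Complex.exp_add]
    congr 2; rw [hα]; push_cast; ring
  have e2 : ω⁻¹^2 * lam = (s:ℂ)^2 * Complex.exp ((2 * β : ℝ) * Complex.I) := by
    have : ω⁻¹^2 * lam = (s:ℂ)^2 * (ω⁻¹^2 * (-1) * Complex.exp ((γ:ℝ) * Complex.I)) := by rw [hlam]; ring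
    rw [this, hneg', hωi, ← Complex.exp_nat_mul, ← Complex.exp_add, ← Complex.exp_add]
    congr 2; rw [hβ]; push_cast; ring
  obtain ⟨R1, hR1⟩ := p1 (ω^2 * lam)
  obtain ⟨R2, hR2⟩ := p2 (ω⁻¹^2 * lam)
  have q1 : ∀ r : ℝ, 0 ≤ r → c * s^2 ≤ (Complex.exp ((-α : ℝ) * Complex.I) *
      ((r:ℂ)^m + Ppoly m (rotC m a ω) r + ω^2 * lam)).re := by
    intro r hr; rw [e1]; exact hb1 s hs1 α hcα r hr
  have q2 : ∀ r : ℝ, 0 ≤ r → c * s^2 ≤ (Complex.exp ((-β : ℝ) * Complex.I) *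
      ((r:ℂ)^m + Ppoly m (rotC m a ω⁻¹) r + ω⁻¹^2 * lam)).re := by
    intro r hr; rw [e2]; exact hb2 s hs2 β hcβ r hr
  have re1 : c ≤ (Complex.exp ((-α : ℝ) * Complex.I)).re := by
    rw [Complex.exp_ofReal_mul_I_re, Real.cos_neg]; linarith
  have re2 : c ≤ (Complex.exp ((-β : ℝ) * Complex.I)).re := by
    rw [Complex.exp_ofReal_mul_I_re, Real.cos_neg]; linarith
  obtain ⟨A1, -, -, B1⟩ := energy (s1 (ω^2*lam)) R1 hR1 (t1 _) _ (Complex.norm_exp_ofReal_mul_I _) c s hc hspos re1 q1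
  obtain ⟨A2, -, -, B2⟩ := energy (s2 (ω⁻¹^2*lam)) R2 hR2 (t2 _) _ (Complex.norm_exp_ofReal_mul_I _) c s hc hspos re2 q2
  have N1 := energy_ne (s1 (ω^2*lam)) R1 hR1 (t1 _) _ (Complex.norm_exp_ofReal_mul_I _) c s hc hspos re1 q1 (n1 _)
  have N2 := energy_ne (s2 (ω⁻¹^2*lam)) R2 hR2 (t2 _) _ (Complex.norm_exp_ofReal_mul_I _) c s hc hspos re2 q2 (n2 _)
  set G1 := g1 (ω^2 * lam) with hG1
  set G2 := g2 (ω⁻¹^2 * lam) with hG2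
  set J1 := enJ (Complex.exp ((-α : ℝ) * Complex.I)) G1 0 with hJ1
  set J2 := enJ (Complex.exp ((-β : ℝ) * Complex.I)) G2 0 with hJ2
  have P1 : 0 ≤ J1 := A1 0 le_rfl
  have P2 : 0 ≤ J2 := A2 0 le_rfl
  have M10 := N1 0 le_rfl
  have M11 := N1 1 zero_le_one
  have M20 := N2 0 le_rfl
  have M21 := N2 1 zero_le_one
  simp only [Complex.ofReal_zero, Complex.ofReal_one] at M10 M11 M20 M21
  refine ⟨mul_ne_zero M11 M21, ?_⟩
  set τ : ℂ := Complex.exp ((Real.pi/2 - γ/2 : ℝ) * Complex.I) with hτ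
  have k1 : Complex.exp ((-α : ℝ) * Complex.I) = τ * ω⁻¹ := by
    rw [hτ, hωi, ← Complex.exp_add]; congr 1; rw [hα]; push_cast; ring
  have k2 : Complex.exp ((-β : ℝ) * Complex.I) = -(τ * ω) := by
    have : -(τ * ω) = τ * ω * (-1) := by ring
    rw [this, hτ, hωd, hneg, ← Complex.exp_add, ← Complex.exp_add]; congr 1; rw [hβ]; push_cast; ring
  have D := det_lower τ (G1 0) (ω⁻¹ * deriv G1 0) (G2 0) (ω * deriv G2 0) J1 J2
    (Complex.norm_exp_ofReal_mul_I _) M10 M20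
    (by rw [hJ1, enJ, k1, Complex.ofReal_zero]; congr 2; ring)
    (by rw [hJ2, enJ, k2, Complex.ofReal_zero, ← Complex.neg_re]; congr 1; ring) P1 P2
  have hsd : sdet ω g1 g2 lam = G1 0 * (ω * deriv G2 0) - ω⁻¹ * deriv G1 0 * G2 0 := rfl
  rw [← hsd] at D
  have hk : 1 / (c*s) ≤ 1 := by rw [div_le_one (by linarith)]; exact hcs
  have hB1 : ‖G1 1‖^2 ≤ Real.exp (-(2*c*s)) * J1 := by
    refine B1.trans ?_
    have : 1 / (c*s) * Real.exp (-(2*c*s)) ≤ 1 * Real.exp (-(2*c*s)) := by gcongr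
    rw [one_mul] at this
    gcongr
  have hB2 : ‖G2 1‖^2 ≤ Real.exp (-(2*c*s)) * J2 := by
    refine B2.trans ?_
    have : 1 / (c*s) * Real.exp (-(2*c*s)) ≤ 1 * Real.exp (-(2*c*s)) := by gcongr
    rw [one_mul] at this
    gcongr
  have hfin : (‖G1 1‖ * ‖G2 1‖)^2 ≤ (Real.exp (-(2*c*s)) * ‖sdet ω g1 g2 lam‖)^2 := by
    have h1 : (‖G1 1‖ * ‖G2 1‖)^2 ≤ (Real.exp (-(2*c*s)) * J1) * (Real.exp (-(2*c*s)) * J2) := by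
      rw [mul_pow]; gcongr
    have h2 : J1 * J2 ≤ ‖sdet ω g1 g2 lam‖^2 := by nlinarith [mul_nonneg P1 P2]
    calc _ ≤ _ := h1
      _ = (Real.exp (-(2*c*s)))^2 * (J1 * J2) := by ring
      _ ≤ (Real.exp (-(2*c*s)))^2 * ‖sdet ω g1 g2 lam‖^2 := by gcongr
      _ = _ := by ring
  rw [norm_mul]
  exact (sq_le_sq₀ (by positivity) (by positivity)).1 hfin


lemma factor_zero (D : ℂ → ℂ) (hD : Differentiable ℂ D) (hne : ∃ z, D z ≠ 0) (z0 : ℂ) :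
    ∃ (k : ℕ) (E : ℂ → ℂ), Differentiable ℂ E ∧ E z0 ≠ 0 ∧ ∀ z, D z = (z - z0)^k * E z := by
  have hA : AnalyticOnNhd ℂ D univ := fun z _ => hD.analyticAt z
  have h0 : ¬ ∀ᶠ z in nhds z0, D z = 0 := by
    intro h
    obtain ⟨z, hz⟩ := hne
    exact hz (hA.eqOn_zero_of_preconnected_of_eventuallyEq_zero isPreconnected_univ (mem_univ z0) h (mem_univ z))
  obtain ⟨k, g, hg, hg0, heq⟩ := (hD.analyticAt z0).exists_eventuallyEq_pow_smul_nonzero_iff.2 h0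
  refine ⟨k, fun z => if z = z0 then g z0 else D z / (z - z0)^k, fun z => ?_, by simpa using hg0, fun z => ?_⟩
  · by_cases hz : z = z0
    · subst hz
      refine hg.differentiableAt.congr_of_eventuallyEq ?_
      filter_upwards [heq] with w hw
      by_cases hwz : w = z
      · simp [hwz]
      · have : (w - z)^k ≠ 0 := pow_ne_zero _ (sub_ne_zero.2 hwz)
        rw [if_neg hwz, hw, smul_eq_mul, mul_div_cancel_left₀ _ this]
    · have h1 : DifferentiableAt ℂ (fun z => D z / (z - z0)^k) z :=
        (hD z).div (by fun_prop) (pow_ne_zero _ (sub_ne_zero.2 hz))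
      refine h1.congr_of_eventuallyEq ?_
      filter_upwards [isOpen_ne.mem_nhds hz] with w hw
      rw [if_neg hw]
  · by_cases hz : z = z0
    · subst hz
      have := heq.self_of_nhds
      simpa using this
    · have : (z - z0)^k ≠ 0 := pow_ne_zero _ (sub_ne_zero.2 hz)
      simp only [if_neg hz]
      field_simp

lemma factor_all (n : ℕ) : ∀ (D : ℂ → ℂ), Differentiable ℂ D → (∃ z, D z ≠ 0) →
    {z | D z = 0}.Finite → {z | D z = 0}.ncard = n →
    ∃ (p E : ℂ → ℂ), Differentiable ℂ E ∧ (∀ z, E z ≠ 0) ∧ (∀ z, D z = p z * E z) ∧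
      (∃ R : ℝ, ∀ z, R ≤ ‖z‖ → 1 ≤ ‖p z‖) ∧ ∃ (C : ℝ) (d : ℕ), 0 ≤ C ∧ ∀ z, ‖p z‖ ≤ C * (1 + ‖z‖)^d := by
  induction n with
  | zero =>
    intro D hD hne hfin hn
    rw [Set.ncard_eq_zero hfin] at hn
    refine ⟨fun _ => 1, D, hD, fun z hz => ?_, fun z => by simp, ⟨0, fun z _ => by simp⟩, 1, 0, by norm_num, fun z => by simp⟩
    have : z ∈ {z | D z = 0} := hz
    rw [hn] at this; exact this
  | succ n ih =>
    intro D hD hne hfin hn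
    obtain ⟨z0, hz0⟩ : {z | D z = 0}.Nonempty := by
      rw [Set.nonempty_iff_ne_empty]
      intro h; rw [h] at hn; simp at hn
    obtain ⟨k, E, hE, hE0, hDE⟩ := factor_zero D hD hne z0
    have hk : k ≠ 0 := by
      rintro rfl
      have h1 : D z0 = 0 := hz0
      rw [hDE] at h1; simp at h1; exact hE0 h1
    have hset : {z | E z = 0} = {z | D z = 0} \ {z0} := by
      ext z
      constructor
      · intro h
        have h' : E z = 0 := h
        refine ⟨show D z = 0 by rw [hDE, h', mul_zero], fun hz => ?_⟩
        rw [mem_singleton_iff.1 hz] at h'; exact hE0 h'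
      · rintro ⟨h1, h2⟩
        have h1' : D z = 0 := h1
        rw [hDE] at h1'
        have : (z - z0)^k ≠ 0 := pow_ne_zero _ (sub_ne_zero.2 h2)
        exact (mul_eq_zero.1 h1').resolve_left this
    obtain ⟨p, E2, h1, h2, h3, ⟨R, hR⟩, C, d, hC, hCd⟩ := ih E hE ⟨z0, hE0⟩
      (by rw [hset]; exact hfin.subset diff_subset)
      (by rw [hset, Set.ncard_diff_singleton_of_mem hz0, hn]; rfl)
    refine ⟨fun z => (z - z0)^k * p z, E2, h1, h2, fun z => by rw [hDE, h3]; ring,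
      ⟨max R (1 + ‖z0‖), fun z hz => ?_⟩, (1 + ‖z0‖)^k * C, d + k, by positivity, fun z => ?_⟩
    · have a1 := hR z ((le_max_left _ _).trans hz)
      have a2 : 1 ≤ ‖z - z0‖ := by
        have := norm_sub_norm_le z z0
        linarith [(le_max_right _ _).trans hz]
      rw [norm_mul, norm_pow]
      exact one_le_mul_of_one_le_of_one_le (one_le_pow₀ a2) a1
    · rw [norm_mul, norm_pow]
      have a3 : ‖z - z0‖ ≤ (1 + ‖z0‖) * (1 + ‖z‖) := by
        have := norm_sub_le z z0
        nlinarith [norm_nonneg z, norm_nonneg z0]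
      calc ‖z - z0‖^k * ‖p z‖ ≤ ((1 + ‖z0‖) * (1 + ‖z‖))^k * (C * (1+‖z‖)^d) := by
            gcongr; exact hCd z
        _ = _ := by rw [mul_pow, pow_add]; ring

lemma nonvanishing_const (E : ℂ → ℂ) (hE : Differentiable ℂ E) (h0 : ∀ z, E z ≠ 0)
    (B K ρ : ℝ) (hB : 0 ≤ B) (hρ0 : 0 ≤ ρ) (hρ : ρ < 1)
    (hb : ∀ z, ‖E z‖ ≤ Real.exp (B * (1 + ‖z‖)^ρ + K)) : ∀ z, E z = E 0 := by
  have hdiff : Differentiable ℂ fun z => deriv E z / E z := fun z => (diff_deriv hE z).div (hE z) (h0 z)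
  obtain ⟨L0, hL0⟩ : IsExactOn (fun z => deriv E z / E z) univ := hdiff.isExactOn_univ
  have hL0' : ∀ z, HasDerivAt L0 (deriv E z / E z) z := fun z => hL0 z (mem_univ z)
  set L : ℂ → ℂ := fun z => L0 z - L0 0 with hL
  have hLd : ∀ z, HasDerivAt L (deriv E z / E z) z := fun z => (hL0' z).sub_const _
  have hLdiff : Differentiable ℂ L := fun z => (hLd z).differentiableAt
  have hEL : ∀ z, E z = E 0 * Complex.exp (L z) := by
    have hq : ∀ z, HasDerivAt (fun z => E z * Complex.exp (-L z)) 0 z := by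
      intro z
      have := (hE z).hasDerivAt.mul ((hLd z).neg.cexp)
      have hh : E z * (deriv E z / E z) = deriv E z := by
        have := h0 z
        field_simp
      have e0 : deriv E z * cexp (-L z) + E z * (cexp (-L z) * -(deriv E z / E z)) = 0 := by
        linear_combination -(cexp (-L z) * hh)
      have this2 : HasDerivAt (fun z => E z * Complex.exp (-L z))
          (deriv E z * cexp (-L z) + E z * (cexp (-L z) * -(deriv E z / E z))) z := this
      rwa [e0] at this2
    have hc := is_const_of_deriv_eq_zero (fun z => (hq z).differentiableAt) (fun z => (hq z).deriv)
    intro z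
    have := hc z 0
    have hL00 : L 0 = 0 := by simp [hL]
    simp only [hL00, neg_zero, Complex.exp_zero, mul_one] at this
    rw [← this, mul_assoc, ← Complex.exp_add]; simp
  suffices ∀ z, L z = 0 by
    intro z; rw [hEL z, this z]; simp
  intro z
  set K2 : ℝ := |K| + |Real.log ‖E 0‖| + 1 with hK2
  have hre : ∀ w, (L w).re ≤ B * (1 + ‖w‖)^ρ + K2 := by
    intro w
    have h1 := hb w
    rw [hEL w, norm_mul, Complex.norm_exp] at h1
    have hp : 0 < ‖E 0‖ := norm_pos_iff.2 (h0 0)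
    have h2 := Real.log_le_log (by positivity) h1
    rw [Real.log_mul hp.ne' (Real.exp_pos _).ne', Real.log_exp, Real.log_exp] at h2
    have := le_abs_self K
    have := neg_abs_le (Real.log ‖E 0‖)
    linarith
  have hbound : ∀ R : ℝ, ‖z‖ < R → ‖L z‖ ≤ 2 * (B * (1 + R)^ρ + K2) * ‖z‖ / (R - ‖z‖) := by
    intro R hR
    have hRp : 0 < R := (norm_nonneg z).trans_lt hR
    have hM : 0 < B * (1 + R)^ρ + K2 := by positivity
    refine Complex.borelCaratheodory_zero hM hLdiff.differentiableOn ?_ hRp (by simpa using hR) (by simp [hL])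
    intro w hw
    have hw' : ‖w‖ < R := by simpa using hw
    show (L w).re ≤ _
    refine (hre w).trans ?_
    gcongr
  -- limit as R → ∞
  have hlim : Tendsto (fun R : ℝ => 2 * (B * (1 + R)^ρ + K2) * ‖z‖ / (R - ‖z‖)) atTop (nhds 0) := by
    have l1 : Tendsto (fun R : ℝ => (1 + R)^(-(1-ρ))) atTop (nhds 0) :=
      (tendsto_rpow_neg_atTop (by linarith : 0 < 1 - ρ)).comp (tendsto_atTop_add_const_left _ 1 tendsto_id)
    have l2 : Tendsto (fun R : ℝ => (1 + R)⁻¹) atTop (nhds 0) :=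
      tendsto_inv_atTop_zero.comp (tendsto_atTop_add_const_left _ 1 tendsto_id)
    have l3 : Tendsto (fun R : ℝ => 2 * (B * (1 + R)^(-(1-ρ)) + K2 * (1+R)⁻¹) * ‖z‖ / (1 - (1 + ‖z‖) * (1+R)⁻¹)) atTop
        (nhds (2 * (B * 0 + K2 * 0) * ‖z‖ / (1 - (1 + ‖z‖) * 0))) := by
      refine Tendsto.div ?_ ?_ (by simp)
      · exact (((l1.const_mul B).add (l2.const_mul K2)).const_mul 2).mul_const _
      · exact (l2.const_mul _).const_sub 1
    simp only [mul_zero, add_zero, zero_mul, zero_div] at l3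
    refine l3.congr' ?_
    filter_upwards [eventually_gt_atTop ‖z‖, eventually_gt_atTop 0] with R hR hR0
    have hR1 : (0:ℝ) < 1 + R := by linarith
    have e1 : (1 + R)^(-(1-ρ)) = (1+R)^ρ * (1+R)⁻¹ := by
      rw [← Real.rpow_neg_one, ← Real.rpow_add hR1]; congr 1; ring
    have hne1 : R - ‖z‖ ≠ 0 := by linarith
    have e2 : 1 - (1 + ‖z‖) * (1+R)⁻¹ = (R - ‖z‖) * (1+R)⁻¹ := by field_simp; ring
    rw [e1, e2]
    field_simp
  have : ‖L z‖ ≤ 0 := ge_of_tendsto hlim (by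
    filter_upwards [eventually_gt_atTop ‖z‖] with R hR using hbound R hR)
  exact norm_le_zero_iff.1 this

lemma finite_zeros_poly (D : ℂ → ℂ) (hD : Differentiable ℂ D) (hne : ∃ z, D z ≠ 0)
    (hfin : {z | D z = 0}.Finite) (B ρ : ℝ) (hB : 0 ≤ B) (hρ0 : 0 ≤ ρ) (hρ : ρ < 1)
    (hb : ∀ z, ‖D z‖ ≤ Real.exp (B * (1 + ‖z‖)^ρ)) :
    ∃ (C : ℝ) (d : ℕ), 0 ≤ C ∧ ∀ z, ‖D z‖ ≤ C * (1 + ‖z‖)^d := by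
  obtain ⟨p, E, hE, hE0, hDE, ⟨R, hR⟩, C, d, hC, hCd⟩ := factor_all _ D hD hne hfin rfl
  obtain ⟨M, hM⟩ := (isCompact_closedBall (0:ℂ) R).exists_bound_of_continuousOn hE.continuous.continuousOn
  have hEb : ∀ z, ‖E z‖ ≤ Real.exp (B * (1 + ‖z‖)^ρ + |M|) := by
    intro z
    have hnn : 0 ≤ B * (1 + ‖z‖)^ρ := by positivity
    rcases le_total R ‖z‖ with h | h
    · have h1 := hR z h
      have h2 := hb z
      rw [hDE, norm_mul] at h2
      have h3 : ‖E z‖ ≤ ‖p z‖ * ‖E z‖ := le_mul_of_one_le_left (norm_nonneg _) h1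
      refine h3.trans (h2.trans ?_)
      gcongr; linarith [abs_nonneg M]
    · have h1 := hM z (by simpa using h)
      have h2 := Real.add_one_le_exp (B * (1 + ‖z‖)^ρ + |M|)
      linarith [le_abs_self M]
  have hconst := nonvanishing_const E hE hE0 B |M| ρ hB hρ0 hρ hEb
  refine ⟨C * ‖E 0‖, d, by positivity, fun z => ?_⟩
  rw [hDE, hconst z, norm_mul]
  calc ‖p z‖ * ‖E 0‖ ≤ (C * (1+‖z‖)^d) * ‖E 0‖ := by gcongr; exact hCd z
    _ = _ := by ring


set_option maxHeartbeats 1000000 in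
theorem infinite_of_sector (m : ℕ) (hm : 3 ≤ m) (F D : ℂ → ℂ) (hF : Differentiable ℂ F)
    (hD : Differentiable ℂ D) (B : ℝ) (hB : 0 ≤ B)
    (bF : ∀ z, ‖F z‖ ≤ Real.exp (B * (1 + ‖z‖)^(1/2 + 1/(m:ℝ))))
    (bD : ∀ z, ‖D z‖ ≤ Real.exp (B * (1 + ‖z‖)^(1/2 + 1/(m:ℝ))))
    (c s0 : ℝ) (hc : 0 < c) (hs0 : 0 < s0)
    (hsec : ∀ s : ℝ, s0 ≤ s → ∀ γ : ℝ,
      |γ| ≤ 3 * (2 * Real.pi / ((m:ℝ)+2)) / 2 → ∀ lam : ℂ,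
      lam = -((s:ℂ)^2 * Complex.exp ((γ:ℝ) * Complex.I)) →
      F lam ≠ 0 ∧ ‖F lam‖ ≤ Real.exp (-(2*c*s)) * ‖D lam‖) :
    (∃ z, D z ≠ 0) ∧ {z | D z = 0}.Infinite := by
  have hm' : (3:ℝ) ≤ m := by exact_mod_cast hm
  set θ : ℝ := 2 * Real.pi / ((m:ℝ)+2) with hθ
  have hπ := Real.pi_pos
  have hθ0 : 0 < θ := by positivity
  have hθ1 : θ ≤ 2 * Real.pi / 5 := by rw [hθ]; gcongr; linarith
  set ρ : ℝ := 1/2 + 1/(m:ℝ) with hρ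
  have hρ0 : 0 ≤ ρ := by positivity
  have hρ1 : ρ < 1 := by
    have : 1/(m:ℝ) ≤ 1/3 := by gcongr
    rw [hρ]; linarith
  obtain ⟨hF0, hFD0⟩ := hsec s0 le_rfl 0 (by simp; positivity) _ rfl
  have hDne : ∃ z, D z ≠ 0 := by
    refine ⟨-((s0:ℂ)^2 * Complex.exp ((0:ℝ) * Complex.I)), fun h => hF0 ?_⟩
    rw [h, norm_zero, mul_zero] at hFD0
    exact norm_le_zero_iff.1 hFD0
  refine ⟨hDne, fun hfin => ?_⟩
  obtain ⟨C, d, hC, hCd⟩ := finite_zeros_poly D hD hDne hfin B ρ hB hρ0 hρ1 bD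
  -- decay in the good sector
  have hnl : ∀ (s γ : ℝ), 0 ≤ s → ‖(-((s:ℂ)^2 * Complex.exp ((γ:ℝ) * Complex.I)))‖ = s^2 := by
    intro s γ hs
    rw [norm_neg, norm_mul, norm_pow, Complex.norm_exp_ofReal_mul_I, mul_one, Complex.norm_real,
      Real.norm_of_nonneg hs]
  set h : ℝ → ℝ := fun s => C * 2^d * (s^(2*d) / Real.exp (2*c*s)) with hh
  have hdec : ∀ s : ℝ, s0 ≤ s → 1 ≤ s → ∀ γ : ℝ, |γ| ≤ 3 * θ / 2 →
      ‖F (-((s:ℂ)^2 * Complex.exp ((γ:ℝ) * Complex.I)))‖ ≤ h s := by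
    intro s hs hs1 γ hγ
    refine (hsec s hs γ hγ _ rfl).2.trans ?_
    have h1 := hCd (-((s:ℂ)^2 * Complex.exp ((γ:ℝ) * Complex.I)))
    rw [hnl s γ (by linarith)] at h1
    have h2 : 1 + s^2 ≤ 2 * s^2 := by nlinarith
    calc _ ≤ Real.exp (-(2*c*s)) * (C * (2 * s^2)^d) := by
          gcongr; exact h1.trans (by gcongr)
      _ = h s := by
          simp only [hh]
          rw [Real.exp_neg, mul_pow, ← pow_mul]; ring
  have hlim : Tendsto h atTop (nhds 0) := by
    have := (isLittleO_pow_exp_pos_mul_atTop (2*d) (by positivity : 0 < 2*c)).tendsto_div_nhds_zero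
    simpa using this.const_mul (C * 2^d)
  -- boundedness in the sector
  obtain ⟨C0, hC0⟩ : ∃ C0 : ℝ, ∀ s : ℝ, 0 ≤ s → ∀ γ : ℝ, |γ| ≤ 3 * θ / 2 →
      ‖F (-((s:ℂ)^2 * Complex.exp ((γ:ℝ) * Complex.I)))‖ ≤ C0 := by
    obtain ⟨s1, hs1⟩ := eventually_atTop.1 (hlim.eventually (gt_mem_nhds zero_lt_one))
    set s2 := max (max s0 1) s1
    obtain ⟨M, hM⟩ := (isCompact_closedBall (0:ℂ) (s2^2)).exists_bound_of_continuousOn hF.continuous.continuousOn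
    refine ⟨max M 1, fun s hs γ hγ => ?_⟩
    rcases le_total s s2 with hle | hle
    · refine (hM _ ?_).trans (le_max_left _ _)
      rw [mem_closedBall_zero_iff, hnl s γ hs]
      gcongr
    · have i1 : s0 ≤ s := ((le_max_left _ _).trans (le_max_left _ _)).trans hle
      have i2 : 1 ≤ s := ((le_max_right _ _).trans (le_max_left _ _)).trans hle
      have i3 : s1 ≤ s := (le_max_right _ _).trans hle
      exact (hdec s i1 i2 γ hγ).trans ((hs1 s i3).le.trans (le_max_right _ _))
  -- a convenient form of the previous bound
  have hexpneg : ∀ (ζ : ℂ) (γ : ℝ), Complex.exp (((ζ.im : ℝ):ℂ) * Complex.I) = -Complex.exp ((γ:ℝ) * Complex.I) →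
      Complex.exp ζ = -(((Real.exp (ζ.re/2) : ℝ):ℂ)^2 * Complex.exp ((γ:ℝ) * Complex.I)) := by
    intro ζ γ hz
    have e1 : ((Real.exp (ζ.re/2) : ℝ):ℂ)^2 = Complex.exp (ζ.re : ℂ) := by
      rw [Complex.ofReal_exp, ← Complex.exp_nat_mul]; congr 1; push_cast; ring
    rw [e1]
    conv_lhs => rw [← Complex.re_add_im ζ, Complex.exp_add, hz]
    ring
  have hup : ∀ ζ : ℂ, |ζ.im - Real.pi| ≤ 3 * θ / 2 → ‖F (Complex.exp ζ)‖ ≤ C0 := by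
    intro ζ hz
    rw [hexpneg ζ (ζ.im - Real.pi) (by
      push_cast; rw [sub_mul, Complex.exp_sub, Complex.exp_pi_mul_I]; ring)]
    exact hC0 _ (Real.exp_pos _).le _ hz
  have hlo : ∀ ζ : ℂ, |ζ.im + Real.pi| ≤ 3 * θ / 2 → ‖F (Complex.exp ζ)‖ ≤ C0 := by
    intro ζ hz
    rw [hexpneg ζ (ζ.im + Real.pi) (by
      push_cast; rw [add_mul, Complex.exp_add, Complex.exp_pi_mul_I]; ring)]
    exact hC0 _ (Real.exp_pos _).le _ hz
  set ψ : ℝ := Real.pi - 3 * θ / 2 with hψ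
  have hψ0 : 0 < ψ := by rw [hψ]; linarith
  have hexp : ρ < Real.pi / (ψ - (-ψ)) := by
    have e1 : ψ - (-ψ) = 2 * Real.pi * ((m:ℝ) - 1) / ((m:ℝ)+2) := by
      rw [hψ, hθ]; field_simp; ring
    have e2 : ρ = ((m:ℝ)+2) / (2 * m) := by rw [hρ]; field_simp
    have hm1 : (0:ℝ) < (m:ℝ) - 1 := by linarith
    have e3 : Real.pi / (ψ - (-ψ)) = ((m:ℝ)+2) / (2 * ((m:ℝ)-1)) := by
      rw [e1]; field_simp
    rw [e2, e3]
    apply div_lt_div_of_pos_left <;> linarith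
  have hstrip : ∀ ζ : ℂ, -ψ ≤ ζ.im → ζ.im ≤ ψ → ‖F (Complex.exp ζ)‖ ≤ C0 := by
    intro ζ h1 h2
    refine PhragmenLindelof.horizontal_strip (f := fun ζ => F (Complex.exp ζ)) (a := -ψ) (b := ψ)
      (Differentiable.diffContOnCl (hF.comp Complex.differentiable_exp)) ⟨ρ, hexp, B * 2^ρ, ?_⟩ ?_ ?_ h1 h2
    · refine IsBigO.of_bound 1 (Eventually.of_forall fun z => ?_)
      rw [one_mul, Real.norm_of_nonneg (Real.exp_pos _).le]
      refine (bF _).trans (Real.exp_le_exp.2 ?_)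
      rw [Complex.norm_exp, mul_assoc]
      have h3 : 1 + Real.exp z.re ≤ 2 * Real.exp |z.re| := by
        have := Real.exp_le_exp.2 (le_abs_self z.re)
        have := Real.one_le_exp (abs_nonneg z.re)
        linarith
      have h4 : (1 + Real.exp z.re)^ρ ≤ (2 * Real.exp |z.re|)^ρ :=
        Real.rpow_le_rpow (by positivity) h3 hρ0
      rw [Real.mul_rpow (by norm_num) (Real.exp_pos _).le, ← Real.exp_mul, mul_comm |z.re| ρ] at h4
      gcongr
    · intro z hz
      refine hlo z ?_
      rw [hz, hψ, show -(Real.pi - 3 * θ / 2) + Real.pi = 3 * θ / 2 by ring, abs_of_pos (by positivity)]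
    · intro z hz
      refine hup z ?_
      rw [hz, hψ, show Real.pi - 3 * θ / 2 - Real.pi = -(3 * θ / 2) by ring, abs_neg, abs_of_pos (by positivity)]
  have hall : ∀ z, ‖F z‖ ≤ C0 := by
    intro z
    by_cases hz : z = 0
    · subst hz
      have := hC0 0 le_rfl 0 (by simp; positivity)
      simpa using this
    · have e := Complex.exp_log hz
      have i1 := Complex.neg_pi_lt_log_im z
      have i2 := Complex.log_im_le_pi z
      rw [← e]
      by_cases h1 : ψ ≤ (Complex.log z).im
      · exact hup _ (abs_le.2 ⟨by linarith, by linarith⟩)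
      · by_cases h2 : (Complex.log z).im ≤ -ψ
        · exact hlo _ (abs_le.2 ⟨by linarith, by linarith⟩)
        · exact hstrip _ (by linarith) (by linarith)
  have hbd : Bornology.IsBounded (range F) := by
    rw [isBounded_iff_forall_norm_le]
    exact ⟨C0, by rintro _ ⟨z, rfl⟩; exact hall z⟩
  have hle : ‖F (-((s0:ℂ)^2 * Complex.exp ((0:ℝ) * Complex.I)))‖ ≤ 0 := by
    refine ge_of_tendsto hlim ?_
    filter_upwards [eventually_ge_atTop s0, eventually_ge_atTop 1] with s h1 h2
    rw [hF.apply_eq_apply_of_bounded hbd _ (-((s:ℂ)^2 * Complex.exp ((0:ℝ) * Complex.I)))]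
    exact hdec s h1 h2 0 (by simp; positivity)
  exact hF0 (norm_le_zero_iff.1 hle)


/-- The set of eigenvalues of `H(m,a)` is infinite and discrete (no accumulation
point in `ℂ`). -/
theorem stmt3 (m : ℕ) (hm : 3 ≤ m) (a : ℕ → ℂ) :
    {lam : ℂ | IsEigenvalue m a lam}.Infinite ∧
    ∀ z : ℂ, ¬ AccPt z (Filter.principal {lam : ℂ | IsEigenvalue m a lam}) := by
  obtain ⟨ω, hωd⟩ : ∃ ω : ℂ, ω = Complex.exp ((2 * Real.pi / ((m:ℝ)+2) : ℝ) * Complex.I) := ⟨_, rfl⟩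
  have hωn : ‖ω‖ = 1 := by rw [hωd]; exact Complex.norm_exp_ofReal_mul_I _
  obtain ⟨g1, B1, hB1, s1, d1, d1', b1, t1, n1, p1⟩ := half_line m hm (rotC m a ω)
  obtain ⟨g2, B2, hB2, s2, d2, d2', b2, t2, n2, p2⟩ := half_line m hm (rotC m a ω⁻¹)
  have hiff := eig_iff m a ω hωd g1 g2 s1 s2 t1 t2 n1 n2 p1 p2
  obtain ⟨c, s0, hc, hs0, hsec⟩ := good_sector m hm a ω hωd g1 g2 s1 s2 t1 t2 n1 n2 p1 p2
  have hset : {lam : ℂ | IsEigenvalue m a lam} = {lam | sdet ω g1 g2 lam = 0} := by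
    ext lam; exact hiff lam
  have l1 : Differentiable ℂ fun lam : ℂ => ω^2 * lam := by fun_prop
  have l2 : Differentiable ℂ fun lam : ℂ => ω⁻¹^2 * lam := by fun_prop
  have hD : Differentiable ℂ (sdet ω g1 g2) := by
    have e1 : Differentiable ℂ fun lam => g1 (ω^2 * lam) 0 := (d1 0).comp l1
    have e2 : Differentiable ℂ fun lam => deriv (g1 (ω^2 * lam)) 0 := (d1' 0).comp l1
    have e3 : Differentiable ℂ fun lam => g2 (ω⁻¹^2 * lam) 0 := (d2 0).comp l2
    have e4 : Differentiable ℂ fun lam => deriv (g2 (ω⁻¹^2 * lam)) 0 := (d2' 0).comp l2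
    exact (e1.mul (e4.const_mul ω)).sub ((e2.const_mul ω⁻¹).mul e3)
  have hF : Differentiable ℂ fun lam => g1 (ω^2 * lam) 1 * g2 (ω⁻¹^2 * lam) 1 :=
    Differentiable.mul ((d1 1).comp l1) ((d2 1).comp l2)
  have m1 : ∀ lam : ℂ, ‖ω^2 * lam‖ = ‖lam‖ := fun lam => by simp [hωn]
  have m2 : ∀ lam : ℂ, ‖ω⁻¹^2 * lam‖ = ‖lam‖ := fun lam => by simp [hωn]
  have hX : ∀ lam : ℂ, 1 ≤ (1 + ‖lam‖)^(1/2 + 1/(m:ℝ)) := fun lam =>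
    Real.one_le_rpow (by linarith [norm_nonneg lam]) (by positivity)
  have b10 : ∀ lam : ℂ, _ := fun lam => b1 (ω^2 * lam) 0 le_rfl zero_le_one
  have b11 : ∀ lam : ℂ, _ := fun lam => b1 (ω^2 * lam) 1 zero_le_one le_rfl
  have b20 : ∀ lam : ℂ, _ := fun lam => b2 (ω⁻¹^2 * lam) 0 le_rfl zero_le_one
  have b21 : ∀ lam : ℂ, _ := fun lam => b2 (ω⁻¹^2 * lam) 1 zero_le_one le_rfl
  simp only [m1, m2, Complex.ofReal_zero, Complex.ofReal_one] at b10 b11 b20 b21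
  have bF : ∀ lam, ‖g1 (ω^2 * lam) 1 * g2 (ω⁻¹^2 * lam) 1‖ ≤
      Real.exp ((B1 + B2 + 1) * (1 + ‖lam‖)^(1/2 + 1/(m:ℝ))) := by
    intro lam
    have hx := hX lam
    rw [norm_mul]
    refine (mul_le_mul (b11 lam).1 (b21 lam).1 (norm_nonneg _) (Real.exp_pos _).le).trans ?_
    rw [← Real.exp_add]
    refine Real.exp_le_exp.2 ?_
    rw [add_mul, add_mul]; linarith
  have bD : ∀ lam, ‖sdet ω g1 g2 lam‖ ≤
      Real.exp ((B1 + B2 + 1) * (1 + ‖lam‖)^(1/2 + 1/(m:ℝ))) := by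
    intro lam
    have hx := hX lam
    set X := (1 + ‖lam‖)^(1/2 + 1/(m:ℝ)) with hXd
    have q1 := mul_le_mul (b10 lam).1 (b20 lam).2 (norm_nonneg _) (Real.exp_pos _).le
    have q2 := mul_le_mul (b10 lam).2 (b20 lam).1 (norm_nonneg _) (Real.exp_pos _).le
    have q3 : ‖sdet ω g1 g2 lam‖ ≤ ‖g1 (ω^2 * lam) 0‖ * ‖deriv (g2 (ω⁻¹^2 * lam)) 0‖ +
        ‖deriv (g1 (ω^2 * lam)) 0‖ * ‖g2 (ω⁻¹^2 * lam) 0‖ := by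
      unfold sdet
      refine (norm_sub_le _ _).trans (le_of_eq ?_)
      simp only [norm_mul, norm_inv, hωn, inv_one, one_mul]
    have q4 : (2:ℝ) ≤ Real.exp X := by linarith [Real.add_one_le_exp X]
    have q5 : Real.exp ((B1 + B2 + 1) * X) = Real.exp (B1 * X) * Real.exp (B2 * X) * Real.exp X := by
      rw [← Real.exp_add, ← Real.exp_add]; congr 1; ring
    rw [q5]
    have q6 : 0 < Real.exp (B1 * X) * Real.exp (B2 * X) := by positivity
    nlinarith
  obtain ⟨⟨z1, hz1⟩, hinf⟩ := infinite_of_sector m hm _ _ hF hD (B1 + B2 + 1) (by positivity) bF bD c s0 hc hs0 hsec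
  rw [hset]
  refine ⟨hinf, fun z hz => hz1 ?_⟩
  rw [accPt_iff_frequently_nhdsNE] at hz
  have hA : AnalyticOnNhd ℂ (sdet ω g1 g2) univ := fun z _ => hD.analyticAt z
  exact hA.eqOn_zero_of_preconnected_of_frequently_eq_zero isPreconnected_univ (mem_univ z) hz (mem_univ z1)
end

section
/- Fix an integer m ≥ 3 and a ∈ ℂ^{m−1}. Every eigenvalue of H(m,a) has geometric multiplicity one: if u_1 and u_2 are both eigenfunctions of H associated with the same eigenvalue λ, then u_1 and u_2 are linearly dependent, i.e., there exists c ∈ ℂ with u_2(z) = c·u_1(z) for all z ∈ ℂ. -/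
open Complex Real Filter Set MeasureTheory Asymptotics

theorem normSq_second (v dv ddv : ℝ → ℂ) (h1 : ∀ r, HasDerivAt v (dv r) r)
    (h2 : ∀ r, HasDerivAt dv (ddv r) r) (r : ℝ) :
    HasDerivAt (fun r => (v r).re ^ 2 + (v r).im ^ 2)
      (2 * ((v r).re * (dv r).re + (v r).im * (dv r).im)) r ∧
    HasDerivAt (fun r => 2 * ((v r).re * (dv r).re + (v r).im * (dv r).im))
      (2 * ((dv r).re ^ 2 + (dv r).im ^ 2 + (v r).re * (ddv r).re + (v r).im * (ddv r).im)) r := by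
  have a1 : HasDerivAt (fun r => (v r).re) (dv r).re r :=
    Complex.reCLM.hasFDerivAt.comp_hasDerivAt r (h1 r)
  have a2 : HasDerivAt (fun r => (v r).im) (dv r).im r :=
    Complex.imCLM.hasFDerivAt.comp_hasDerivAt r (h1 r)
  have b1 : HasDerivAt (fun r => (dv r).re) (ddv r).re r :=
    Complex.reCLM.hasFDerivAt.comp_hasDerivAt r (h2 r)
  have b2 : HasDerivAt (fun r => (dv r).im) (ddv r).im r :=
    Complex.imCLM.hasFDerivAt.comp_hasDerivAt r (h2 r)
  constructor
  · refine ((a1.pow 2).add (a2.pow 2)).congr_deriv ?_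
    push_cast
    ring
  · refine (((a1.mul b1).add (a2.mul b2)).const_mul 2).congr_deriv ?_
    ring

/-- growth from a lower bound for the derivative -/
theorem growth (f df : ℝ → ℝ) (h : ∀ r, HasDerivAt f (df r) r) (c R : ℝ)
    (hc : ∀ r, R ≤ r → c ≤ df r) (r : ℝ) (hr : R ≤ r) : f R + c * (r - R) ≤ f r := by
  have hd : Differentiable ℝ f := fun x => (h x).differentiableAt
  have := (convex_Ici R).mul_sub_le_image_sub_of_le_deriv (f := f) hd.continuous.continuousOn
    hd.differentiableOn (C := c) (by
      intro x hx
      rw [(h x).deriv]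
      exact hc x (by simpa using (interior_subset hx : x ∈ Ici R)))
    R (by simp) r (by simpa using hr) hr
  linarith

theorem wronskian_zero (v w dv dw q : ℝ → ℂ) (W : ℂ)
    (hv : ∀ r, HasDerivAt v (dv r) r) (hdv : ∀ r, HasDerivAt dv (q r * v r) r)
    (hw : ∀ r, HasDerivAt w (dw r) r) (hdw : ∀ r, HasDerivAt dw (q r * w r) r)
    (hq : ∀ᶠ r in atTop, 1 ≤ (q r).re)
    (v0 : Tendsto v atTop (nhds 0)) (w0 : Tendsto w atTop (nhds 0))
    (hW : ∀ r, v r * dw r - dv r * w r = W) : W = 0 := by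
  by_contra hne
  have hpos : 0 < ‖W‖ := norm_pos_iff.mpr hne
  obtain ⟨R, hR⟩ := eventually_atTop.mp hq
  have A := normSq_second v dv _ hv hdv
  have B := normSq_second w dw _ hw hdw
  have key : ∀ r, R ≤ r → ‖W‖ ≤
      2 * ((dv r).re ^ 2 + (dv r).im ^ 2 + (v r).re * (q r * v r).re + (v r).im * (q r * v r).im)
      + 2 * ((dw r).re ^ 2 + (dw r).im ^ 2 + (w r).re * (q r * w r).re
        + (w r).im * (q r * w r).im) := by
    intro r hr
    have hn : ‖W‖ ≤ ‖v r‖ * ‖dw r‖ + ‖dv r‖ * ‖w r‖ := by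
      rw [← hW r, ← norm_mul, ← norm_mul]
      exact norm_sub_le _ _
    have s : ∀ z : ℂ, ‖z‖ ^ 2 = z.re ^ 2 + z.im ^ 2 := fun z => by
      rw [Complex.sq_norm, Complex.normSq_apply]; ring
    have s1 := s (v r)
    have s2 := s (w r)
    have s3 := s (dv r)
    have s4 := s (dw r)
    have e : ∀ z : ℂ, z.re ^ 2 + z.im ^ 2 ≤ z.re * (q r * z).re + z.im * (q r * z).im := by
      intro z
      have : z.re * (q r * z).re + z.im * (q r * z).im = (q r).re * (z.re ^ 2 + z.im ^ 2) := by
        simp only [Complex.mul_re, Complex.mul_im]; ring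
      rw [this]
      have := hR r hr
      nlinarith [sq_nonneg z.re, sq_nonneg z.im]
    have e1 := e (v r)
    have e2 := e (w r)
    nlinarith [sq_nonneg (‖v r‖ - ‖dw r‖), sq_nonneg (‖dv r‖ - ‖w r‖), sq_nonneg ‖v r‖,
      sq_nonneg ‖w r‖, sq_nonneg ‖dv r‖, sq_nonneg ‖dw r‖]
  have g1 := growth _ _ (fun r => (A r).2.add (B r).2) ‖W‖ R key
  obtain ⟨R', hR', hR1⟩ : ∃ R', R ≤ R' ∧ ∀ r, R' ≤ r →
      1 ≤ 2 * ((v r).re * (dv r).re + (v r).im * (dv r).im) +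
        2 * ((w r).re * (dw r).re + (w r).im * (dw r).im) := by
    set K := 2 * ((v R).re * (dv R).re + (v R).im * (dv R).im) +
        2 * ((w R).re * (dw R).re + (w R).im * (dw R).im) with hK
    refine ⟨R + (1 + |K|) / ‖W‖, by have : 0 ≤ (1 + |K|) / ‖W‖ := by positivity
                                    linarith, fun r hr => ?_⟩
    have hh : 0 ≤ (1 + |K|) / ‖W‖ := by positivity
    have := g1 r (by linarith)
    have h3 : (1 + |K|) ≤ ‖W‖ * (r - R) := by
      rw [mul_comm, ← div_le_iff₀ hpos]; linarith
    simp only [Pi.add_apply] at this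
    have := neg_abs_le K
    linarith
  have g2 := growth _ _ (fun r => (A r).1.add (B r).1) 1 R' hR1
  have lim : Tendsto (fun r => (v r).re ^ 2 + (v r).im ^ 2 + ((w r).re ^ 2 + (w r).im ^ 2))
      atTop (nhds 0) := by
    have c : ∀ f : ℝ → ℂ, Tendsto f atTop (nhds 0) →
        Tendsto (fun r => (f r).re ^ 2 + (f r).im ^ 2) atTop (nhds 0) := by
      intro f hf
      have c1 := ((Complex.continuous_re.tendsto 0).comp hf).pow 2
      have c2 := ((Complex.continuous_im.tendsto 0).comp hf).pow 2
      simpa using c1.add c2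
    simpa using (c v v0).add (c w w0)
  have ev := lim.eventually (gt_mem_nhds (show (0:ℝ) < 1 by norm_num))
  obtain ⟨r, h1, h2⟩ := (ev.and (eventually_ge_atTop (R' + 1))).exists
  have := g2 r (by linarith)
  simp only [Pi.add_apply] at this
  nlinarith [sq_nonneg (v R').re, sq_nonneg (v R').im, sq_nonneg (w R').re, sq_nonneg (w R').im]

theorem q_large (m : ℕ) (hm : 3 ≤ m) (a : ℕ → ℂ) (lam om : ℂ) (hom : om ^ (m + 2) = 1) :
    ∀ᶠ r : ℝ in atTop, 1 ≤ (om ^ 2 * ((r * om) ^ m + Ppoly m a (r * om) + lam)).re := by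
  have hn : ‖om‖ = 1 := by
    have : ‖om‖ ^ (m + 2) = 1 := by rw [← norm_pow, hom, norm_one]
    exact (pow_eq_one_iff_of_nonneg (norm_nonneg _) (by omega)).mp this
  set C := (∑ j ∈ Finset.Icc 1 (m - 1), ‖a j‖) + ‖lam‖ with hC
  have hC0 : 0 ≤ C := by positivity
  filter_upwards [eventually_ge_atTop (C + 1)] with r hr
  have hr1 : 1 ≤ r := by linarith
  have eq : om ^ 2 * ((r * om) ^ m + Ppoly m a (r * om) + lam) =
      ((r ^ m : ℝ) : ℂ) + om ^ 2 * (Ppoly m a (r * om) + lam) := by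
    have : om ^ 2 * (r * om) ^ m = ((r ^ m : ℝ) : ℂ) := by
      rw [mul_pow]; push_cast
      linear_combination (r : ℂ) ^ m * hom
    rw [← this]; ring
  have bd : ‖om ^ 2 * (Ppoly m a (r * om) + lam)‖ ≤ C * r ^ (m - 1) := by
    rw [norm_mul, norm_pow, hn, one_pow, one_mul, hC, add_mul, Finset.sum_mul]
    refine (norm_add_le _ _).trans (add_le_add ?_ ?_)
    · refine (norm_sum_le _ _).trans (Finset.sum_le_sum fun j hj => ?_)
      rw [norm_mul, norm_pow, norm_mul, hn, mul_one, Complex.norm_real, Real.norm_eq_abs,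
        abs_of_nonneg (by linarith)]
      have := (Finset.mem_Icc.mp hj).1
      gcongr
    · exact le_mul_of_one_le_right (norm_nonneg _) (one_le_pow₀ hr1)
  rw [eq, Complex.add_re, Complex.ofReal_re]
  have h1 := (abs_le.mp (Complex.abs_re_le_norm (om ^ 2 * (Ppoly m a (r * om) + lam)))).1
  have h2 : r ^ m = r ^ (m - 1) * r := by
    rw [← pow_succ]; congr 1; omega
  have h3 : 1 ≤ r ^ (m - 1) := one_le_pow₀ hr1
  nlinarith

theorem ray_deriv (u : ℂ → ℂ) (hu : Differentiable ℂ u) (e : ℂ) (r : ℝ) :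
    HasDerivAt (fun r : ℝ => u (r * e)) (e * deriv u (r * e)) r := by
  have h1 : HasDerivAt (fun z : ℂ => u (z * e)) (deriv u ((r : ℂ) * e) * (1 * e)) (r : ℂ) :=
    HasDerivAt.comp (h₂ := u) (r : ℂ) (hu _).hasDerivAt ((hasDerivAt_id (r : ℂ)).mul_const e)
  refine h1.comp_ofReal.congr_deriv ?_
  ring

/-- Every eigenvalue of `H(m,a)` has geometric multiplicity one. -/
theorem stmt4 (m : ℕ) (hm : 3 ≤ m) (a : ℕ → ℂ) (lam : ℂ) (u₁ u₂ : ℂ → ℂ)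
    (h₁ : IsEigenfunction m a lam u₁) (h₂ : IsEigenfunction m a lam u₂) :
    ∃ c : ℂ, ∀ z : ℂ, u₂ z = c * u₁ z := by
  obtain ⟨d1, n1, o1, t1, -⟩ := h₁
  obtain ⟨d2, n2, o2, t2, -⟩ := h₂
  have dd1 : Differentiable ℂ (deriv u₁) :=
    differentiableOn_univ.mp (d1.differentiableOn.deriv isOpen_univ)
  have dd2 : Differentiable ℂ (deriv u₂) :=
    differentiableOn_univ.mp (d2.differentiableOn.deriv isOpen_univ)
  -- the Wronskian is constant
  have hWd : ∀ z, HasDerivAt (fun z => u₁ z * deriv u₂ z - deriv u₁ z * u₂ z) 0 z := by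
    intro z
    refine (((d1 z).hasDerivAt.mul (dd2 z).hasDerivAt).sub
      ((dd1 z).hasDerivAt.mul (d2 z).hasDerivAt)).congr_deriv ?_
    linear_combination u₂ z * o1 z - u₁ z * o2 z
  have hWc : ∀ z, u₁ z * deriv u₂ z - deriv u₁ z * u₂ z =
      u₁ 0 * deriv u₂ 0 - deriv u₁ 0 * u₂ 0 := fun z =>
    is_const_of_deriv_eq_zero (fun z => (hWd z).differentiableAt) (fun z => (hWd z).deriv) z 0
  set W := u₁ 0 * deriv u₂ 0 - deriv u₁ 0 * u₂ 0 with hW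
  set e : ℂ := Complex.exp (((-(Real.pi / 2) + 2 * Real.pi / ((m : ℝ) + 2) : ℝ) : ℂ)
        * Complex.I) with he
  have he0 : e ≠ 0 := Complex.exp_ne_zero _
  have hom : (Complex.I * e) ^ (m + 2) = 1 := by
    have hI : Complex.I * e = Complex.exp (2 * Real.pi * Complex.I / ((m : ℂ) + 2)) := by
      have : Complex.I = Complex.exp ((Real.pi / 2 : ℂ) * Complex.I) := by
        rw [Complex.exp_pi_div_two_mul_I]
      rw [he]
      nth_rewrite 1 [this]
      rw [← Complex.exp_add]
      congr 1
      push_cast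
      ring
    rw [hI, ← Complex.exp_nat_mul, Complex.exp_eq_one_iff]
    have : (m : ℂ) + 2 ≠ 0 := by exact_mod_cast (by omega : m + 2 ≠ 0)
    refine ⟨1, ?_⟩
    push_cast
    field_simp
  have hode : ∀ u : ℂ → ℂ, Differentiable ℂ (deriv u) → (∀ z : ℂ, -(deriv (deriv u) z)
      - ((Complex.I * z) ^ m + Ppoly m a (Complex.I * z)) * u z = lam * u z) → ∀ r : ℝ,
      HasDerivAt (fun r : ℝ => e * deriv u (r * e))
        ((Complex.I * e) ^ 2 * ((r * (Complex.I * e)) ^ m + Ppoly m a (r * (Complex.I * e)) + lam)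
          * u (r * e)) r := by
    intro u hu ho r
    refine ((ray_deriv _ hu e r).const_mul e).congr_deriv ?_
    have := ho (r * e)
    rw [show (r : ℂ) * (Complex.I * e) = Complex.I * (r * e) by ring, mul_pow, Complex.I_sq]
    linear_combination -e ^ 2 * this
  have hz : e * W = 0 := by
    refine wronskian_zero (fun r => u₁ (r * e)) (fun r => u₂ (r * e))
      (fun r => e * deriv u₁ (r * e)) (fun r => e * deriv u₂ (r * e)) _ _
      (ray_deriv u₁ d1 e) (hode u₁ dd1 o1) (ray_deriv u₂ d2 e) (hode u₂ dd2 o2)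
      (q_large m hm a lam _ hom) t1 t2 ?_
    intro r
    rw [← hWc (r * e)]
    ring
  have hW0 : W = 0 := (mul_eq_zero.mp hz).resolve_left he0
  obtain ⟨z0, hz0⟩ : ∃ z0, u₁ z0 ≠ 0 := by
    by_contra hcon
    push Not at hcon
    exact n1 ⟨0, hcon⟩
  refine ⟨u₂ z0 / u₁ z0, ?_⟩
  obtain ⟨ε, hε, hball⟩ := Metric.eventually_nhds_iff_ball.mp
    (d1.continuous.continuousAt.eventually_ne hz0)
  have hquot : ∀ z ∈ Metric.ball z0 ε, HasDerivAt (fun z => u₂ z / u₁ z) 0 z := by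
    intro z hzb
    refine ((d2 z).hasDerivAt.div (d1 z).hasDerivAt (hball z hzb)).congr_deriv ?_
    have h := hWc z
    rw [hW0] at h
    rw [show deriv u₂ z * u₁ z - u₂ z * deriv u₁ z = 0 by linear_combination h, zero_div]
  have hconst : ∀ z ∈ Metric.ball z0 ε, u₂ z / u₁ z = u₂ z0 / u₁ z0 := fun z hzb =>
    Metric.isOpen_ball.is_const_of_deriv_eq_zero (f := fun z => u₂ z / u₁ z)
      (convex_ball z0 ε).isPreconnected
      (fun z hz => (hquot z hz).differentiableAt.differentiableWithinAt)
      (fun z hz => (hquot z hz).deriv) hzb (Metric.mem_ball_self hε)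
  have hev : u₂ =ᶠ[nhds z0] fun z => u₂ z0 / u₁ z0 * u₁ z := by
    filter_upwards [Metric.ball_mem_nhds z0 hε] with z hzb
    rw [← hconst z hzb, div_mul_cancel₀ _ (hball z hzb)]
  have := AnalyticOnNhd.eq_of_eventuallyEq
    (fun z _ => d2.analyticAt z) (fun z _ => (d1.const_mul (u₂ z0 / u₁ z0)).analyticAt z) hev
  exact fun z => congrFun this z
end

section
/- For every integer m ≥ 3, the function t ↦ √(1+t^m) − t^{m/2} is integrable on (0, ∞), its integral K_m = ∫_0^∞ (√(1+t^m) − t^{m/2}) dt is positive, and K_m = √π · Γ(1 + 1/m) / ( 2 cos(π/m) · Γ(3/2 + 1/m) ). -/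
open Complex Real Filter Set MeasureTheory Asymptotics

lemma gamma_aux (b : ℝ) (h0 : 0 < b) (h1 : b < 1 / 2) :
    (2:ℝ) ^ (-(2 * b) - 1) * ProbabilityTheory.beta (1 / 2 - b) (2 * b + 1) =
      Real.sqrt Real.pi * Real.Gamma (1 + b) /
        (2 * Real.cos (Real.pi * b) * Real.Gamma (3 / 2 + b)) := by
  have hd := Real.Gamma_mul_Gamma_add_half (1 / 2 + b)
  have hr := Real.Gamma_mul_Gamma_one_sub (1 / 2 + b)
  have hs : Real.sin (Real.pi * (1 / 2 + b)) = Real.cos (Real.pi * b) := by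
    rw [← Real.sin_add_pi_div_two]; congr 1; ring
  rw [hs] at hr
  rw [show 1 - (1 / 2 + b) = 1 / 2 - b by ring] at hr
  rw [show 1 / 2 + b + 1 / 2 = 1 + b by ring, show 2 * (1 / 2 + b) = 2 * b + 1 by ring,
    show 1 - (2 * b + 1) = -(2 * b) by ring] at hd
  have hc : 0 < Real.cos (Real.pi * b) := by
    apply Real.cos_pos_of_mem_Ioo
    constructor <;> nlinarith [Real.pi_pos]
  have g1 : 0 < Real.Gamma (1 / 2 + b) := Real.Gamma_pos_of_pos (by linarith)
  have g2 : 0 < Real.Gamma (3 / 2 + b) := Real.Gamma_pos_of_pos (by linarith)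
  have hpi : √π * √π = π := Real.mul_self_sqrt Real.pi_pos.le
  have hsp : 0 < √π := Real.sqrt_pos.2 Real.pi_pos
  unfold ProbabilityTheory.beta
  rw [show 1 / 2 - b + (2 * b + 1) = 3 / 2 + b by ring, Real.rpow_sub_one (by norm_num)]
  rw [eq_div_iff hc.ne'] at hr
  rw [div_mul_div_comm, div_eq_div_iff (by positivity) (by positivity)]
  have key : (2:ℝ) ^ (-(2 * b)) * (Real.Gamma (1 / 2 - b) * Real.Gamma (2 * b + 1)) * Real.cos (Real.pi * b)
      = √π * Real.Gamma (1 + b) := by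
    have : Real.Gamma (1 / 2 + b) * √π ≠ 0 := by positivity
    apply mul_left_cancel₀ this
    linear_combination (Real.Gamma (2 * b + 1) * 2 ^ (-(2 * b)) * √π) * hr
      - π * hd - Real.Gamma (1 / 2 + b) * Real.Gamma (1 + b) * hpi
  linear_combination 2 * Real.Gamma (3 / 2 + b) * key

lemma lint_beta {α β : ℝ} (hα : 0 < α) (hβ : 0 < β) :
    ∫⁻ x in Ioo (0:ℝ) 1, ENNReal.ofReal (x ^ (α - 1) * (1 - x) ^ (β - 1))
      = ENNReal.ofReal (ProbabilityTheory.beta α β) := by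
  have hb := ProbabilityTheory.beta_pos hα hβ
  have h := ProbabilityTheory.lintegral_betaPDF_eq_one hα hβ
  rw [ProbabilityTheory.lintegral_betaPDF] at h
  have h2 : ∀ x ∈ Ioo (0:ℝ) 1, ENNReal.ofReal (x ^ (α - 1) * (1 - x) ^ (β - 1)) =
      ENNReal.ofReal (ProbabilityTheory.beta α β) *
      ENNReal.ofReal (1 / ProbabilityTheory.beta α β * x ^ (α - 1) * (1 - x) ^ (β - 1)) := by
    intro x hx
    rw [← ENNReal.ofReal_mul hb.le]
    congr 1
    field_simp
  rw [setLIntegral_congr_fun measurableSet_Ioo h2, lintegral_const_mul _ (by fun_prop), h, mul_one]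

lemma lint_sub (b : ℝ) (h0 : 0 < b) (h1 : b < 1 / 2) :
    ∫⁻ u in Ioo (0:ℝ) 1, ENNReal.ofReal (((1 - u ^ 2) / (2 * u)) ^ (2 * b)) =
      ENNReal.ofReal ((2:ℝ) ^ (-(2 * b) - 1) * ProbabilityTheory.beta (1 / 2 - b) (2 * b + 1)) := by
  have him : (fun x : ℝ => x ^ 2) '' Ioo (0:ℝ) 1 = Ioo 0 1 := by
    ext y; constructor
    · rintro ⟨x, ⟨h, h'⟩, rfl⟩
      exact ⟨by positivity, by simp only; nlinarith⟩
    · rintro ⟨h, h'⟩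
      exact ⟨√y, ⟨Real.sqrt_pos.2 h, by rw [Real.sqrt_lt' one_pos]; simpa⟩, Real.sq_sqrt h.le⟩
  rw [ENNReal.ofReal_mul (by positivity), ← lint_beta (by linarith) (by linarith)]
  nth_rewrite 2 [← him]
  rw [lintegral_image_eq_lintegral_abs_deriv_mul (f' := fun x => 2 * x) measurableSet_Ioo
    (fun x _ => by simpa using (hasDerivAt_pow 2 x).hasDerivWithinAt)
    (fun x hx y hy h => by
      exact (pow_left_inj₀ hx.1.le hy.1.le two_ne_zero).1 h)]
  rw [← lintegral_const_mul _ (by fun_prop)]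
  refine setLIntegral_congr_fun measurableSet_Ioo fun x hx => ?_
  obtain ⟨h, h'⟩ := hx
  have hx2 : 0 < 1 - x ^ 2 := by nlinarith
  rw [abs_of_pos (by positivity), ← ENNReal.ofReal_mul (by positivity),
    ← ENNReal.ofReal_mul (by positivity)]
  congr 1
  rw [Real.div_rpow hx2.le (by positivity), Real.mul_rpow (by norm_num) h.le,
    Real.rpow_sub_one (by norm_num), Real.rpow_neg (by norm_num), ← Real.rpow_natCast x 2,
    ← Real.rpow_mul h.le]
  rw [show ((2:ℕ):ℝ) * (1 / 2 - b - 1) = -(2 * b) - 1 by push_cast; ring,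
    Real.rpow_sub_one h.ne', Real.rpow_neg h.le, show 2 * b + 1 - 1 = 2 * b by ring]
  field_simp

lemma lint_main (m : ℕ) (hm : 3 ≤ m) :
    ∫⁻ t in Ioi (0:ℝ), ENNReal.ofReal (Real.sqrt (1 + t ^ m) - t ^ ((m : ℝ) / 2)) =
    ∫⁻ u in Ioo (0:ℝ) 1, ENNReal.ofReal (((1 - u ^ 2) / (2 * u)) ^ (2 * (1 / (m:ℝ)))) := by
  have hm0 : (0:ℝ) < m := by positivity
  have hsq : ∀ t : ℝ, 0 < t → t ^ m = (t ^ ((m:ℝ) / 2)) ^ 2 := by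
    intro t ht
    rw [← Real.rpow_natCast (t ^ ((m:ℝ) / 2)), ← Real.rpow_mul ht.le, ← Real.rpow_natCast]
    congr 1; push_cast; ring
  rw [lintegral_eq_lintegral_meas_lt]
  rotate_left
  · filter_upwards [self_mem_ae_restrict measurableSet_Ioi] with t ht
    have ht : 0 < t := ht
    simp only [Pi.zero_apply, sub_nonneg]
    apply Real.le_sqrt_of_sq_le
    rw [hsq t ht]; linarith
  · exact Measurable.aemeasurable (by fun_prop)
  have hset : ∀ u : ℝ, 0 < u → ∀ t : ℝ, 0 < t → (u < Real.sqrt (1 + t ^ m) - t ^ ((m : ℝ) / 2) ↔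
      t ^ ((m:ℝ) / 2) < (1 - u ^ 2) / (2 * u)) := by
    intro u hu t ht
    have : 0 < t ^ ((m:ℝ) / 2) := by positivity
    rw [lt_sub_iff_add_lt, Real.lt_sqrt (by positivity), hsq t ht, lt_div_iff₀ (by positivity)]
    constructor <;> intro h <;> nlinarith
  rw [← Ioo_union_Ici_eq_Ioi (zero_lt_one' ℝ), lintegral_union measurableSet_Ici
    (by rw [Set.disjoint_left]; intro x hx hx'; exact absurd hx.2 (not_lt.2 hx')),
    Ioo_union_Ici_eq_Ioi (zero_lt_one' ℝ)]
  have hz : ∫⁻ u in Ici (1:ℝ), (volume.restrict (Ioi (0:ℝ))) {t | u < Real.sqrt (1 + t ^ m) - t ^ ((m : ℝ) / 2)} = 0 := by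
    rw [setLIntegral_congr_fun measurableSet_Ici (g := fun _ => 0), lintegral_zero]
    intro u hu
    have hu : 1 ≤ u := hu
    simp only
    rw [Measure.restrict_apply (measurableSet_lt (by fun_prop) (by fun_prop))]
    convert measure_empty (μ := volume)
    ext t
    simp only [mem_inter_iff, mem_ofPred_eq, mem_Ioi, mem_empty_iff_false, iff_false, not_and]
    intro h ht
    rw [hset u (by linarith) t ht] at h
    have h3 : (1 - u ^ 2) / (2 * u) ≤ 0 := div_nonpos_of_nonpos_of_nonneg (by nlinarith) (by linarith)
    have : 0 < t ^ ((m:ℝ) / 2) := by positivity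
    linarith
  rw [hz, add_zero]
  refine setLIntegral_congr_fun measurableSet_Ioo fun u hu => ?_
  obtain ⟨h, h'⟩ := hu
  rw [Measure.restrict_apply (measurableSet_lt (by fun_prop) (by fun_prop))]
  have hT : 0 < (1 - u ^ 2) / (2 * u) := div_pos (by nlinarith) (by linarith)
  have : {t : ℝ | u < Real.sqrt (1 + t ^ m) - t ^ ((m : ℝ) / 2)} ∩ Ioi 0 =
      Ioo 0 (((1 - u ^ 2) / (2 * u)) ^ (2 * (1 / (m:ℝ)))) := by
    ext t
    simp only [mem_inter_iff, mem_ofPred_eq, mem_Ioi, mem_Ioo]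
    rw [and_comm]
    refine and_congr_right fun ht => ?_
    rw [hset u h t ht]
    rw [show 2 * (1 / (m:ℝ)) = ((m:ℝ) / 2)⁻¹ by field_simp]
    rw [Real.lt_rpow_inv_iff_of_pos ht.le hT.le (by positivity)]
  rw [this, Real.volume_Ioo, sub_zero]

/-- `K_m = ∫₀^∞ (√(1+t^m) - t^{m/2}) dt` converges, is positive, and equals
`√π Γ(1+1/m) / (2 cos(π/m) Γ(3/2+1/m))`. -/
theorem stmt6 (m : ℕ) (hm : 3 ≤ m) :
    MeasureTheory.IntegrableOn
      (fun t : ℝ => Real.sqrt (1 + t ^ m) - t ^ ((m : ℝ) / 2)) (Set.Ioi 0) ∧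
    0 < ∫ t in Set.Ioi (0 : ℝ), (Real.sqrt (1 + t ^ m) - t ^ ((m : ℝ) / 2)) ∧
    ∫ t in Set.Ioi (0 : ℝ), (Real.sqrt (1 + t ^ m) - t ^ ((m : ℝ) / 2)) =
      Real.sqrt Real.pi * Real.Gamma (1 + 1 / (m : ℝ)) /
        (2 * Real.cos (Real.pi / (m : ℝ)) * Real.Gamma (3 / 2 + 1 / (m : ℝ))) := by
  have hm3 : (3:ℝ) ≤ m := by exact_mod_cast hm
  have b0 : 0 < 1 / (m:ℝ) := by positivity
  have b1 : 1 / (m:ℝ) < 1 / 2 := one_div_lt_one_div_of_lt (by norm_num) (by linarith)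
  have hL := (lint_main m hm).trans (lint_sub _ b0 b1)
  have hpos := mul_pos (Real.rpow_pos_of_pos (two_pos (α := ℝ)) (-(2 * (1 / (m:ℝ))) - 1))
    (ProbabilityTheory.beta_pos (α := 1 / 2 - 1 / (m:ℝ)) (β := 2 * (1 / (m:ℝ)) + 1)
      (by linarith) (by linarith))
  rw [gamma_aux _ b0 b1, show Real.pi * (1 / (m:ℝ)) = Real.pi / m by ring] at hL hpos
  have hnn : 0 ≤ᵐ[volume.restrict (Ioi (0:ℝ))]
      (fun t : ℝ => Real.sqrt (1 + t ^ m) - t ^ ((m : ℝ) / 2)) := by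
    filter_upwards [self_mem_ae_restrict measurableSet_Ioi] with t ht
    have ht : 0 < t := ht
    simp only [Pi.zero_apply, sub_nonneg]
    apply Real.le_sqrt_of_sq_le
    rw [← Real.rpow_natCast (t ^ ((m:ℝ) / 2)), ← Real.rpow_mul ht.le,
      show (m:ℝ) / 2 * ((2:ℕ):ℝ) = m by push_cast; ring, Real.rpow_natCast]
    linarith
  have hme : AEStronglyMeasurable (fun t : ℝ => Real.sqrt (1 + t ^ m) - t ^ ((m : ℝ) / 2))
      (volume.restrict (Ioi (0:ℝ))) :=
    Measurable.aestronglyMeasurable (by fun_prop)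
  have hI := integral_eq_lintegral_of_nonneg_ae hnn hme
  rw [hL, ENNReal.toReal_ofReal hpos.le] at hI
  refine ⟨⟨hme, ?_⟩, ?_, hI⟩
  · rw [hasFiniteIntegral_iff_ofReal hnn, hL]
    exact ENNReal.ofReal_lt_top
  · rw [hI]; exact hpos
end

section
/- Let m ≥ 3 be an integer, let j be an integer with 1 ≤ j ≤ (m+1)/2, let c_1, …, c_j ∈ ℂ, and set b = c_1 + ⋯ + c_j. Define g(τ) = Σ_{k=1}^{j} c_k · τ^{mk−j} / (τ^m + 1)^{k − 1/2} for τ > 0 (real positive powers of the positive real number τ^m+1). Then g(τ) − b·τ^{m/2 − j} = O(τ^{−m/2 − j}) as τ → +∞, and the function τ ↦ g(τ) − b·τ^{m/2 − j} is integrable on (0, ∞). -/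
open Complex Real Filter Set MeasureTheory Asymptotics

lemma key_identity (m j k : ℕ) (hk : j ≤ m * k) (τ : ℝ) (hτ : 0 < τ) :
    τ ^ (m * k - j) / (τ ^ m + 1) ^ ((k : ℝ) - 1 / 2) =
      τ ^ ((m : ℝ) / 2 - (j : ℝ)) * (τ ^ m / (τ ^ m + 1)) ^ ((k : ℝ) - 1 / 2) := by
  have hx : 0 < τ ^ m := by positivity
  rw [Real.div_rpow hx.le (by positivity), ← mul_div_assoc]
  congr 1
  rw [← Real.rpow_natCast τ m, ← Real.rpow_mul hτ.le, ← Real.rpow_add hτ, ← Real.rpow_natCast]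
  congr 1
  push_cast [Nat.cast_sub hk]
  ring

lemma key_bounds (m j k : ℕ) (hk1 : 1 ≤ k) (hk : j ≤ m * k) (τ : ℝ) (hτ : 0 < τ) :
    |τ ^ (m * k - j) / (τ ^ m + 1) ^ ((k : ℝ) - 1 / 2) - τ ^ ((m : ℝ) / 2 - (j : ℝ))|
      ≤ k * τ ^ (-(m : ℝ) / 2 - (j : ℝ)) ∧
    |τ ^ (m * k - j) / (τ ^ m + 1) ^ ((k : ℝ) - 1 / 2) - τ ^ ((m : ℝ) / 2 - (j : ℝ))|
      ≤ k * τ ^ ((m : ℝ) / 2 - (j : ℝ)) := by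
  rw [key_identity m j k hk τ hτ]
  have hx : 0 < τ ^ m := by positivity
  have hk' : (1 : ℝ) ≤ k := by exact_mod_cast hk1
  set y := τ ^ m / (τ ^ m + 1) with hy
  have hy0 : 0 < y := by positivity
  have hy1 : y ≤ 1 := by rw [hy, div_le_one (by positivity)]; linarith
  have h1 : y ^ ((k : ℝ) - 1 / 2) ≤ 1 := Real.rpow_le_one hy0.le hy1 (by linarith)
  have h2 : y ^ k ≤ y ^ ((k : ℝ) - 1 / 2) := by
    rw [← Real.rpow_natCast]
    exact Real.rpow_le_rpow_of_exponent_ge hy0 hy1 (by linarith)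
  have h3 : 1 + (k : ℝ) * (y - 1) ≤ y ^ k := by
    have := one_add_mul_le_pow (a := y - 1) (by linarith) k
    simpa using this
  have h4 : 1 - y ≤ τ ^ (-(m : ℝ)) := by
    rw [Real.rpow_neg hτ.le, Real.rpow_natCast]
    have : 1 - y = (τ ^ m + 1)⁻¹ := by rw [hy]; field_simp; ring
    rw [this]
    exact inv_anti₀ hx (by linarith)
  have hp : 0 < τ ^ ((m : ℝ) / 2 - (j : ℝ)) := Real.rpow_pos_of_pos hτ _
  have e : |τ ^ ((m : ℝ) / 2 - (j : ℝ)) * y ^ ((k : ℝ) - 1 / 2) - τ ^ ((m : ℝ) / 2 - (j : ℝ))|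
      = τ ^ ((m : ℝ) / 2 - (j : ℝ)) * (1 - y ^ ((k : ℝ) - 1 / 2)) := by
    rw [abs_of_nonpos (by nlinarith)]; ring
  rw [e]
  constructor
  · have e2 : τ ^ (-(m : ℝ) / 2 - (j : ℝ)) = τ ^ ((m : ℝ) / 2 - (j : ℝ)) * τ ^ (-(m : ℝ)) := by
      rw [← Real.rpow_add hτ]; congr 1; ring
    rw [e2]
    have : 1 - y ^ ((k : ℝ) - 1 / 2) ≤ k * τ ^ (-(m : ℝ)) := by nlinarith
    calc _ ≤ τ ^ ((m : ℝ) / 2 - (j : ℝ)) * (k * τ ^ (-(m : ℝ))) := by gcongr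
      _ = _ := by ring
  · have : 0 < y ^ ((k : ℝ) - 1 / 2) := Real.rpow_pos_of_pos hy0 _
    nlinarith

/-- The function `g(τ) = Σ_{k=1}^j c_k τ^{mk-j}/(τ^m+1)^{k-1/2}` satisfies
`g(τ) - b τ^{m/2-j} = O(τ^{-m/2-j})` as `τ → ∞`, and `g(τ) - b τ^{m/2-j}` is
integrable on `(0,∞)`, where `b = c₁ + ⋯ + c_j`. -/
theorem stmt15 (m j : ℕ) (hm : 3 ≤ m) (hj1 : 1 ≤ j) (hj2 : 2 * j ≤ m + 1)
    (c : ℕ → ℂ) (b : ℂ) (hbdef : b = ∑ k ∈ Finset.Icc 1 j, c k)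
    (g : ℝ → ℂ)
    (hgdef : ∀ τ : ℝ, g τ = ∑ k ∈ Finset.Icc 1 j,
      c k * ((τ ^ (m * k - j) / (τ ^ m + 1) ^ ((k : ℝ) - 1 / 2) : ℝ) : ℂ)) :
    ((fun τ : ℝ => g τ - b * ((τ ^ ((m : ℝ) / 2 - (j : ℝ)) : ℝ) : ℂ))
      =O[Filter.atTop] (fun τ : ℝ => τ ^ (-(m : ℝ) / 2 - (j : ℝ)))) ∧
    MeasureTheory.IntegrableOn
      (fun τ : ℝ => g τ - b * ((τ ^ ((m : ℝ) / 2 - (j : ℝ)) : ℝ) : ℂ)) (Set.Ioi 0) := by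
  have hA : ∀ p : ℝ, ∀ τ : ℝ, 0 < τ → (∀ k ∈ Finset.Icc 1 j,
      |τ ^ (m * k - j) / (τ ^ m + 1) ^ ((k : ℝ) - 1 / 2) - τ ^ ((m : ℝ) / 2 - (j : ℝ))|
      ≤ k * τ ^ p) → ‖g τ - b * ((τ ^ ((m : ℝ) / 2 - (j : ℝ)) : ℝ) : ℂ)‖ ≤
        (∑ k ∈ Finset.Icc 1 j, ‖c k‖ * k) * τ ^ p := by
    intro p τ hτ h
    rw [hgdef, hbdef, Finset.sum_mul, ← Finset.sum_sub_distrib, Finset.sum_mul]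
    refine (norm_sum_le _ _).trans (Finset.sum_le_sum fun k hk => ?_)
    rw [← mul_sub, ← Complex.ofReal_sub, norm_mul, Complex.norm_real, Real.norm_eq_abs, mul_assoc]
    exact mul_le_mul_of_nonneg_left (h k hk) (norm_nonneg _)
  have hjk : ∀ k ∈ Finset.Icc 1 j, 1 ≤ k ∧ j ≤ m * k := by
    intro k hk
    have h1 := (Finset.mem_Icc.1 hk).1
    exact ⟨h1, by nlinarith⟩
  have hB1 := fun τ (hτ : 0 < τ) => hA (-(m : ℝ) / 2 - (j : ℝ)) τ hτ
    fun k hk => (key_bounds m j k (hjk k hk).1 (hjk k hk).2 τ hτ).1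
  have hB2 := fun τ (hτ : 0 < τ) => hA ((m : ℝ) / 2 - (j : ℝ)) τ hτ
    fun k hk => (key_bounds m j k (hjk k hk).1 (hjk k hk).2 τ hτ).2
  have hm' : (3 : ℝ) ≤ m := by exact_mod_cast hm
  have hj1' : (1 : ℝ) ≤ j := by exact_mod_cast hj1
  have hj2' : 2 * (j : ℝ) ≤ m + 1 := by exact_mod_cast hj2
  refine ⟨?_, ?_⟩
  · refine IsBigO.of_bound (∑ k ∈ Finset.Icc 1 j, ‖c k‖ * k) ?_
    filter_upwards [eventually_gt_atTop 0] with τ hτ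
    rw [Real.norm_of_nonneg (Real.rpow_nonneg hτ.le _)]
    exact hB1 τ hτ
  · have hmeas : Measurable
        (fun τ : ℝ => g τ - b * ((τ ^ ((m : ℝ) / 2 - (j : ℝ)) : ℝ) : ℂ)) := by
      rw [funext hgdef]
      fun_prop
    rw [← Set.Ioc_union_Ioi_eq_Ioi (zero_le_one (α := ℝ))]
    refine IntegrableOn.union ?_ ?_
    · have hi : IntegrableOn (fun τ : ℝ => τ ^ ((m : ℝ) / 2 - (j : ℝ))) (Set.Ioc 0 1) := by
        rw [← intervalIntegrable_iff_integrableOn_Ioc_of_le zero_le_one]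
        exact intervalIntegral.intervalIntegrable_rpow' (by linarith)
      refine Integrable.mono' (hi.const_mul (∑ k ∈ Finset.Icc 1 j, ‖c k‖ * k))
        hmeas.aestronglyMeasurable ?_
      filter_upwards [ae_restrict_mem measurableSet_Ioc] with τ hτ
      exact hB2 τ hτ.1
    · have hi : IntegrableOn (fun τ : ℝ => τ ^ (-(m : ℝ) / 2 - (j : ℝ))) (Set.Ioi 1) :=
        integrableOn_Ioi_rpow_of_lt (by linarith) one_pos
      refine Integrable.mono' (hi.const_mul (∑ k ∈ Finset.Icc 1 j, ‖c k‖ * k))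
        hmeas.aestronglyMeasurable ?_
      filter_upwards [ae_restrict_mem measurableSet_Ioi] with τ hτ
      exact hB1 τ (one_pos.trans hτ)
end
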